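/- Let k ≥ 2, n ≥ 1 and r ≥ 1 be integers, let m = 2^r, and let α_2(n) denote the 2-adic valuation of the central binomial coefficient C(2n, n). If α_2(n)·⌊k/2⌋ ≤ r - 1, then TC_k(L^{2n+1}_m) = k·(2n+1). -/

import Mathlib

/-!
Write `L = S^{2n+1} / (ℤ/m)` and let `S^k` be the `k`-fold power of the sphere.

**Lower bound.** Suppose that `L^k` is covered by `R` open sets with sections of `π_k`. A section
over a set `U` is a continuous choice of a path through given points; lifting it along the covering
`S^{2n+1} → L` and comparing the lift with given points of the sphere yields functions
`Λ_0, …, Λ_{k-1}` with values in `ℤ/m` on the preimage of `U` in `S^k`. The function `Λ_a` is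
shifted by one by the generator acting on the `a`-th factor and is invariant under the others, and
the differences `Λ_a - Λ_c` are locally constant on the preimage of `U` (`labels_of_sec`). By
Lebesgue's lemma, every sufficiently small simplex of `S^k` has an index `i < R` at which all
differences of labels are constant.

The usual equivariant cells of `S^{2n+1}` have arbitrarily fine ordered-chain models, and their
cross product, with cells of dimension `2n+1` in the first `k - 1` factors and `2n` in the last
one, is a small chain of dimension `k(2n+1) - 1`. A word with `k - 1` letters of degree one (changes
of a label difference along an edge) and `nk` letters of degree two (Bocksteins), each letter of
degree `d` using `d` successive indices `i`, can be evaluated on it. If `R ≤ k(2n+1) - 1`, each small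
simplex is killed by the letter of its index. On the other hand, the equivariance of the labels and
the boundary formula of the cells determine the value recursively, up to chains on which words
vanish; it is a unit times `C(2n,n)^⌊k/2⌋` modulo `m`. Hence `m ∣ C(2n,n)^⌊k/2⌋` (`dvd_of_labels`,
`le_of_cover`), against the valuation hypothesis when `m = 2^r`.

**Upper bound.** A point of `S^k` has a rank: the number of its nonvanishing complex coordinates
plus the number of distinct phases of their `m`-th powers. The rank is invariant under deck
transformations and takes at most `k(2n+1)` values, between `k + 1` and `2k(n+1)`. Both summands can
only grow near a given point, so distinct strata of equal rank have disjoint neighbourhoods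
(`cover_of_strata`); and near each stratum there is an explicit section, obtained by
joining all the points to a common one by normalized straight segments
(`upSec_of_deform`, `reg_upSec`, `rank_lt`, `cover_upper`).
-/

open scoped unitInterval

/-- The map `π_k : C([0,1],X) → X^k`, `γ ↦ (γ(0), γ(1/(k-1)), …, γ(1))`. -/
noncomputable def pik {X : Type*} [TopologicalSpace X] (k : ℕ) (γ : C(unitInterval, X)) :
    Fin k → X :=
  fun i => γ (Set.projIcc 0 1 zero_le_one ((i : ℝ) / ((k : ℝ) - 1)))

/-- The restriction of `π_k` over `S ⊆ X^k` admits a continuous section. -/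
def HasSec {X : Type*} [TopologicalSpace X] (k : ℕ) (S : Set (Fin k → X)) : Prop :=
  ∃ s : C(S, C(unitInterval, X)), ∀ u : S, pik k (s u) = (u : Fin k → X)

/-- The inclusion of `U` into `Z` is null-homotopic. -/
def NullHomotopicIncl {Z : Type*} [TopologicalSpace Z] (U : Set Z) : Prop :=
  ∃ z : Z, ContinuousMap.Homotopic ⟨Subtype.val, continuous_subtype_val⟩
    (ContinuousMap.const ↥U z)

/-- `X^k` can be covered by `r` open sets, each admitting a continuous section of `π_k`. -/
def TCCoverAt (X : Type*) [TopologicalSpace X] (k r : ℕ) : Prop :=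
  ∃ U : Fin r → Set (Fin k → X),
    (∀ i, IsOpen (U i)) ∧ (⋃ i, U i) = Set.univ ∧ ∀ i, HasSec k (U i)

/-- The higher (sequential) topological complexity `TC_k(X)`. -/
noncomputable def higherTC (X : Type*) [TopologicalSpace X] (k : ℕ) : ℕ :=
  sInf {r | TCCoverAt X k r}

/-- A Hurewicz fibration: homotopy lifting property with respect to every space. -/
def IsHurewiczFibration.{u} {E B : Type*} [TopologicalSpace E] [TopologicalSpace B]
    (p : C(E, B)) : Prop :=
  ∀ (Z : Type u) [TopologicalSpace Z] (f : C(Z, E)) (H : C(Z × unitInterval, B)),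
    (∀ z, H (z, 0) = p (f z)) →
    ∃ G : C(Z × unitInterval, E), (∀ z, G (z, 0) = f z) ∧ ∀ z t, p (G (z, t)) = H (z, t)

/-- The equivalence relation on `S^{2n+1} ⊆ ℂ^{n+1}` identifying points in the same
orbit of the group of `m`-th roots of unity acting by complex scalar multiplication. -/
noncomputable def lensSetoid (m n : ℕ) :
    Setoid (Metric.sphere (0 : EuclideanSpace ℂ (Fin (n + 1))) 1) where
  r x y := ∃ ζ : ℂˣ, ζ ^ m = 1 ∧
    (y : EuclideanSpace ℂ (Fin (n + 1))) = ζ • (x : EuclideanSpace ℂ (Fin (n + 1)))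
  iseqv := by
    constructor
    · exact fun x => ⟨1, one_pow m, (one_smul _ _).symm⟩
    · rintro x y ⟨ζ, hζ, h⟩
      exact ⟨ζ⁻¹, by rw [inv_pow, hζ, inv_one], by rw [h, inv_smul_smul]⟩
    · rintro x y z ⟨ζ₁, h₁, e₁⟩ ⟨ζ₂, h₂, e₂⟩
      exact ⟨ζ₂ * ζ₁, by rw [mul_pow, h₁, h₂, one_mul], by rw [e₂, e₁, smul_smul]⟩

/-- The lens space `L^{2n+1}_m`, the quotient of the unit sphere `S^{2n+1} ⊆ ℂ^{n+1}`
by the action of the `m`-th roots of unity, with the quotient topology. -/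
noncomputable def LensSpace (m n : ℕ) : Type :=
  Quotient (lensSetoid m n)

noncomputable instance (m n : ℕ) : TopologicalSpace (LensSpace m n) :=
  inferInstanceAs (TopologicalSpace (Quotient (lensSetoid m n)))

namespace TCLens

/-! ### Ordered chains and prism operators -/

section Chains

variable {V : Type*}

/-- Augmented ordered chains of a set `V`: integral combinations of finite lists of points,
a list of length `q + 1` being an ordered `q`-simplex. -/
abbrev Ch (V : Type*) : Type _ := FreeAbelianGroup (List V)

/-- The simplex spanned by a list. -/
abbrev sx (l : List V) : Ch V := FreeAbelianGroup.of l

/-- Cone with apex `v`: prepends `v` to every simplex. -/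
noncomputable def cone (v : V) : Ch V →+ Ch V := FreeAbelianGroup.lift fun l => sx (v :: l)

@[simp] lemma cone_sx (v : V) (l : List V) : cone v (sx l) = sx (v :: l) := by
  simp [cone]

/-- The boundary of a list, by the recursion `∂(v l) = l - v (∂ l)`. -/
noncomputable def bdL : List V → Ch V
  | [] => 0
  | v :: l => sx l - cone v (bdL l)

/-- The (augmented) boundary operator. -/
noncomputable def bd : Ch V →+ Ch V := FreeAbelianGroup.lift bdL

@[simp] lemma bd_nil : bd (sx ([] : List V)) = 0 := by simp [bd, bdL]

@[simp] lemma bd_cons (v : V) (l : List V) : bd (sx (v :: l)) = sx l - cone v (bd (sx l)) := by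
  simp [bd, bdL]

lemma ch_induction {p : Ch V → Prop} (x : Ch V) (h0 : p 0) (h1 : ∀ l, p (sx l))
    (h2 : ∀ l, p (sx l) → p (-sx l)) (h3 : ∀ x y, p x → p y → p (x + y)) : p x :=
  FreeAbelianGroup.induction_on x h0 h1 h2 h3

lemma ch_ext {A : Type*} [AddCommGroup A] {f g : Ch V →+ A} (h : ∀ l, f (sx l) = g (sx l))
    (x : Ch V) : f x = g x := by
  have : f = g := FreeAbelianGroup.lift_ext _ _ h
  rw [this]

lemma bd_cone (v : V) (x : Ch V) : bd (cone v x) = x - cone v (bd x) := by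
  refine ch_ext (f := bd.comp (cone v)) (g := AddMonoidHom.id _ - (cone v).comp bd) ?_ x
  intro l
  simp

lemma bd_bd (x : Ch V) : bd (bd x) = 0 := by
  refine ch_ext (f := bd.comp bd) (g := 0) ?_ x
  intro l
  induction l with
  | nil => simp
  | cons v l ih =>
    simp only [AddMonoidHom.comp_apply, AddMonoidHom.zero_apply] at ih ⊢
    simp [bd_cone, ih]

/-- The chain map induced by a map of points. -/
noncomputable def push (f : V → V) : Ch V →+ Ch V := FreeAbelianGroup.lift fun l => sx (l.map f)

@[simp] lemma push_sx (f : V → V) (l : List V) : push f (sx l) = sx (l.map f) := by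
  simp [push]

lemma push_cone (f : V → V) (v : V) (x : Ch V) : push f (cone v x) = cone (f v) (push f x) := by
  refine ch_ext (f := (push f).comp (cone v)) (g := (cone (f v)).comp (push f)) ?_ x
  intro l
  simp

lemma push_push (f g : V → V) (x : Ch V) : push f (push g x) = push (f ∘ g) x := by
  refine ch_ext (f := (push f).comp (push g)) (g := push (f ∘ g)) ?_ x
  intro l
  simp

lemma push_id (x : Ch V) : push id x = x := by
  refine ch_ext (f := push id) (g := AddMonoidHom.id _) ?_ x
  intro l
  simp

lemma bd_push (f : V → V) (x : Ch V) : bd (push f x) = push f (bd x) := by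
  refine ch_ext (f := bd.comp (push f)) (g := (push f).comp bd) ?_ x
  intro l
  induction l with
  | nil => simp
  | cons v l ih =>
    simp only [AddMonoidHom.comp_apply] at ih ⊢
    simp only [push_sx] at ih
    simp [push_cone, ih]

/-- The prism over a list, joining its image under `f` (bottom) to its image under `g` (top). -/
noncomputable def prL (f g : V → V) : List V → Ch V
  | [] => 0
  | v :: l => sx (f v :: g v :: l.map g) - cone (f v) (prL f g l)

/-- The prism operator between `push f` and `push g`. -/
noncomputable def pr (f g : V → V) : Ch V →+ Ch V := FreeAbelianGroup.lift (prL f g)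

@[simp] lemma pr_nil (f g : V → V) : pr f g (sx []) = 0 := by simp [pr, prL]

@[simp] lemma pr_cons (f g : V → V) (v : V) (l : List V) :
    pr f g (sx (v :: l)) = sx (f v :: g v :: l.map g) - cone (f v) (pr f g (sx l)) := by
  simp [pr, prL]

lemma pr_cone (f g : V → V) (v : V) (x : Ch V) :
    pr f g (cone v x) = cone (f v) (cone (g v) (push g x)) - cone (f v) (pr f g x) := by
  refine ch_ext (f := (pr f g).comp (cone v))
    (g := (cone (f v)).comp ((cone (g v)).comp (push g)) - (cone (f v)).comp (pr f g)) ?_ x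
  intro l
  simp

/-- Prisms are chain homotopies. -/
lemma bd_pr (f g : V → V) (x : Ch V) :
    bd (pr f g x) + pr f g (bd x) = push g x - push f x := by
  refine ch_ext (f := bd.comp (pr f g) + (pr f g).comp bd) (g := push g - push f) ?_ x
  intro l
  induction l with
  | nil => simp
  | cons v l ih =>
    simp only [AddMonoidHom.comp_apply, AddMonoidHom.add_apply, AddMonoidHom.sub_apply] at ih ⊢
    have h1 : bd (pr f g (sx l)) = push g (sx l) - push f (sx l) - pr f g (bd (sx l)) := by
      rw [← ih]; abel
    simp only [map_sub, bd_cone, h1, pr_cone, push_sx, ← cone_sx]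
    rw [← push_sx, bd_push, push_sx]
    abel

lemma push_pr (h f g : V → V) (x : Ch V) : push h (pr f g x) = pr (h ∘ f) (h ∘ g) x := by
  refine ch_ext (f := (push h).comp (pr f g)) (g := pr (h ∘ f) (h ∘ g)) ?_ x
  intro l
  induction l with
  | nil => simp
  | cons v l ih =>
    simp only [AddMonoidHom.comp_apply] at ih ⊢
    simp [push_cone, ih]

lemma pr_push (h f g : V → V) (x : Ch V) : pr f g (push h x) = pr (f ∘ h) (g ∘ h) x := by
  refine ch_ext (f := (pr f g).comp (push h)) (g := pr (f ∘ h) (g ∘ h)) ?_ x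
  intro l
  induction l with
  | nil => simp
  | cons v l ih =>
    simp only [AddMonoidHom.comp_apply, push_sx] at ih ⊢
    simp [ih]

/-- Degenerate lists: two consecutive entries agree. -/
inductive Dg : List V → Prop
  | head (v : V) (l : List V) : Dg (v :: v :: l)
  | tail (v : V) (l : List V) : Dg l → Dg (v :: l)

/-- Chains supported on lists satisfying `P`. -/
def Sp (P : List V → Prop) : AddSubgroup (Ch V) :=
  AddSubgroup.closure {x | ∃ l, P l ∧ x = sx l}

/-- The degenerate chains. -/
abbrev DD (V : Type*) : AddSubgroup (Ch V) := Sp (Dg (V := V))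

lemma sx_mem_Sp {P : List V → Prop} {l : List V} (h : P l) : sx l ∈ Sp P :=
  AddSubgroup.subset_closure ⟨l, h, rfl⟩

lemma Sp_map {P : List V → Prop} {A : Type*} [AddCommGroup A] (φ : Ch V →+ A)
    (S : AddSubgroup A) (h : ∀ l, P l → φ (sx l) ∈ S) {x : Ch V} (hx : x ∈ Sp P) : φ x ∈ S := by
  have : Sp P ≤ S.comap φ := by
    rw [Sp, AddSubgroup.closure_le]
    rintro _ ⟨l, hl, rfl⟩
    exact h l hl
  exact this hx

lemma Sp_eq {P : List V → Prop} {A : Type*} [AddCommGroup A] (φ ψ : Ch V →+ A)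
    (h : ∀ l, P l → φ (sx l) = ψ (sx l)) {x : Ch V} (hx : x ∈ Sp P) : φ x = ψ x := by
  have := Sp_map (φ - ψ) ⊥ (fun l hl => by simp [h l hl]) hx
  rw [AddSubgroup.mem_bot, AddMonoidHom.sub_apply, sub_eq_zero] at this
  exact this

lemma Sp_mono {P Q : List V → Prop} (h : ∀ l, P l → Q l) {x : Ch V} (hx : x ∈ Sp P) :
    x ∈ Sp Q :=
  Sp_map (AddMonoidHom.id _) (Sp Q) (fun l hl => sx_mem_Sp (h l hl)) hx

lemma cone_mem_DD (v : V) {x : Ch V} (hx : x ∈ DD V) : cone v x ∈ DD V :=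
  Sp_map (cone v) _ (fun l hl => by rw [cone_sx]; exact sx_mem_Sp (Dg.tail v l hl)) hx

lemma cone_cone_mem_DD (v : V) (x : Ch V) : cone v (cone v x) ∈ DD V := by
  refine ch_induction (p := fun x => cone v (cone v x) ∈ DD V) x ?_ (fun l => ?_) (fun l h => ?_)
    fun x y hx hy => ?_
  · simp [zero_mem]
  · simpa using sx_mem_Sp (Dg.head _ _)
  · simpa using h
  · simpa using add_mem hx hy

lemma Dg.map (f : V → V) {l : List V} (h : Dg l) : Dg (l.map f) := by
  induction h with
  | head v l => exact Dg.head _ _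
  | tail v l _ ih => exact Dg.tail _ _ ih

lemma push_mem_DD (f : V → V) {x : Ch V} (hx : x ∈ DD V) : push f x ∈ DD V :=
  Sp_map (push f) _ (fun l hl => by rw [push_sx]; exact sx_mem_Sp (hl.map f)) hx

lemma pr_mem_DD (f g : V → V) {x : Ch V} (hx : x ∈ DD V) : pr f g x ∈ DD V := by
  refine Sp_map (pr f g) _ (fun l hl => ?_) hx
  induction hl with
  | head v l =>
    rw [pr_cons, pr_cons, map_sub, cone_sx]
    refine sub_mem (sx_mem_Sp (Dg.tail _ _ (by simpa using Dg.head _ _))) (sub_mem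
      (sx_mem_Sp (Dg.head _ _)) ?_)
    exact cone_cone_mem_DD _ _
  | tail v l hl ih =>
    rw [pr_cons]
    exact sub_mem (sx_mem_Sp (Dg.tail _ _ (Dg.tail _ _ (hl.map g)))) (cone_mem_DD _ ih)

/-- A stationary prism is degenerate. -/
lemma pr_stationary {f g : V → V} {l : List V} (h : ∀ v ∈ l, f v = g v) :
    pr f g (sx l) ∈ DD V := by
  induction l with
  | nil => simp [zero_mem]
  | cons v l ih =>
    rw [pr_cons, h v (by simp)]
    exact sub_mem (sx_mem_Sp (Dg.head _ _))
      (cone_mem_DD _ (ih fun w hw => h w (by simp [hw])))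

lemma bd_mem_DD {x : Ch V} (hx : x ∈ DD V) : bd x ∈ DD V := by
  refine Sp_map bd _ (fun l hl => ?_) hx
  induction hl with
  | head v l =>
    rw [bd_cons, bd_cons, map_sub, cone_sx, sub_sub_cancel]
    exact cone_cone_mem_DD _ _
  | tail v l hl ih =>
    rw [bd_cons]
    exact sub_mem (sx_mem_Sp hl) (cone_mem_DD _ ih)

lemma pr_mem_Sp (f g : V → V) (l : List V) :
    pr f g (sx l) ∈ Sp fun l' : List V => ∀ w ∈ l', ∃ u ∈ l, w = f u ∨ w = g u := by
  induction l with
  | nil => simp [zero_mem]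
  | cons v l ih =>
    rw [pr_cons]
    refine sub_mem (sx_mem_Sp ?_) (Sp_map (cone (f v)) _ (fun l' hl' => ?_) ih)
    · intro w hw
      simp only [List.mem_cons, List.mem_map] at hw
      rcases hw with rfl | rfl | ⟨u, hu, rfl⟩
      · exact ⟨v, by simp, Or.inl rfl⟩
      · exact ⟨v, by simp, Or.inr rfl⟩
      · exact ⟨u, by simp [hu], Or.inr rfl⟩
    · rw [cone_sx]
      refine sx_mem_Sp ?_
      intro w hw
      rcases List.mem_cons.1 hw with rfl | hw
      · exact ⟨v, by simp, Or.inl rfl⟩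
      · obtain ⟨u, hu, h⟩ := hl' w hw
        exact ⟨u, by simp [hu], h⟩

lemma pr_congr {f g f' g' : V → V} {l : List V} (hf : ∀ v ∈ l, f v = f' v)
    (hg : ∀ v ∈ l, g v = g' v) : pr f g (sx l) = pr f' g' (sx l) := by
  induction l with
  | nil => simp
  | cons v l ih =>
    rw [pr_cons, pr_cons, ih (fun w hw => hf w (by simp [hw])) (fun w hw => hg w (by simp [hw])),
      hf v (by simp), hg v (by simp), List.map_congr_left fun w hw => hg w (by simp [hw])]

/-- The chain homotopy of a discrete homotopy `F 0, F 1, …, F M`: the sum of its prisms. -/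
noncomputable def hom (F : ℕ → V → V) (M : ℕ) : Ch V →+ Ch V :=
  ∑ t ∈ Finset.range M, pr (F t) (F (t + 1))

lemma hom_apply (F : ℕ → V → V) (M : ℕ) (x : Ch V) :
    hom F M x = ∑ t ∈ Finset.range M, pr (F t) (F (t + 1)) x := by
  simp [hom]

lemma bd_hom (F : ℕ → V → V) (M : ℕ) (x : Ch V) :
    bd (hom F M x) + hom F M (bd x) = push (F M) x - push (F 0) x := by
  rw [hom_apply, hom_apply, map_sum, ← Finset.sum_add_distrib]
  simp only [bd_pr]
  exact Finset.sum_range_sub (fun t => push (F t) x) M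

lemma hom_mem_DD (F : ℕ → V → V) (M : ℕ) {x : Ch V} (hx : x ∈ DD V) : hom F M x ∈ DD V := by
  rw [hom_apply]
  exact sum_mem fun t _ => pr_mem_DD _ _ hx

@[simp] lemma hom_nil (F : ℕ → V → V) (M : ℕ) : hom F M (sx []) = 0 := by simp [hom_apply]

end Chains

end TCLens

/-! ### Cross products with the cells of a lens space -/

namespace TCLens

section Slant

/-- Apply `φ` to the `j`-th entry of a sequence. -/
def fa {S : Type*} (j : ℕ) (φ : S → S) (u : ℕ → S) : ℕ → S := Function.update u j (φ (u j))

lemma fa_comp {S : Type*} (j : ℕ) (φ ψ : S → S) : fa j φ ∘ fa j ψ = fa j (φ ∘ ψ) := by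
  funext u
  simp [fa]

lemma fa_comm {S : Type*} {i j : ℕ} (h : i ≠ j) (φ ψ : S → S) :
    fa i φ ∘ fa j ψ = fa j ψ ∘ fa i φ := by
  funext u
  simp [fa, h, h.symm, Function.update_comm h]

lemma fa_iterate {S : Type*} (j : ℕ) (φ : S → S) (s : ℕ) : (fa j φ)^[s] = fa j (φ^[s]) := by
  induction s with
  | zero => funext u; simp [fa]
  | succ s ih => rw [Function.iterate_succ', ih, fa_comp, Function.iterate_succ']

/-- The discrete geometry of an odd sphere with a free `ℤ/m`-action generated by `g`, at mesh `η`.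
`W i` is the subsphere where all complex coordinates of index `≥ i` vanish, `R i` a rotation of
the `i`-th coordinate from the identity to the rotation by the generator, `H i` a homotopy
contracting `W i` inside `W (i + 1)` to the point `e i`; both have `M` steps of size at most `η`. -/
structure SphereGeom (S : Type*) [PseudoMetricSpace S] (m n M : ℕ) (η : ℝ) where
  g : S → S
  e : ℕ → S
  W : ℕ → Set S
  R : ℕ → ℕ → S → S
  H : ℕ → ℕ → S → S
  g_iter : g^[m] = id
  e_mem : e 0 ∈ W 1
  W_succ : ∀ i, W i ⊆ W (i + 1)
  g_mem : ∀ i x, x ∈ W i → g x ∈ W i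
  R_zero : ∀ i, R i 0 = id
  H_zero : ∀ i, i ≤ n → ∀ x ∈ W i, H i 0 x = x
  R_mem : ∀ i t, ∀ x ∈ W (i + 1), R i t x ∈ W (i + 1)
  H_mem : ∀ i t, i ≤ n → ∀ x ∈ W i, H i t x ∈ W (i + 1)
  R_fix : ∀ i t, ∀ x ∈ W i, R i t x = x
  H_end : ∀ i, i ≤ n → ∀ x ∈ W i, H i M x = e i
  R_e : R 0 M (e 0) = g (e 0)
  R_H : ∀ i t, i ≤ n → ∀ x ∈ W i, R i M (H i t (g x)) = g (H i t x)
  g_dist : ∀ x y, dist (g x) (g y) ≤ dist x y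
  R_dist : ∀ i t x y, dist (R i t x) (R i t y) ≤ dist x y
  H_dist : ∀ i t, i ≤ n → ∀ x ∈ W i, ∀ y ∈ W i, dist (H i t x) (H i t y) ≤ dist x y
  R_step : ∀ i t x, dist (R i t x) (R i (t + 1) x) ≤ η
  H_step : ∀ i t, i ≤ n → ∀ x ∈ W i, dist (H i t x) (H i (t + 1) x) ≤ η

variable {S : Type*} [PseudoMetricSpace S] {m n M : ℕ} {η : ℝ} (G : SphereGeom S m n M η)

namespace SphereGeom

/-- The norm element `∑ gˢ` of the group acting on the `j`-th factor. -/
noncomputable def NN (j : ℕ) : Ch (ℕ → S) →+ Ch (ℕ → S) :=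
  ∑ s ∈ Finset.range m, push ((fa j G.g)^[s])

lemma NN_apply (j : ℕ) (x : Ch (ℕ → S)) :
    G.NN j x = ∑ s ∈ Finset.range m, push ((fa j G.g)^[s]) x := by
  simp [NN]

/-- Cross product with the even-dimensional cell of dimension `2 i`, in the `j`-th factor. -/
noncomputable def TE (j : ℕ) : ℕ → Ch (ℕ → S) →+ Ch (ℕ → S)
  | 0 => push (fa j fun _ => G.e 0)
  | i + 1 => (hom (fun t => fa j (G.H (i + 1) t)) M).comp
      ((G.NN j).comp ((hom (fun t => fa j (G.R i t)) M).comp (TE j i)))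

/-- Cross product with the odd-dimensional cell of dimension `2 i + 1`, in the `j`-th factor. -/
noncomputable def TO (j i : ℕ) : Ch (ℕ → S) →+ Ch (ℕ → S) :=
  (hom (fun t => fa j (G.R i t)) M).comp (G.TE j i)

lemma TO_apply (j i : ℕ) (x : Ch (ℕ → S)) :
    G.TO j i x = hom (fun t => fa j (G.R i t)) M (G.TE j i x) := rfl

lemma TE_succ (j i : ℕ) (x : Ch (ℕ → S)) :
    G.TE j (i + 1) x = hom (fun t => fa j (G.H (i + 1) t)) M (G.NN j (G.TO j i x)) := rfl

/-- Chains whose vertices have their `j`-th entry in `W i`. -/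
def SW (j i : ℕ) : AddSubgroup (Ch (ℕ → S)) := Sp fun l => ∀ u ∈ l, u j ∈ G.W i

lemma hom_mem_SW {j i i' : ℕ} {F : ℕ → S → S} (hF : ∀ t, ∀ x ∈ G.W i, F t x ∈ G.W i')
    {x : Ch (ℕ → S)} (hx : x ∈ G.SW j i) : hom (fun t => fa j (F t)) M x ∈ G.SW j i' := by
  rw [hom_apply]
  refine sum_mem fun t _ => ?_
  refine Sp_map (pr _ _) _ (fun l hl => Sp_mono (fun l' hl' => ?_) (pr_mem_Sp _ _ l)) hx
  intro w hw
  obtain ⟨u, hu, rfl | rfl⟩ := hl' w hw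
  · simpa [fa] using hF _ _ (hl u hu)
  · simpa [fa] using hF _ _ (hl u hu)

lemma giter_mem (i s : ℕ) {x : S} (hx : x ∈ G.W i) : G.g^[s] x ∈ G.W i := by
  induction s with
  | zero => exact hx
  | succ s ih => rw [Function.iterate_succ_apply']; exact G.g_mem _ _ ih

lemma NN_mem_SW {j i : ℕ} {x : Ch (ℕ → S)} (hx : x ∈ G.SW j i) : G.NN j x ∈ G.SW j i := by
  rw [NN_apply]
  refine sum_mem fun s _ => Sp_map (push _) _ (fun l hl => ?_) hx
  rw [push_sx]
  refine sx_mem_Sp fun w hw => ?_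
  obtain ⟨u, hu, rfl⟩ := List.mem_map.1 hw
  rw [fa_iterate]
  simpa [fa] using G.giter_mem i s (hl u hu)

/-- The cells lie in subspheres: the cell of dimension `2 i` involves the coordinates up to `i` only. -/
lemma TE_mem_SW {j i : ℕ} (hi : i ≤ n) (x : Ch (ℕ → S)) : G.TE j i x ∈ G.SW j (i + 1) := by
  induction i generalizing x with
  | zero =>
    refine ch_induction (p := fun x => G.TE j 0 x ∈ G.SW j 1) x (by simp [zero_mem])
      (fun l => ?_) (fun l h => by simpa using h) fun x y hx hy => by simpa using add_mem hx hy
    simp only [TE, push_sx]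
    refine sx_mem_Sp fun w hw => ?_
    obtain ⟨u, hu, rfl⟩ := List.mem_map.1 hw
    simpa [fa] using G.e_mem
  | succ i ih =>
    rw [TE_succ, TO_apply]
    exact G.hom_mem_SW (fun t x hx => G.H_mem _ t hi x hx)
      (G.NN_mem_SW (G.hom_mem_SW (fun t x hx => G.R_mem _ t x hx) (ih (by omega) x)))

lemma TO_mem_SW {j i : ℕ} (hi : i ≤ n) (x : Ch (ℕ → S)) : G.TO j i x ∈ G.SW j (i + 1) :=
  G.hom_mem_SW (fun t x hx => G.R_mem _ t x hx) (G.TE_mem_SW hi x)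

lemma NN_push_g (j : ℕ) (x : Ch (ℕ → S)) : G.NN j (push (fa j G.g) x) = G.NN j x := by
  simp only [NN_apply, push_push, ← Function.iterate_succ]
  have h := Finset.sum_range_succ' (fun s => push ((fa j G.g)^[s]) x) m
  have h2 := Finset.sum_range_succ (fun s => push ((fa j G.g)^[s]) x) m
  rw [h2, fa_iterate j G.g m, G.g_iter] at h
  have h3 : (fa j (id : S → S)) = (fa j G.g)^[0] := by funext u; simp [fa]
  rw [h3] at h
  exact (add_right_cancel h).symm

lemma push_g_NN (j : ℕ) (x : Ch (ℕ → S)) : push (fa j G.g) (G.NN j x) = G.NN j x := by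
  conv_rhs => rw [← NN_push_g]
  simp only [NN_apply, map_sum, push_push, ← Function.iterate_succ, ← Function.iterate_succ']

lemma bd_NN (j : ℕ) (x : Ch (ℕ → S)) : bd (G.NN j x) = G.NN j (bd x) := by
  simp only [NN_apply, map_sum, bd_push]

lemma NN_mem_DD (j : ℕ) {x : Ch (ℕ → S)} (hx : x ∈ DD (ℕ → S)) : G.NN j x ∈ DD (ℕ → S) := by
  rw [NN_apply]
  exact sum_mem fun s _ => push_mem_DD _ hx

/-- Rotating the last coordinate of an even cell gives its translate by the generator. -/
lemma push_rho (j i : ℕ) (hi : i ≤ n) (x : Ch (ℕ → S)) :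
    push (fa j (G.R i M)) (G.TE j i x) = push (fa j G.g) (G.TE j i x) := by
  cases i with
  | zero =>
    simp only [TE, push_push, fa_comp]
    have : G.R 0 M ∘ (fun _ : S => G.e 0) = G.g ∘ fun _ => G.e 0 := by
      funext y; exact G.R_e
    rw [this]
  | succ i =>
    rw [TE_succ, ← push_g_NN]
    simp only [hom_apply, map_sum, pr_push, push_pr, fa_comp]
    have hmem := G.NN_mem_SW (G.TO_mem_SW (j := j) (by omega : i ≤ n) x)
    have key : ∀ t, ∀ y ∈ G.SW j (i + 1),
        pr (fa j (G.R (i + 1) M ∘ G.H (i + 1) t ∘ G.g))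
          (fa j (G.R (i + 1) M ∘ G.H (i + 1) (t + 1) ∘ G.g)) y
        = pr (fa j (G.g ∘ G.H (i + 1) t)) (fa j (G.g ∘ G.H (i + 1) (t + 1))) y := by
      intro t y hy
      refine Sp_eq _ _ (fun l hl => pr_congr (fun v hv => ?_) (fun v hv => ?_)) hy
      · simp only [fa, Function.comp_apply, G.R_H _ t hi _ (hl v hv)]
      · simp only [fa, Function.comp_apply, G.R_H _ (t + 1) hi _ (hl v hv)]
    have e1 : push (fa j G.g) (G.NN j (G.TO j i x)) = G.NN j (G.TO j i x) := G.push_g_NN j _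
    refine Finset.sum_congr rfl fun t _ => ?_
    have := key t _ hmem
    conv_rhs => rw [← Function.comp_assoc, ← Function.comp_assoc, ← fa_comp j (G.g ∘ _),
      ← fa_comp j (G.g ∘ _), ← pr_push, e1]
    exact this

/-- Rotations of a coordinate that vanishes give degenerate prisms. -/
lemma hom_R_deg (j i : ℕ) {x : Ch (ℕ → S)} (hx : x ∈ G.SW j i) :
    hom (fun t => fa j (G.R i t)) M x ∈ DD (ℕ → S) := by
  rw [hom_apply]
  refine sum_mem fun t _ => Sp_map (pr _ _) _ (fun l hl => pr_stationary fun v hv => ?_) hx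
  simp only [fa, G.R_fix i _ _ (hl v hv)]

/-- The end of the contraction sends positive-dimensional cells to degenerate chains. -/
lemma push_kappa_deg (j i : ℕ) (hi : i + 1 ≤ n) (x : Ch (ℕ → S)) :
    push (fa j (G.H (i + 1) M)) (G.NN j (G.TO j i x)) ∈ DD (ℕ → S) := by
  rw [NN_apply, map_sum]
  refine sum_mem fun s _ => ?_
  rw [TO_apply, hom_apply, map_sum, map_sum]
  refine sum_mem fun t _ => ?_
  rw [push_push, push_pr, fa_iterate, fa_comp, fa_comp, fa_comp]
  refine Sp_map (pr _ _) _ (fun l hl => pr_stationary fun v hv => ?_)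
    (G.TE_mem_SW (j := j) (by omega : i ≤ n) x)
  have h1 : ∀ t, G.H (i + 1) M (G.g^[s] (G.R i t (v j))) = G.e (i + 1) := fun t =>
    G.H_end _ hi _ (G.giter_mem _ _ (G.R_mem _ _ _ (hl v hv)))
  simp only [fa, Function.comp_apply, h1]

lemma hom_H_zero (j i : ℕ) (hi : i + 1 ≤ n) {x : Ch (ℕ → S)} (hx : x ∈ G.SW j (i + 1)) :
    push (fa j (G.H (i + 1) 0)) x = x := by
  refine Sp_eq (push _) (AddMonoidHom.id _) (fun l hl => ?_) hx
  rw [push_sx, AddMonoidHom.id_apply]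
  congr 1
  conv_rhs => rw [← List.map_id l]
  refine List.map_congr_left fun v hv => ?_
  simp [fa, G.H_zero _ hi _ (hl v hv)]

/-- Boundary relations of the cross products with cells, modulo degenerate chains. -/
lemma rel (j i : ℕ) (hi : i ≤ n) :
    (∀ x, bd (G.TO j i x) + G.TO j i (bd x) - (push (fa j G.g) (G.TE j i x) - G.TE j i x)
      ∈ DD (ℕ → S)) ∧
    (∀ x, i + 1 ≤ n → bd (G.TE j (i + 1) x) - G.TE j (i + 1) (bd x) + G.NN j (G.TO j i x)
      ∈ DD (ℕ → S)) := by
  -- an odd relation follows from the preceding even one, in the form of `bd (TE x) - TE (bd x)`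
  have odd_of : ∀ i, i ≤ n → (∀ x, ∃ y ∈ G.SW j i, bd (G.TE j i x) - G.TE j i (bd x) + y
        ∈ DD (ℕ → S)) →
      ∀ x, bd (G.TO j i x) + G.TO j i (bd x) - (push (fa j G.g) (G.TE j i x) - G.TE j i x)
        ∈ DD (ℕ → S) := by
    intro i hi h x
    obtain ⟨y, hy, hd⟩ := h x
    have h1 := bd_hom (fun t => fa j (G.R i t)) M (G.TE j i x)
    rw [G.push_rho j i hi] at h1
    have h0 : fa j (G.R i 0) = id := by funext u; simp [fa, G.R_zero]
    rw [h0, push_id] at h1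
    have h2 := hom_mem_DD (fun t => fa j (G.R i t)) M hd
    have h3 := G.hom_R_deg j i hy
    rw [map_add, map_sub] at h2
    rw [TO_apply, TO_apply, ← h1]
    have := sub_mem h3 h2
    convert this using 1
    abel
  -- the contraction of `W (i + 1)` fills the norm of the odd cell, which is a cycle
  have even_of : ∀ i, i + 1 ≤ n →
      (∀ x, bd (G.TO j i x) + G.TO j i (bd x) - (push (fa j G.g) (G.TE j i x) - G.TE j i x)
        ∈ DD (ℕ → S)) →
      ∀ x, bd (G.TE j (i + 1) x) - G.TE j (i + 1) (bd x) + G.NN j (G.TO j i x) ∈ DD (ℕ → S) := by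
    intro i hi h x
    have h1 := bd_hom (fun t => fa j (G.H (i + 1) t)) M (G.NN j (G.TO j i x))
    rw [G.hom_H_zero j i hi (G.NN_mem_SW (G.TO_mem_SW (by omega) x)), bd_NN] at h1
    have h2 := hom_mem_DD (fun t => fa j (G.H (i + 1) t)) M (G.NN_mem_DD j (h x))
    simp only [map_sub, map_add, NN_push_g, sub_self, sub_zero] at h2
    have h3 := G.push_kappa_deg j i hi x
    rw [TE_succ, TE_succ]
    have := sub_mem h3 h2
    convert this using 1
    rw [eq_sub_iff_add_eq] at h1
    rw [← h1]
    abel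
  have main : ∀ i, i ≤ n → ∀ x, bd (G.TO j i x) + G.TO j i (bd x)
      - (push (fa j G.g) (G.TE j i x) - G.TE j i x) ∈ DD (ℕ → S) := by
    intro i
    induction i with
    | zero =>
      intro hi
      refine odd_of 0 hi fun x => ⟨0, zero_mem _, ?_⟩
      simp [TE, bd_push, zero_mem]
    | succ i ih =>
      intro hi
      refine odd_of (i + 1) hi fun x => ⟨G.NN j (G.TO j i x), ?_, even_of i hi (ih (by omega)) x⟩
      exact G.NN_mem_SW (G.TO_mem_SW (by omega) x)
  exact ⟨main i hi, fun x h => even_of i h (main i hi) x⟩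

/-- Cross product with the cell of dimension `q`, in the `j`-th factor. -/
noncomputable def T (j q : ℕ) : Ch (ℕ → S) →+ Ch (ℕ → S) :=
  if Even q then G.TE j (q / 2) else G.TO j (q / 2)

/-- The group ring element in the boundary of the cell of dimension `q`. -/
noncomputable def QQ (j q : ℕ) (x : Ch (ℕ → S)) : Ch (ℕ → S) :=
  if q = 0 then 0 else if Even q then -G.NN j x else push (fa j G.g) x - x

/-- The relations of `rel` for cells of either parity. For `q = 0` the term `q - 1` is harmless because
`QQ` vanishes. -/
lemma T_rel (j q : ℕ) (hq : q ≤ 2 * n + 1) (x : Ch (ℕ → S)) :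
    bd (G.T j q x) - ((-1 : ℤ) ^ q • G.T j q (bd x) + G.QQ j q (G.T j (q - 1) x))
      ∈ DD (ℕ → S) := by
  rcases Nat.even_or_odd' q with ⟨i, rfl | rfl⟩
  · cases i with
    | zero => simp [T, QQ, TE, bd_push, zero_mem]
    | succ i =>
      have h1 : ¬ Even (2 * (i + 1) - 1) := by
        rw [Nat.not_even_iff_odd]; exact ⟨i, by omega⟩
      have h2 : (2 * (i + 1) - 1) / 2 = i := by omega
      have := (G.rel j i (by omega)).2 x (by omega)
      simp only [T, QQ, h1, h2, if_false, even_two_mul, if_true,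
        Nat.mul_div_cancel_left _ (by norm_num : 0 < 2)]
      rw [if_neg (by omega), Even.neg_one_pow (even_two_mul _), one_smul]
      convert this using 1
      abel
  · have h1 : ¬ Even (2 * i + 1) := by
      rw [Nat.not_even_iff_odd]; exact ⟨i, rfl⟩
    have h2 : (2 * i + 1) / 2 = i := by omega
    have := (G.rel j i (by omega)).1 x
    simp only [T, QQ, h1, h2, if_false, even_two_mul, if_true, Nat.add_sub_cancel,
      Nat.mul_div_cancel_left _ (by norm_num : 0 < 2)]
    rw [if_neg (by omega), Odd.neg_one_pow ⟨i, rfl⟩]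
    convert this using 1
    simp only [neg_smul, one_smul]
    abel

lemma TE_nil (j i : ℕ) : G.TE j i (sx []) = if i = 0 then sx [] else 0 := by
  induction i with
  | zero => simp [TE]
  | succ i ih =>
    rw [TE_succ, TO_apply, ih]
    split_ifs <;> simp_all

lemma T_nil (j q : ℕ) : G.T j q (sx []) = if q = 0 then sx [] else 0 := by
  rcases Nat.even_or_odd' q with ⟨i, rfl | rfl⟩
  · simp [T, TE_nil]
  · have h1 : ¬ Even (2 * i + 1) := by
      rw [Nat.not_even_iff_odd]; exact ⟨i, rfl⟩
    simp only [T, h1, if_false, TO_apply, TE_nil]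
    split_ifs <;> simp_all

lemma hom_push_comm {j a : ℕ} (h : a ≠ j) (ψ : S → S) (F : ℕ → S → S) (x : Ch (ℕ → S)) :
    hom (fun t => fa j (F t)) M (push (fa a ψ) x) = push (fa a ψ) (hom (fun t => fa j (F t)) M x)
    := by
  simp only [hom_apply, map_sum, pr_push, push_pr, fa_comm h]

lemma NN_push_comm {j a : ℕ} (h : a ≠ j) (ψ : S → S) (x : Ch (ℕ → S)) :
    G.NN j (push (fa a ψ) x) = push (fa a ψ) (G.NN j x) := by
  simp only [NN_apply, map_sum, push_push, fa_iterate, fa_comm h]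

lemma TE_push_comm {j a : ℕ} (h : a ≠ j) (ψ : S → S) (i : ℕ) (x : Ch (ℕ → S)) :
    G.TE j i (push (fa a ψ) x) = push (fa a ψ) (G.TE j i x) := by
  induction i with
  | zero => simp only [TE, push_push, fa_comm h]
  | succ i ih =>
    rw [TE_succ, TE_succ, TO_apply, TO_apply, ih, hom_push_comm h, NN_push_comm G h,
      hom_push_comm h]

lemma T_push_comm {j a : ℕ} (h : a ≠ j) (ψ : S → S) (q : ℕ) (x : Ch (ℕ → S)) :
    G.T j q (push (fa a ψ) x) = push (fa a ψ) (G.T j q x) := by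
  unfold T
  split_ifs
  · exact G.TE_push_comm h ψ _ x
  · rw [TO_apply, TO_apply, TE_push_comm G h, hom_push_comm h]

lemma T_QQ_comm {j a : ℕ} (h : a ≠ j) (q b : ℕ) (x : Ch (ℕ → S)) :
    G.T j q (G.QQ a b x) = G.QQ a b (G.T j q x) := by
  unfold QQ
  split_ifs
  · simp
  · simp only [map_neg, NN_apply, map_sum, fa_iterate, T_push_comm G h]
  · simp only [map_sub, T_push_comm G h]

lemma T_mem_DD (j q : ℕ) {x : Ch (ℕ → S)} (hx : x ∈ DD (ℕ → S)) : G.T j q x ∈ DD (ℕ → S) := by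
  have hE : ∀ i, G.TE j i x ∈ DD (ℕ → S) := by
    intro i
    induction i with
    | zero => exact push_mem_DD _ hx
    | succ i ih =>
      rw [TE_succ, TO_apply]
      exact hom_mem_DD _ _ (G.NN_mem_DD _ (hom_mem_DD _ _ ih))
  unfold T
  split_ifs
  · exact hE _
  · exact hom_mem_DD _ _ (hE _)

/-- The product of the cells of dimension `p 0, …, p (r - 1)` in the first `r` factors. -/
noncomputable def zz : ℕ → (ℕ → ℕ) → Ch (ℕ → S)
  | 0, _ => sx [fun _ => G.e 0]
  | r + 1, p => G.T r (p r) (zz r p)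

lemma zz_congr (r : ℕ) {p p' : ℕ → ℕ} (h : ∀ j < r, p j = p' j) : G.zz r p = G.zz r p' := by
  induction r with
  | zero => rfl
  | succ r ih => rw [zz, zz, ih fun j hj => h j (by omega), h r (by omega)]

/-- The sign of the `j`-th face of a product of cells. -/
def sg (r : ℕ) (p : ℕ → ℕ) (j : ℕ) : ℤ := ∏ i ∈ Finset.Ico (j + 1) r, (-1) ^ p i

lemma QQ_zsmul (j q : ℕ) (c : ℤ) (x : Ch (ℕ → S)) : G.QQ j q (c • x) = c • G.QQ j q x := by
  unfold QQ
  split_ifs <;> simp [smul_sub]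

open Classical in
/-- The boundary of a product of cells, including the augmentation term for a product of points. -/
lemma bd_zz_aux (r : ℕ) (p : ℕ → ℕ) (hp : ∀ j < r, p j ≤ 2 * n + 1) :
    bd (G.zz r p) - (∑ j ∈ Finset.range r, sg r p j •
        G.QQ j (p j) (G.zz r (Function.update p j (p j - 1)))
      + if ∀ j < r, p j = 0 then sx [] else 0) ∈ DD (ℕ → S) := by
  induction r with
  | zero => simp [zz, zero_mem]
  | succ r ih =>
    have h1 := G.T_mem_DD r (p r) (ih fun j hj => hp j (by omega))
    have h2 := G.T_rel r (p r) (hp r (by omega)) (G.zz r p)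
    have h3 := add_mem h2 (zsmul_mem h1 ((-1 : ℤ) ^ p r))
    convert h3 using 1
    rw [Finset.sum_range_succ]
    have e1 : G.zz (r + 1) (Function.update p r (p r - 1)) = G.T r (p r - 1) (G.zz r p) := by
      rw [zz, Function.update_self]
      congr 1
      exact G.zz_congr r fun j hj => Function.update_of_ne (by omega) _ _
    have e2 : sg (r + 1) p r = 1 := by simp [sg]
    have e3 : ∀ j ∈ Finset.range r, sg (r + 1) p j •
        G.QQ j (p j) (G.zz (r + 1) (Function.update p j (p j - 1)))
        = (-1 : ℤ) ^ p r • G.T r (p r) (sg r p j •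
          G.QQ j (p j) (G.zz r (Function.update p j (p j - 1)))) := by
      intro j hj
      have hj' : j < r := Finset.mem_range.1 hj
      rw [zz, Function.update_of_ne (by omega), map_zsmul, T_QQ_comm G (by omega), smul_smul]
      congr 1
      rw [sg, sg, Finset.prod_Ico_succ_top (by omega), mul_comm]
    have e4 : (if ∀ j < r + 1, p j = 0 then sx ([] : List (ℕ → S)) else 0) =
        (-1 : ℤ) ^ p r • G.T r (p r) (if ∀ j < r, p j = 0 then sx [] else 0) := by
      by_cases hr : p r = 0
      · have : (∀ j < r + 1, p j = 0) ↔ ∀ j < r, p j = 0 := by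
          constructor
          · exact fun h j hj => h j (by omega)
          · intro h j hj
            rcases Nat.lt_succ_iff_lt_or_eq.1 hj with h' | rfl
            · exact h j h'
            · exact hr
        simp only [this]
        split_ifs <;> simp [T_nil, hr]
      · have : ¬ ∀ j < r + 1, p j = 0 := fun h => hr (h r (by omega))
        rw [if_neg this]
        split_ifs <;> simp [T_nil, hr]
    rw [e1, e2, Finset.sum_congr rfl e3, e4, map_sub, map_add, map_sum, smul_sub, smul_add,
      Finset.smul_sum, one_smul, zz]
    abel

/-- The boundary of a product of cells, modulo degenerate chains. -/
lemma bd_zz (r : ℕ) (p : ℕ → ℕ) (hp : ∀ j < r, p j ≤ 2 * n + 1) (h0 : ∃ j < r, p j ≠ 0) :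
    bd (G.zz r p) - ∑ j ∈ Finset.range r, sg r p j •
        G.QQ j (p j) (G.zz r (Function.update p j (p j - 1))) ∈ DD (ℕ → S) := by
  have := G.bd_zz_aux r p hp
  rwa [if_neg (by push Not; exact h0), add_zero] at this

lemma zz_zero (r : ℕ) (p : ℕ → ℕ) (hp : ∀ j < r, p j = 0) :
    G.zz r p = sx [fun _ => G.e 0] := by
  induction r with
  | zero => rfl
  | succ r ih =>
    rw [zz, ih fun j hj => hp j (by omega), hp r (by omega)]
    simp only [T, Even.zero, if_true, TE, Nat.zero_div, push_sx, List.map_cons, List.map_nil]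
    congr 2
    funext i
    simp [fa, Function.update_apply]

end SphereGeom

end Slant

end TCLens

/-! ### Smallness of the product cells -/

namespace TCLens

namespace SphereGeom

variable {S : Type*} [PseudoMetricSpace S] {m n M : ℕ} {η : ℝ} (G : SphereGeom S m n M η)

/-- The vertices of `l` are pairwise `ε`-close in every factor. -/
def Sm (ε : ℝ) (l : List (ℕ → S)) : Prop := ∀ u ∈ l, ∀ v ∈ l, ∀ a, dist (u a) (v a) ≤ ε

/-- The vertices of `l` are pairwise `ε`-close and have their `j`-th entry in `W i`. -/
def Cl (j i : ℕ) (ε : ℝ) (l : List (ℕ → S)) : Prop := (∀ u ∈ l, u j ∈ G.W i) ∧ Sm ε l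

/-- A discrete homotopy by nonexpanding maps with steps of size `η` enlarges the diameter of simplices
by at most `η`, whatever its number of steps. -/
lemma hom_mem_Cl {j i i' : ℕ} {ε : ℝ} {F : ℕ → S → S}
    (hF : ∀ t, ∀ x ∈ G.W i, F t x ∈ G.W i')
    (hd : ∀ t, ∀ x ∈ G.W i, ∀ y ∈ G.W i, dist (F t x) (F t y) ≤ dist x y)
    (hs : ∀ t, ∀ x ∈ G.W i, dist (F t x) (F (t + 1) x) ≤ η) (hη : 0 ≤ η)
    {x : Ch (ℕ → S)} (hx : x ∈ Sp (G.Cl j i ε)) :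
    hom (fun t => fa j (F t)) M x ∈ Sp (G.Cl j i' (ε + η)) := by
  rw [hom_apply]
  refine sum_mem fun t _ => ?_
  refine Sp_map (pr _ _) _ (fun l hl => Sp_mono (fun l' hl' => ?_) (pr_mem_Sp _ _ l)) hx
  have key : ∀ t, ∀ u ∈ l, ∀ v ∈ l, ∀ a, dist (fa j (F t) u a) (fa j (F t) v a) ≤ ε := by
    intro t u hu v hv a
    by_cases h : a = j
    · subst h
      simpa [fa] using (hd t _ (hl.1 u hu) _ (hl.1 v hv)).trans (hl.2 u hu v hv a)
    · simpa [fa, h] using hl.2 u hu v hv a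
  have key2 : ∀ u ∈ l, ∀ a, dist (fa j (F t) u a) (fa j (F (t + 1)) u a) ≤ η := by
    intro u hu a
    by_cases h : a = j
    · subst h
      simpa [fa] using hs t _ (hl.1 u hu)
    · simpa [fa, h] using hη
  constructor
  · intro w hw
    obtain ⟨u, hu, rfl | rfl⟩ := hl' w hw
    · simpa [fa] using hF _ _ (hl.1 u hu)
    · simpa [fa] using hF _ _ (hl.1 u hu)
  · intro w hw w' hw' a
    obtain ⟨u, hu, rfl | rfl⟩ := hl' w hw <;> obtain ⟨u', hu', rfl | rfl⟩ := hl' w' hw'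
    · linarith [key t u hu u' hu' a]
    · linarith [dist_triangle (fa j (F t) u a) (fa j (F t) u' a) (fa j (F (t + 1)) u' a),
        key t u hu u' hu' a, key2 u' hu' a]
    · have h1 := key2 u hu a
      rw [dist_comm] at h1
      linarith [dist_triangle (fa j (F (t + 1)) u a) (fa j (F t) u a) (fa j (F t) u' a),
        key t u hu u' hu' a]
    · linarith [key (t + 1) u hu u' hu' a]

lemma giter_dist (s : ℕ) (x y : S) : dist (G.g^[s] x) (G.g^[s] y) ≤ dist x y := by
  induction s with
  | zero => exact le_rfl
  | succ s ih =>
    rw [Function.iterate_succ_apply', Function.iterate_succ_apply']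
    exact (G.g_dist _ _).trans ih

lemma NN_mem_Cl {j i : ℕ} {ε : ℝ} {x : Ch (ℕ → S)} (hx : x ∈ Sp (G.Cl j i ε)) :
    G.NN j x ∈ Sp (G.Cl j i ε) := by
  rw [NN_apply]
  refine sum_mem fun s _ => Sp_map (push _) _ (fun l hl => ?_) hx
  rw [push_sx]
  refine sx_mem_Sp ⟨fun w hw => ?_, fun w hw w' hw' a => ?_⟩
  · obtain ⟨u, hu, rfl⟩ := List.mem_map.1 hw
    rw [fa_iterate]
    simpa [fa] using G.giter_mem i s (hl.1 u hu)
  · obtain ⟨u, hu, rfl⟩ := List.mem_map.1 hw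
    obtain ⟨u', hu', rfl⟩ := List.mem_map.1 hw'
    rw [fa_iterate]
    by_cases h : a = j
    · subst h
      simpa [fa] using (G.giter_dist s _ _).trans (hl.2 u hu u' hu' a)
    · simpa [fa, h] using hl.2 u hu u' hu' a

lemma TE_mem_Cl (hη : 0 ≤ η) {j i : ℕ} (hi : i ≤ n) {ε : ℝ} (hε : 0 ≤ ε) {x : Ch (ℕ → S)}
    (hx : x ∈ Sp (Sm ε)) : G.TE j i x ∈ Sp (G.Cl j (i + 1) (ε + (2 * i : ℕ) * η)) := by
  induction i with
  | zero =>
    refine Sp_map (push _) _ (fun l hl => ?_) hx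
    rw [push_sx]
    refine sx_mem_Sp ⟨fun w hw => ?_, fun w hw w' hw' a => ?_⟩
    · obtain ⟨u, hu, rfl⟩ := List.mem_map.1 hw
      simpa [fa] using G.e_mem
    · obtain ⟨u, hu, rfl⟩ := List.mem_map.1 hw
      obtain ⟨u', hu', rfl⟩ := List.mem_map.1 hw'
      by_cases h : a = j
      · subst h; simpa [fa] using hε
      · simpa [fa, h] using hl u hu u' hu' a
  | succ i ih =>
    rw [TE_succ, TO_apply]
    have := G.hom_mem_Cl (j := j) (F := G.H (i + 1)) (fun t x hx => G.H_mem _ t hi x hx)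
      (fun t x hx y hy => G.H_dist _ t hi x hx y hy) (fun t x hx => G.H_step _ t hi x hx) hη
      (G.NN_mem_Cl (G.hom_mem_Cl (F := G.R i) (fun t x hx => G.R_mem _ t x hx)
        (fun t x _ y _ => G.R_dist _ t x y) (fun t x _ => G.R_step _ t x) hη (ih (by omega))))
    convert this using 2
    push_cast
    ring_nf

lemma T_mem_Sm (hη : 0 ≤ η) {j q : ℕ} (hq : q ≤ 2 * n + 1) {ε : ℝ} (hε : 0 ≤ ε)
    {x : Ch (ℕ → S)} (hx : x ∈ Sp (Sm ε)) : G.T j q x ∈ Sp (Sm (ε + q * η)) := by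
  rcases Nat.even_or_odd' q with ⟨i, rfl | rfl⟩
  · simp only [T, even_two_mul, if_true, Nat.mul_div_cancel_left _ (by norm_num : 0 < 2)]
    exact Sp_mono (fun l hl => hl.2) (G.TE_mem_Cl hη (by omega) hε hx)
  · have h1 : ¬ Even (2 * i + 1) := by
      rw [Nat.not_even_iff_odd]; exact ⟨i, rfl⟩
    have h2 : (2 * i + 1) / 2 = i := by omega
    simp only [T, h1, h2, if_false]
    rw [TO_apply]
    have := G.hom_mem_Cl (F := G.R i) (fun t x hx => G.R_mem _ t x hx)
        (fun t x _ y _ => G.R_dist _ t x y) (fun t x _ => G.R_step _ t x) hη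
        (G.TE_mem_Cl (j := j) hη (by omega) hε hx)
    refine Sp_mono (fun l hl => ?_) this
    have h := hl.2
    convert h using 1
    push_cast
    ring

/-- The simplices of a product of cells are small when the mesh is small. -/
lemma zz_mem_Sm (hη : 0 ≤ η) (r : ℕ) (p : ℕ → ℕ) (hp : ∀ j < r, p j ≤ 2 * n + 1) :
    G.zz r p ∈ Sp (Sm (r * (2 * n + 1) * η)) := by
  induction r with
  | zero =>
    refine sx_mem_Sp fun u hu v hv a => ?_
    rw [List.mem_singleton] at hu hv
    subst hu hv
    simp
  | succ r ih =>
    have := G.T_mem_Sm hη (j := r) (hp r (by omega)) (by positivity)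
      (ih fun j hj => hp j (by omega))
    refine Sp_mono (fun l hl u hu v hv a => (hl u hu v hv a).trans ?_) this
    have h1 : (p r : ℝ) ≤ 2 * n + 1 := by exact_mod_cast hp r (by omega)
    have := mul_le_mul_of_nonneg_right h1 hη
    push_cast
    linarith

end SphereGeom

end TCLens

/-! ### The discrete geometry of the sphere -/

namespace TCLens

section Geometry

variable {n : ℕ}

/-- The ambient complex Euclidean space. -/
abbrev EE (n : ℕ) : Type := EuclideanSpace ℂ (Fin (n + 1))

/-- The unit sphere of dimension `2 n + 1`. -/
abbrev SS (n : ℕ) : Type := Metric.sphere (0 : EE n) 1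

lemma SS_norm (x : SS n) : ‖(x : EE n)‖ = 1 := by simp

/-- Multiplication of the `i`-th coordinate by `c`. -/
noncomputable def rotE (i : ℕ) (c : ℂ) (x : EE n) : EE n :=
  WithLp.toLp 2 fun l => if (l : ℕ) = i then c * x l else x l

@[simp] lemma rotE_apply (i : ℕ) (c : ℂ) (x : EE n) (l : Fin (n + 1)) :
    rotE i c x l = if (l : ℕ) = i then c * x l else x l := rfl

lemma norm_rotE (i : ℕ) {c : ℂ} (hc : ‖c‖ = 1) (x : EE n) : ‖rotE i c x‖ = ‖x‖ := by
  rw [EuclideanSpace.norm_eq, EuclideanSpace.norm_eq]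
  congr 1
  refine Finset.sum_congr rfl fun l _ => ?_
  rw [rotE_apply]
  split_ifs <;> simp [hc]

lemma norm_le_of_coord {c : ℝ} (hc : 0 ≤ c) (x y : EE n) (h : ∀ l, ‖x l‖ ≤ c * ‖y l‖) :
    ‖x‖ ≤ c * ‖y‖ := by
  rw [EuclideanSpace.norm_eq, EuclideanSpace.norm_eq]
  refine Real.sqrt_le_iff.2 ⟨by positivity, ?_⟩
  rw [mul_pow, Real.sq_sqrt (by positivity), Finset.mul_sum]
  refine Finset.sum_le_sum fun l _ => ?_
  rw [← mul_pow]
  exact pow_le_pow_left₀ (norm_nonneg _) (h l) 2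

lemma norm_exp_sub (a b : ℝ) :
    ‖Complex.exp (a * Complex.I) - Complex.exp (b * Complex.I)‖ ≤ |a - b| := by
  have h : Complex.exp (a * Complex.I) - Complex.exp (b * Complex.I)
      = Complex.exp (b * Complex.I) * (Complex.exp (Complex.I * (a - b : ℝ)) - 1) := by
    rw [mul_sub, ← Complex.exp_add, mul_one]
    congr 2
    push_cast
    ring
  rw [h, norm_mul, Complex.norm_exp_ofReal_mul_I, one_mul]
  exact Real.norm_exp_I_mul_ofReal_sub_one_le

/-- The rotation of the `i`-th coordinate of the sphere by the angle `θ`. -/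
noncomputable def rotS (i : ℕ) (θ : ℝ) (x : SS n) : SS n :=
  ⟨rotE i (Complex.exp (θ * Complex.I)) x, by
    simp [norm_rotE i (Complex.norm_exp_ofReal_mul_I θ), SS_norm x]⟩

lemma rotS_coe (i : ℕ) (θ : ℝ) (x : SS n) :
    (rotS i θ x : EE n) = rotE i (Complex.exp (θ * Complex.I)) (x : EE n) := rfl

/-- The `i`-th basis vector, with junk value for `i > n`. -/
noncomputable def bas (i : ℕ) : EE n :=
  if h : i < n + 1 then EuclideanSpace.single ⟨i, h⟩ 1 else EuclideanSpace.single 0 1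

lemma norm_bas (i : ℕ) : ‖(bas i : EE n)‖ = 1 := by
  unfold bas
  split_ifs <;> simp

lemma bas_apply (i : ℕ) (hi : i ≤ n) (l : Fin (n + 1)) :
    (bas i : EE n) l = if (l : ℕ) = i then 1 else 0 := by
  have h : i < n + 1 := by omega
  simp only [bas, h, dif_pos]
  rw [PiLp.single_apply]
  simp [Fin.ext_iff]

/-- The subsphere where the coordinates of index `≥ i` vanish. -/
def WW (i : ℕ) : Set (SS n) := {x | ∀ l : Fin (n + 1), i ≤ l → (x : EE n) l = 0}

/-- Moving the point `x` along the circle through `x` and the `i`-th basis vector. -/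
noncomputable def moveE (i : ℕ) (θ : ℝ) (x : EE n) : EE n :=
  (Real.cos θ : ℂ) • x + (Real.sin θ : ℂ) • (bas i : EE n)

lemma moveE_apply (i : ℕ) (hi : i ≤ n) (θ : ℝ) (x : EE n) (l : Fin (n + 1)) :
    moveE i θ x l = Real.cos θ * x l + if (l : ℕ) = i then (Real.sin θ : ℂ) else 0 := by
  simp [moveE, bas_apply i hi]

/-- `x` is orthogonal to the `i`-th basis vector when its `i`-th coordinate vanishes. -/
lemma norm_moveE (i : ℕ) (hi : i ≤ n) (θ : ℝ) {x : SS n} (hx : x ∈ WW i) :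
    ‖moveE i θ (x : EE n)‖ = 1 := by
  have h2 : ‖(x : EE n)‖ ^ 2 = 1 := by rw [SS_norm]; norm_num
  have h3 : ‖(bas i : EE n)‖ ^ 2 = 1 := by rw [norm_bas]; norm_num
  have h1 : ‖moveE i θ (x : EE n)‖ ^ 2 = 1 := by
    rw [EuclideanSpace.norm_sq_eq] at h2 h3 ⊢
    have : ∀ l : Fin (n + 1), ‖moveE i θ (x : EE n) l‖ ^ 2
        = Real.cos θ ^ 2 * ‖(x : EE n) l‖ ^ 2 + Real.sin θ ^ 2 * ‖(bas i : EE n) l‖ ^ 2 := by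
      intro l
      rw [moveE_apply i hi, bas_apply i hi]
      by_cases hl : (l : ℕ) = i
      · rw [hx l hl.ge]
        simp [hl, -Complex.ofReal_sin]
      · simp [hl, -Complex.ofReal_cos, mul_pow]
    rw [Finset.sum_congr rfl fun l _ => this l, Finset.sum_add_distrib, ← Finset.mul_sum,
      ← Finset.mul_sum, h2, h3, mul_one, mul_one, Real.cos_sq_add_sin_sq]
  have := norm_nonneg (moveE i θ (x : EE n))
  nlinarith

open Classical in
/-- `moveE` as a map of the sphere, the identity where the result would leave the sphere. -/
noncomputable def moveS (i : ℕ) (θ : ℝ) (x : SS n) : SS n :=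
  if h : ‖moveE i θ (x : EE n)‖ = 1 then ⟨moveE i θ x, by simp [h]⟩ else x

lemma moveS_coe (i : ℕ) (hi : i ≤ n) (θ : ℝ) {x : SS n} (hx : x ∈ WW i) :
    (moveS i θ x : EE n) = moveE i θ (x : EE n) := by
  simp [moveS, norm_moveE i hi θ hx]

/-- Scalar multiplication of the sphere by a unit complex number. -/
noncomputable def smulS (c : ℂ) (hc : ‖c‖ = 1) (x : SS n) : SS n :=
  ⟨c • (x : EE n), by simp [norm_smul, hc]⟩

lemma smulS_coe (c : ℂ) (hc : ‖c‖ = 1) (x : SS n) :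
    (smulS c hc x : EE n) = c • (x : EE n) := rfl

/-- The chosen primitive `m`-th root of unity. -/
noncomputable def rt (m : ℕ) : ℂ := Complex.exp (2 * Real.pi * Complex.I / m)

lemma rt_eq (m : ℕ) : rt m = Complex.exp (((2 * Real.pi / m : ℝ) : ℂ) * Complex.I) := by
  rw [rt]
  congr 1
  push_cast
  ring

lemma norm_rt (m : ℕ) : ‖rt m‖ = 1 := by rw [rt_eq, Complex.norm_exp_ofReal_mul_I]

lemma rt_prim {m : ℕ} (hm : m ≠ 0) : IsPrimitiveRoot (rt m) m := Complex.isPrimitiveRoot_exp m hm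

lemma smulS_mem (c : ℂ) (hc : ‖c‖ = 1) {i : ℕ} {x : SS n} (hx : x ∈ WW i) :
    smulS c hc x ∈ WW i := fun l hl => by simp [smulS, hx l hl]

lemma smulS_iterate (c : ℂ) (hc : ‖c‖ = 1) (s : ℕ) (x : SS n) :
    (((smulS c hc)^[s] x : SS n) : EE n) = c ^ s • (x : EE n) := by
  induction s with
  | zero => simp
  | succ s ih => rw [Function.iterate_succ_apply', smulS, pow_succ', mul_smul, ← ih]

/-- The sphere with its action of the `m`-th roots of unity, at a mesh as small as desired. -/
lemma exists_geom (n : ℕ) {m : ℕ} (hm : m ≠ 0) {η : ℝ} (hη : 0 < η) :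
    ∃ M, ∃ G : SphereGeom (SS n) m n M η, ∀ x, G.g x = smulS (rt m) (norm_rt m) x := by
  obtain ⟨M, hM⟩ := exists_nat_gt (2 * Real.pi / η)
  have hM0 : (0 : ℝ) < M := lt_trans (by positivity) hM
  have hM1 : 2 * Real.pi / M ≤ η := by
    rw [div_lt_iff₀ hη] at hM
    rw [div_le_iff₀ hM0]
    linarith
  have hm1 : (1 : ℝ) ≤ m := by exact_mod_cast Nat.one_le_iff_ne_zero.2 hm
  -- the angles of the rotations and of the contractions
  set α : ℕ → ℝ := fun t => 2 * Real.pi / m * (t / M) with hα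
  set β : ℕ → ℝ := fun t => Real.pi / 2 * (t / M) with hβ
  have hα0 : α 0 = 0 := by simp [hα]
  have hβ0 : β 0 = 0 := by simp [hβ]
  have hαM : Complex.exp ((α M : ℂ) * Complex.I) = rt m := by
    rw [rt_eq]; simp [hα, hM0.ne']
  have hβM : β M = Real.pi / 2 := by simp [hβ, hM0.ne']
  have hαs : ∀ t, |α t - α (t + 1)| ≤ η := by
    intro t
    have : α t - α (t + 1) = -(2 * Real.pi / M / m) := by
      simp only [hα]; push_cast; field_simp; ring
    rw [this, abs_neg, abs_of_nonneg (by positivity)]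
    exact (div_le_self (by positivity) hm1).trans hM1
  have hβs : ∀ t, |β t - β (t + 1)| ≤ η / 2 := by
    intro t
    have : β t - β (t + 1) = -(2 * Real.pi / M / 4) := by
      simp only [hβ]; push_cast; field_simp; ring
    rw [this, abs_neg, abs_of_nonneg (by positivity)]
    have : 0 ≤ 2 * Real.pi / M := by positivity
    linarith
  have ext : ∀ x y : SS n, (∀ l, (x : EE n) l = (y : EE n) l) → x = y := fun x y h =>
    Subtype.ext (PiLp.ext h)
  refine ⟨M, {
    g := smulS (rt m) (norm_rt m)
    e := fun i => ⟨bas i, by simp [norm_bas]⟩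
    W := WW
    R := fun i t => rotS i (α t)
    H := fun i t => moveS i (β t)
    g_iter := ?_
    e_mem := ?_
    W_succ := ?_
    g_mem := fun i x hx => smulS_mem _ _ hx
    R_zero := ?_
    H_zero := ?_
    R_mem := ?_
    H_mem := ?_
    R_fix := ?_
    H_end := ?_
    R_e := ?_
    R_H := ?_
    g_dist := ?_
    R_dist := ?_
    H_dist := ?_
    R_step := ?_
    H_step := ?_ }, fun x => rfl⟩
  · funext x
    exact Subtype.ext (by rw [smulS_iterate, (rt_prim hm).pow_eq_one]; simp)
  · intro l hl
    show (bas 0 : EE n) l = 0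
    rw [bas_apply 0 (by omega), if_neg (by omega)]
  · exact fun i x hx l hl => hx l (by omega)
  · intro i
    funext x
    refine ext _ _ fun l => ?_
    simp [rotS, hα0]
  · intro i hi x hx
    refine Subtype.ext ?_
    rw [moveS_coe i hi _ hx, hβ0]
    simp [moveE]
  · intro i t x hx l hl
    simp [rotS, hx l hl]
  · intro i t hi x hx l hl
    rw [moveS_coe i hi _ hx, moveE_apply i hi, hx l (by omega), if_neg (by omega)]
    simp
  · intro i t x hx
    refine ext _ _ fun l => ?_
    by_cases h : (l : ℕ) = i
    · simp [rotS, h, hx l h.ge]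
    · simp [rotS, h]
  · intro i hi x hx
    refine Subtype.ext ?_
    rw [moveS_coe i hi _ hx, hβM]
    simp [moveE]
  · refine ext _ _ fun l => ?_
    by_cases h : (l : ℕ) = 0
    · simp [rotS, smulS, h, hαM]
    · simp [rotS, smulS, h, bas_apply 0 (Nat.zero_le n)]
  · intro i t hi x hx
    refine ext _ _ fun l => ?_
    have h1 := moveS_coe i hi (β t) (smulS_mem (rt m) (norm_rt m) hx)
    have h2 := moveS_coe i hi (β t) hx
    have e1 : (rotS i (α M) (moveS i (β t) (smulS (rt m) (norm_rt m) x)) : EE n)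
        = rotE i (rt m) (moveE i (β t) (rt m • (x : EE n))) := by
      rw [rotS_coe, hαM, h1, smulS_coe]
    have e2 : (smulS (rt m) (norm_rt m) (moveS i (β t) x) : EE n)
        = rt m • moveE i (β t) (x : EE n) := by
      rw [smulS_coe, h2]
    rw [e1, e2]
    by_cases h : (l : ℕ) = i
    · simp [h, moveE_apply i hi, hx l h.ge]
    · simp [h, moveE_apply i hi]
      ring
  · intro x y
    rw [Subtype.dist_eq, Subtype.dist_eq, dist_eq_norm, dist_eq_norm]
    simp [smulS, ← smul_sub, norm_smul, norm_rt]
  · intro i t x y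
    rw [Subtype.dist_eq, Subtype.dist_eq, dist_eq_norm, dist_eq_norm]
    have : ((rotS i (α t) x : SS n) : EE n) - ((rotS i (α t) y : SS n) : EE n)
        = rotE i (Complex.exp (α t * Complex.I)) ((x : EE n) - (y : EE n)) := by
      refine PiLp.ext fun l => ?_
      simp only [rotS, PiLp.sub_apply, rotE_apply]
      split_ifs <;> ring
    rw [this, norm_rotE i (Complex.norm_exp_ofReal_mul_I _)]
  · intro i t hi x hx y hy
    rw [Subtype.dist_eq, Subtype.dist_eq, dist_eq_norm, dist_eq_norm, moveS_coe i hi _ hx,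
      moveS_coe i hi _ hy, moveE, moveE, add_sub_add_right_eq_sub, ← smul_sub, norm_smul,
      Complex.norm_real]
    exact mul_le_of_le_one_left (norm_nonneg _) (Real.abs_cos_le_one _)
  · intro i t x
    rw [Subtype.dist_eq, dist_eq_norm]
    refine le_trans ?_ (hαs t)
    conv_rhs => rw [← mul_one |_|, ← SS_norm x]
    refine norm_le_of_coord (abs_nonneg _) _ _ fun l => ?_
    simp only [rotS, PiLp.sub_apply, rotE_apply]
    split_ifs
    · rw [← sub_mul, norm_mul]
      exact mul_le_mul_of_nonneg_right (norm_exp_sub _ _) (norm_nonneg _)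
    · rw [sub_self, norm_zero]
      positivity
  · intro i t hi x hx
    have hc : |Real.cos (β t) - Real.cos (β (t + 1))| ≤ |β t - β (t + 1)| := by
      have := norm_exp_sub (β t) (β (t + 1))
      refine le_trans ?_ this
      have h := Complex.abs_re_le_norm
        (Complex.exp (β t * Complex.I) - Complex.exp (β (t + 1) * Complex.I))
      rwa [Complex.sub_re, Complex.exp_ofReal_mul_I_re, Complex.exp_ofReal_mul_I_re] at h
    have hs : |Real.sin (β t) - Real.sin (β (t + 1))| ≤ |β t - β (t + 1)| := by
      have := norm_exp_sub (β t) (β (t + 1))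
      refine le_trans ?_ this
      have h := Complex.abs_im_le_norm
        (Complex.exp (β t * Complex.I) - Complex.exp (β (t + 1) * Complex.I))
      rwa [Complex.sub_im, Complex.exp_ofReal_mul_I_im, Complex.exp_ofReal_mul_I_im] at h
    rw [Subtype.dist_eq, dist_eq_norm, moveS_coe i hi _ hx, moveS_coe i hi _ hx, moveE, moveE,
      add_sub_add_comm, ← sub_smul, ← sub_smul, ← Complex.ofReal_sub, ← Complex.ofReal_sub]
    refine (norm_add_le _ _).trans ?_
    rw [norm_smul, norm_smul, SS_norm, norm_bas, Complex.norm_real, Complex.norm_real,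
      Real.norm_eq_abs, Real.norm_eq_abs]
    linarith [hβs t]

end Geometry

end TCLens

/-! ### Words in label differences -/

namespace TCLens

section Cochains

variable {V : Type*} {A : Type*} [CommRing A]

/-- Evaluation of a cochain on chains. -/
noncomputable def ev (γ : List V → A) : Ch V →+ A := FreeAbelianGroup.lift γ

@[simp] lemma ev_sx (γ : List V → A) (l : List V) : ev γ (sx l) = γ l := by simp [ev]

/-- Product of a function on vertices with a cochain. -/
def vmul (b : V → A) (γ : List V → A) : List V → A
  | [] => 0
  | u :: l => b u * γ (u :: l)

/-- Product of a function on ordered edges with a cochain. -/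
def emul (c : V → V → A) (γ : List V → A) : List V → A
  | u :: v :: l => c u v * γ (v :: l)
  | _ => 0

/-- Product of a function on ordered triangles with a cochain. -/
def tmul (c : V → V → V → A) (γ : List V → A) : List V → A
  | u :: v :: w :: l => c u v w * γ (w :: l)
  | _ => 0

/-- A cocycle vanishing on degenerate simplices and on the empty simplex. -/
structure Good (γ : List V → A) : Prop where
  nil : γ [] = 0
  deg : ∀ l, Dg l → γ l = 0
  closed : ∀ x, ev γ (bd x) = 0

lemma ev_vmul_cone (b : V → A) (γ : List V → A) (u : V) (x : Ch V) :
    ev (vmul b γ) (cone u x) = b u * ev γ (cone u x) := by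
  refine ch_ext (f := (ev (vmul b γ)).comp (cone u))
    (g := (AddMonoidHom.mulLeft (b u)).comp ((ev γ).comp (cone u))) (fun l => ?_) x
  simp [vmul]

lemma ev_emul_cone (c : V → V → A) (γ : List V → A) (u v : V) (x : Ch V) :
    ev (emul c γ) (cone u (cone v x)) = c u v * ev γ (cone v x) := by
  refine ch_ext (f := (ev (emul c γ)).comp ((cone u).comp (cone v)))
    (g := (AddMonoidHom.mulLeft (c u v)).comp ((ev γ).comp (cone v))) (fun l => ?_) x
  simp [emul]

lemma Good.cone_bd {γ : List V → A} (h : Good γ) (u : V) (l : List V) :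
    ev γ (cone u (bd (sx l))) = γ l := by
  have := h.closed (sx (u :: l))
  rw [bd_cons, map_sub, ev_sx, sub_eq_zero] at this
  exact this.symm

/-- The product of the coboundary of `b` with a cocycle is the coboundary of their product. -/
lemma ev_emul_bd {γ : List V → A} (h : Good γ) (b : V → A) (x : Ch V) :
    ev (emul (fun u v => b v - b u) γ) x = ev (vmul b γ) (bd x) := by
  refine ch_ext (g := (ev (vmul b γ)).comp bd) (fun l => ?_) x
  rcases l with _ | ⟨u, _ | ⟨v, l⟩⟩
  · simp [emul]
  · simp [emul, vmul]
  · rw [AddMonoidHom.comp_apply, ev_sx, bd_cons, map_sub, ev_vmul_cone, h.cone_bd, ev_sx]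
    simp only [emul, vmul]
    ring

/-- The product of the coboundary of an edge function with a cocycle is the coboundary of their
product. -/
lemma ev_tmul_bd {γ : List V → A} (h : Good γ) (c : V → V → A) (x : Ch V) :
    ev (tmul (fun u v w => c v w - c u w + c u v) γ) x = ev (emul c γ) (bd x) := by
  refine ch_ext (g := (ev (emul c γ)).comp bd) (fun l => ?_) x
  rcases l with _ | ⟨u, _ | ⟨v, _ | ⟨w, l⟩⟩⟩
  · simp [tmul]
  · simp [emul, tmul]
  · simp [emul, tmul]
  · rw [AddMonoidHom.comp_apply, ev_sx, bd_cons, map_sub, bd_cons, map_sub, map_sub, cone_sx,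
      ev_emul_cone, h.cone_bd, ev_sx, ev_sx]
    simp only [emul, tmul]
    ring

lemma Good.emul {γ : List V → A} (h : Good γ) (b : V → A) :
    Good (emul (fun u v => b v - b u) γ) where
  nil := rfl
  deg l hl := by
    cases hl with
    | head v l => simp [TCLens.emul]
    | tail v l hl =>
      cases l with
      | nil => rfl
      | cons w l => simp [TCLens.emul, h.deg _ hl]
  closed x := by rw [ev_emul_bd h, bd_bd, map_zero]

lemma ev_vanish {γ : List V → A} (h : ∀ l, Dg l → γ l = 0) {x : Ch V} (hx : x ∈ DD V) :
    ev γ x = 0 := by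
  have := Sp_map (ev γ) ⊥ (fun l hl => by simp [h l hl]) hx
  simpa using this

lemma vmul_deg {γ : List V → A} (h : Good γ) (b : V → A) (l : List V) (hl : Dg l) :
    vmul b γ l = 0 := by
  cases hl with
  | head v l => simp [vmul, h.deg _ (Dg.head v l)]
  | tail v l hl => simp [vmul, h.deg _ (Dg.tail v l hl)]

lemma emul_deg {γ : List V → A} (h : Good γ) (c : V → V → A) (hc : ∀ u, c u u = 0) (l : List V)
    (hl : Dg l) : TCLens.emul c γ l = 0 := by
  cases hl with
  | head v l => simp [TCLens.emul, hc]
  | tail v l hl =>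
    cases l with
    | nil => rfl
    | cons w l => simp [TCLens.emul, h.deg _ hl]

end Cochains

section Words

variable {V : Type*} {m : ℕ} [NeZero m] {k : ℕ} {τ : ℕ → V → V}

/-- A `ℤ/m`-valued function shifted by the constant `χ j` under the `j`-th transformation: it
represents the class of the character `χ` in the first cohomology of the quotient. -/
structure XLet (V : Type*) (m k : ℕ) (τ : ℕ → V → V) where
  b : V → ZMod m
  χ : ℕ → ZMod m
  hb : ∀ j < k, ∀ u, b (τ j u) = b u + χ j

/-- Two functions shifted by the same character: they give a cocycle representing the integral
Bockstein class of this character. -/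
structure YLet (V : Type*) (m k : ℕ) (τ : ℕ → V → V) where
  b : V → ZMod m
  b' : V → ZMod m
  χ : ℕ → ZMod m
  hb : ∀ j < k, ∀ u, b (τ j u) = b u + χ j
  hb' : ∀ j < k, ∀ u, b' (τ j u) = b' u + χ j

/-- The second function of the pair. -/
def YLet.toX (y : YLet V m k τ) : XLet V m k τ := ⟨y.b', y.χ, y.hb'⟩

/-- An integral lift of the coboundary of `y.b'`. -/
def YLet.edge (y : YLet V m k τ) (u v : V) : ℤ :=
  ((y.b' v - y.b u).val : ℤ) - ((y.b' u - y.b u).val : ℤ)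

/-- The coboundary of `y.edge` divided by `m`. -/
def YLet.tri (y : YLet V m k τ) (u v w : V) : ℤ :=
  (y.edge v w - y.edge u w + y.edge u v) / m

lemma YLet.cast_edge (y : YLet V m k τ) (u v : V) :
    ((y.edge u v : ℤ) : ZMod m) = y.b' v - y.b' u := by
  simp [edge]

lemma YLet.edge_self (y : YLet V m k τ) (u : V) : y.edge u u = 0 := by simp [edge]

lemma YLet.tri_mul (y : YLet V m k τ) (u v w : V) :
    (m : ℤ) * y.tri u v w = y.edge v w - y.edge u w + y.edge u v := by
  refine Int.mul_ediv_cancel' ?_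
  rw [← ZMod.intCast_zmod_eq_zero_iff_dvd]
  push_cast
  rw [y.cast_edge, y.cast_edge, y.cast_edge]
  ring

lemma YLet.tri_eq_zero₁ (y : YLet V m k τ) {u v : V} (h : y.b u = y.b v) (w : V) :
    y.tri u v w = 0 := by
  simp [tri, edge, h]

lemma YLet.tri_eq_zero₂ (y : YLet V m k τ) {v w : V} (h : y.b' v = y.b' w) (u : V) :
    y.tri u v w = 0 := by
  simp [tri, edge, h]

lemma YLet.edge_inv (y : YLet V m k τ) {j : ℕ} (hj : j < k) (u v : V) :
    y.edge (τ j u) (τ j v) = y.edge u v := by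
  simp [edge, y.hb j hj, y.hb' j hj]

lemma YLet.tri_inv (y : YLet V m k τ) {j : ℕ} (hj : j < k) (u v w : V) :
    y.tri (τ j u) (τ j v) (τ j w) = y.tri u v w := by
  simp [tri, y.edge_inv hj]

/-- The integral cocycle of a product of Bockstein classes. -/
def wY : List (YLet V m k τ) → List V → ℤ
  | [], l => if l.length = 1 then 1 else 0
  | y :: Y, l => tmul y.tri (wY Y) l

/-- The cocycle modulo `m` of a product of classes of degree one and of Bockstein classes. -/
def wX : List (XLet V m k τ) → List (YLet V m k τ) → List V → ZMod m
  | [], Y, l => (wY Y l : ZMod m)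
  | x :: X, Y, l => emul (fun u v => x.b v - x.b u) (wX X Y) l

lemma ev_m_tri (y : YLet V m k τ) {γ : List V → ℤ} (h : Good γ) (x : Ch V) :
    (m : ℤ) * ev (tmul y.tri γ) x = ev (emul y.edge γ) (bd x) := by
  rw [← ev_tmul_bd h]
  refine ch_ext (f := (AddMonoidHom.mulLeft (m : ℤ)).comp (ev (tmul y.tri γ))) (fun l => ?_) x
  rcases l with _ | ⟨u, _ | ⟨v, _ | ⟨w, l⟩⟩⟩ <;> simp [tmul]
  rw [← mul_assoc, y.tri_mul]

lemma m_ne : (m : ℤ) ≠ 0 := by exact_mod_cast NeZero.ne m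

lemma wY_good (Y : List (YLet V m k τ)) : Good (wY Y) := by
  induction Y with
  | nil =>
    refine ⟨by simp [wY], fun l hl => ?_, fun x => ?_⟩
    · have : 2 ≤ l.length := by
        induction hl with
        | head v l => simp
        | tail v l _ ih => simp; omega
      simp only [wY]
      rw [if_neg (by omega)]
    · refine ch_ext (f := (ev (wY [])).comp bd) (g := 0) (fun l => ?_) x
      rcases l with _ | ⟨u, _ | ⟨v, l⟩⟩
      · simp
      · simp [wY]
      · have h2 : ∀ x : Ch V, ev (wY ([] : List (YLet V m k τ))) (cone u (cone v x)) = 0 := by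
          intro x
          refine ch_ext (f := (ev (wY [])).comp ((cone u).comp (cone v))) (g := 0)
            (fun l => ?_) x
          simp [wY]
        rw [AddMonoidHom.comp_apply, bd_cons, bd_cons, map_sub, map_sub, map_sub, h2]
        simp [wY]
  | cons y Y ih =>
    refine ⟨rfl, fun l hl => ?_, fun x => ?_⟩
    · simp only [wY]
      cases hl with
      | head v l =>
        cases l with
        | nil => rfl
        | cons w l => simp [tmul, y.tri_eq_zero₁ rfl]
      | tail v l hl =>
        cases hl with
        | head w l => simp [tmul, y.tri_eq_zero₂ rfl]
        | tail w l hl =>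
          cases l with
          | nil => rfl
          | cons z l => simp [tmul, ih.deg _ hl]
    · have := ev_m_tri y ih (bd x)
      rw [bd_bd, map_zero] at this
      exact (mul_eq_zero.1 this).resolve_left m_ne

lemma ev_cast (γ : List V → ℤ) (x : Ch V) :
    ev (fun l => ((γ l : ℤ) : ZMod m)) x = ((ev γ x : ℤ) : ZMod m) :=
  ch_ext (g := (Int.castAddHom (ZMod m)).comp (ev γ)) (fun l => by simp) x

lemma wX_good (X : List (XLet V m k τ)) (Y : List (YLet V m k τ)) : Good (wX X Y) := by
  induction X with
  | nil =>
    have h := wY_good Y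
    refine ⟨by simp [wX, h.nil], fun l hl => by simp [wX, h.deg l hl], fun x => ?_⟩
    have : wX [] Y = fun l => ((wY Y l : ℤ) : ZMod m) := by funext l; rfl
    rw [this, ev_cast, h.closed, Int.cast_zero]
  | cons x X ih => exact ih.emul x.b

lemma wY_inv (Y : List (YLet V m k τ)) {j : ℕ} (hj : j < k) (l : List V) :
    wY Y (l.map (τ j)) = wY Y l := by
  induction Y generalizing l with
  | nil => simp [wY]
  | cons y Y ih =>
    rcases l with _ | ⟨u, _ | ⟨v, _ | ⟨w, l⟩⟩⟩ <;> simp [wY, tmul]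
    have := ih (w :: l)
    rw [List.map_cons] at this
    rw [this, y.tri_inv hj]

lemma wX_inv (X : List (XLet V m k τ)) (Y : List (YLet V m k τ)) {j : ℕ} (hj : j < k)
    (l : List V) : wX X Y (l.map (τ j)) = wX X Y l := by
  induction X generalizing l with
  | nil => simp [wX, wY_inv Y hj]
  | cons x X ih =>
    rcases l with _ | ⟨u, _ | ⟨v, l⟩⟩ <;> simp [wX, emul]
    have := ih (v :: l)
    rw [List.map_cons] at this
    rw [this, x.hb j hj, x.hb j hj]
    ring

/-- A product of Bockstein cocycles vanishes on every simplex on which one of the two functions of one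
of its letters is constant. -/
lemma wY_small (Y : List (YLet V m k τ)) (y : YLet V m k τ) (hy : y ∈ Y) (l : List V)
    (h : (∀ u ∈ l, ∀ v ∈ l, y.b u = y.b v) ∨ ∀ u ∈ l, ∀ v ∈ l, y.b' u = y.b' v) :
    wY Y l = 0 := by
  induction Y generalizing l with
  | nil => simp at hy
  | cons y' Y ih =>
    rcases l with _ | ⟨u, _ | ⟨v, _ | ⟨w, l⟩⟩⟩ <;> simp only [wY, tmul]
    rcases List.mem_cons.1 hy with rfl | hy
    · rcases h with h | h
      · rw [y.tri_eq_zero₁ (h u (by simp) v (by simp)), zero_mul]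
      · rw [y.tri_eq_zero₂ (h v (by simp) w (by simp)), zero_mul]
    · rw [ih hy (w :: l), mul_zero]
      refine h.imp (fun h u hu v hv => ?_) (fun h u hu v hv => ?_) <;>
      · refine h u ?_ v ?_ <;> simp only [List.mem_cons] at hu hv ⊢ <;> tauto

/-- A word vanishes on every simplex on which the function of one of its letters is constant. -/
lemma wX_small (X : List (XLet V m k τ)) (Y : List (YLet V m k τ)) (l : List V)
    (h : (∃ x ∈ X, ∀ u ∈ l, ∀ v ∈ l, x.b u = x.b v) ∨ ∃ y ∈ Y,
      (∀ u ∈ l, ∀ v ∈ l, y.b u = y.b v) ∨ ∀ u ∈ l, ∀ v ∈ l, y.b' u = y.b' v) :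
    wX X Y l = 0 := by
  induction X generalizing l with
  | nil =>
    rcases h with ⟨x, hx, _⟩ | ⟨y, hy, h⟩
    · simp at hx
    · simp [wX, wY_small Y y hy l h]
  | cons x' X ih =>
    rcases l with _ | ⟨u, _ | ⟨v, l⟩⟩ <;> simp only [wX, emul]
    by_cases h0 : x'.b u = x'.b v
    · rw [h0, sub_self, zero_mul]
    · rw [ih (v :: l), mul_zero]
      rcases h with ⟨x, hx, h⟩ | ⟨y, hy, h⟩
      · rcases List.mem_cons.1 hx with rfl | hx
        · exact absurd (h u (by simp) v (by simp)) h0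
        · refine Or.inl ⟨x, hx, fun a ha b hb => h a ?_ b ?_⟩ <;>
            simp only [List.mem_cons] at ha hb ⊢ <;> tauto
      · refine Or.inr ⟨y, hy, h.imp (fun h a ha b hb => ?_) (fun h a ha b hb => ?_)⟩ <;>
        · refine h a ?_ b ?_ <;> simp only [List.mem_cons] at ha hb ⊢ <;> tauto

end Words

end TCLens

/-! ### Evaluation on product cells -/

namespace TCLens

section Recursion

variable {S : Type*} [PseudoMetricSpace S] {m n M : ℕ} [NeZero m] {η : ℝ}
  (G : SphereGeom S m n M η) {k : ℕ}

/-- Letters for the product of spheres. -/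
abbrev XL (k : ℕ) := XLet (ℕ → S) m k (fun j => fa j G.g)
/-- Bockstein letters for the product of spheres. -/
abbrev YL (k : ℕ) := YLet (ℕ → S) m k (fun j => fa j G.g)

/-- The value of a word on the product of cells of dimensions `p`. -/
noncomputable def LL (p : ℕ → ℕ) (X : List (XL G k)) (Y : List (YL G k)) : ZMod m :=
  ev (wX X Y) (G.zz k p)

/-- Decrease the `j`-th entry of `p`. -/
def dec (p : ℕ → ℕ) (j : ℕ) : ℕ → ℕ := Function.update p j (p j - 1)

/-- The coefficient of a face for a class of degree one. -/
def kap (m q : ℕ) : ZMod m :=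
  if q = 0 then 0 else if Even q then -∑ s ∈ Finset.range m, (s : ZMod m) else 1

/-- The coefficient of a face for a Bockstein class. -/
def lam (m q : ℕ) : ZMod m := if q = 0 then 0 else if Even q then -1 else 0

/-- Translating by the generator `s` times changes a primitive of a word by `s` times its character. -/
lemma ev_vmul_push {X : List (XL G k)} {Y : List (YL G k)} (x : XL G k) {j : ℕ} (hj : j < k)
    (s : ℕ) (z : Ch (ℕ → S)) :
    ev (vmul x.b (wX X Y)) (push ((fa j G.g)^[s]) z)
      = ev (vmul x.b (wX X Y)) z + s * x.χ j * ev (wX X Y) z := by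
  induction s generalizing z with
  | zero =>
    have : (fa j G.g)^[0] = (id : (ℕ → S) → _) := rfl
    rw [this, push_id]; simp
  | succ s ih =>
    have h1 : ∀ z, ev (vmul x.b (wX X Y)) (push (fa j G.g) z)
        = ev (vmul x.b (wX X Y)) z + x.χ j * ev (wX X Y) z := by
      intro z
      refine ch_ext (f := (ev (vmul x.b (wX X Y))).comp (push (fa j G.g)))
        (g := ev (vmul x.b (wX X Y)) + (AddMonoidHom.mulLeft (x.χ j)).comp (ev (wX X Y)))
        (fun l => ?_) z
      rcases l with _ | ⟨u, l⟩
      · simp [vmul, (wX_good X Y).nil]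
      · have h2 := wX_inv X Y hj (u :: l)
        rw [List.map_cons] at h2
        have h3 := x.hb j hj u
        simp only [AddMonoidHom.comp_apply, push_sx, List.map_cons, ev_sx, vmul,
          AddMonoidHom.add_apply, AddMonoidHom.coe_mulLeft] at h2 h3 ⊢
        rw [h2, h3]
        ring
    have h4 : ev (wX X Y) (push (fa j G.g) z) = ev (wX X Y) z := by
      refine ch_ext (f := (ev (wX X Y)).comp (push (fa j G.g))) (fun l => ?_) z
      simpa using wX_inv X Y hj l
    rw [Function.iterate_succ, ← push_push, ih, h1, h4]
    push_cast
    ring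

lemma ev_vmul_QQ {X : List (XL G k)} {Y : List (YL G k)} (x : XL G k) {j : ℕ} (hj : j < k)
    (q : ℕ) (z : Ch (ℕ → S)) :
    ev (vmul x.b (wX X Y)) (G.QQ j q z) = kap m q * x.χ j * ev (wX X Y) z := by
  unfold SphereGeom.QQ kap
  split_ifs
  · simp
  · rw [map_neg, SphereGeom.NN_apply, map_sum]
    simp only [ev_vmul_push G x hj]
    rw [Finset.sum_add_distrib, Finset.sum_const, ← Finset.sum_mul, ← Finset.sum_mul]
    simp
  · rw [map_sub]
    have := ev_vmul_push G (X := X) (Y := Y) x hj 1 z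
    rw [Function.iterate_one] at this
    rw [this]
    simp

/-- The edge function of a Bockstein letter is invariant under the group, so an even face contributes
`-m` times its value, and an odd one nothing. -/
lemma ev_edge_QQ {Y : List (YL G k)} (y : YL G k) {j : ℕ} (hj : j < k)
    (q : ℕ) (z : Ch (ℕ → S)) :
    ev (emul y.edge (wY Y)) (G.QQ j q z) =
      m * ((if q = 0 then 0 else if Even q then -1 else 0) * ev (emul y.edge (wY Y)) z) := by
  have h1 : ∀ z, ev (emul y.edge (wY Y)) (push (fa j G.g) z) = ev (emul y.edge (wY Y)) z := by
    intro z
    refine ch_ext (f := (ev (emul y.edge (wY Y))).comp (push (fa j G.g))) (fun l => ?_) z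
    rcases l with _ | ⟨u, _ | ⟨v, l⟩⟩
    · simp
    · simp [emul]
    · have h2 := wY_inv Y hj (v :: l)
      rw [List.map_cons] at h2
      have h3 := y.edge_inv hj u v
      simp only [AddMonoidHom.comp_apply, push_sx, List.map_cons, ev_sx, emul] at h2 h3 ⊢
      rw [h2, h3]
  have h2 : ∀ s z, ev (emul y.edge (wY Y)) (push ((fa j G.g)^[s]) z)
      = ev (emul y.edge (wY Y)) z := by
    intro s
    induction s with
    | zero => intro z; rw [Function.iterate_zero, push_id]
    | succ s ih => intro z; rw [Function.iterate_succ, ← push_push, ih, h1]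
  unfold SphereGeom.QQ
  split_ifs
  · simp
  · rw [map_neg, SphereGeom.NN_apply, map_sum]
    simp [h2]
  · rw [map_sub, h1]
    simp

lemma exists_of_not_zero {k : ℕ} {p : ℕ → ℕ} (h : ¬ ∀ j < k, p j = 0) : ∃ j < k, p j ≠ 0 := by
  push Not at h
  exact h

/-- Splitting off a class of degree one. -/
lemma LL_X (p : ℕ → ℕ) (hp : ∀ j < k, p j ≤ 2 * n + 1) (x : XL G k) (X : List (XL G k))
    (Y : List (YL G k)) :
    LL G p (x :: X) Y = ∑ j ∈ Finset.range k,
      (SphereGeom.sg k p j : ZMod m) * kap m (p j) * x.χ j * LL G (dec p j) X Y := by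
  by_cases h0 : ∀ j < k, p j = 0
  · rw [LL, G.zz_zero k p h0, ev_sx]
    symm
    refine Finset.sum_eq_zero fun j hj => ?_
    rw [h0 j (Finset.mem_range.1 hj)]
    simp [kap]
  · have h1 := ev_vanish (vmul_deg (wX_good X Y) x.b)
      (G.bd_zz k p hp (exists_of_not_zero h0))
    rw [map_sub, sub_eq_zero] at h1
    have h2 := ev_emul_bd (wX_good X Y) x.b (G.zz k p)
    rw [LL]
    change ev (emul (fun u v => x.b v - x.b u) (wX X Y)) _ = _
    rw [h2, h1, map_sum]
    refine Finset.sum_congr rfl fun j hj => ?_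
    rw [map_zsmul, ev_vmul_QQ G x (Finset.mem_range.1 hj), zsmul_eq_mul, LL, dec]
    ring

/-- Splitting off a Bockstein class. -/
lemma LL_Y (p : ℕ → ℕ) (hp : ∀ j < k, p j ≤ 2 * n + 1) (y : YL G k) (Y : List (YL G k)) :
    LL G p [] (y :: Y) = ∑ j ∈ Finset.range k,
      (SphereGeom.sg k p j : ZMod m) * lam m (p j) * LL G (dec p j) [y.toX] Y := by
  by_cases h0 : ∀ j < k, p j = 0
  · rw [LL, G.zz_zero k p h0, ev_sx]
    symm
    have : wX [] (y :: Y) [fun _ => G.e 0] = 0 := by simp [wX, wY, tmul]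
    rw [this]
    refine Finset.sum_eq_zero fun j hj => ?_
    rw [h0 j (Finset.mem_range.1 hj)]
    simp [lam]
  · have h1 := ev_vanish (emul_deg (wY_good Y) y.edge y.edge_self)
      (G.bd_zz k p hp (exists_of_not_zero h0))
    rw [map_sub, sub_eq_zero] at h1
    have h2 := ev_m_tri y (wY_good Y) (G.zz k p)
    rw [h1, map_sum] at h2
    have h3 : ev (tmul y.tri (wY Y)) (G.zz k p) = ∑ j ∈ Finset.range k,
        SphereGeom.sg k p j * ((if p j = 0 then 0 else if Even (p j) then -1 else 0) *
          ev (emul y.edge (wY Y)) (G.zz k (dec p j))) := by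
      refine mul_left_cancel₀ (m_ne (m := m)) ?_
      rw [h2, Finset.mul_sum]
      refine Finset.sum_congr rfl fun j hj => ?_
      rw [map_zsmul, ev_edge_QQ G y (Finset.mem_range.1 hj), zsmul_eq_mul, dec]
      push_cast
      ring
    have h4 : ∀ z, ((ev (emul y.edge (wY Y)) z : ℤ) : ZMod m) = ev (wX [y.toX] Y) z := by
      intro z
      rw [← ev_cast]
      refine ch_ext (fun l => ?_) z
      rcases l with _ | ⟨u, _ | ⟨v, l⟩⟩ <;> simp [emul, wX, y.cast_edge, YLet.toX]
    have h5 : LL G p [] (y :: Y) = ((ev (tmul y.tri (wY Y)) (G.zz k p) : ℤ) : ZMod m) := by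
      rw [← ev_cast]; rfl
    rw [h5, h3]
    push_cast
    refine Finset.sum_congr rfl fun j hj => ?_
    rw [h4, LL, lam, mul_assoc]

lemma LL_zero (p : ℕ → ℕ) (hp : ∀ j < k, p j = 0) :
    LL G (k := k) p [] [] = 1 := by
  rw [LL, G.zz_zero k p hp, ev_sx]
  simp [wX, wY]

lemma LL_congr {p p' : ℕ → ℕ} (h : ∀ j < k, p j = p' j) (X : List (XL G k)) (Y : List (YL G k)) :
    LL G p X Y = LL G p' X Y := by
  rw [LL, LL, G.zz_congr k h]

/-- Half the dimensions of the cells, rounded down. -/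
def flo (k : ℕ) (p : ℕ → ℕ) : ℕ := ∑ j ∈ Finset.range k, p j / 2

lemma dec_le (p : ℕ → ℕ) (j i : ℕ) : dec p j i ≤ p i := by
  by_cases h : i = j
  · subst h; simp [dec]
  · simp [dec, h]

lemma flo_dec_le (p : ℕ → ℕ) (j : ℕ) : flo k (dec p j) ≤ flo k p :=
  Finset.sum_le_sum fun i _ => Nat.div_le_div_right (dec_le p j i)

lemma flo_dec_even (p : ℕ → ℕ) {j : ℕ} (hj : j < k) (h0 : p j ≠ 0) (he : Even (p j)) :
    flo k (dec p j) + 1 = flo k p := by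
  unfold flo
  rw [← Finset.add_sum_erase _ _ (Finset.mem_range.2 hj),
    ← Finset.add_sum_erase (Finset.range k) (fun i => p i / 2) (Finset.mem_range.2 hj)]
  have : ∑ i ∈ (Finset.range k).erase j, dec p j i / 2
      = ∑ i ∈ (Finset.range k).erase j, p i / 2 := by
    refine Finset.sum_congr rfl fun i hi => ?_
    simp [dec, Finset.ne_of_mem_erase hi]
  rw [this]
  have h2 : dec p j j = p j - 1 := by simp [dec]
  rw [h2]
  obtain ⟨a, ha⟩ := he
  omega

/-- Each Bockstein class needs two dimensions in a single factor. -/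
lemma LL_vanish (p : ℕ → ℕ) (hp : ∀ j < k, p j ≤ 2 * n + 1) (X : List (XL G k))
    (Y : List (YL G k)) (h : flo k p < Y.length) : LL G p X Y = 0 := by
  induction hN : X.length + 2 * Y.length generalizing p X Y with
  | zero => omega
  | succ N ih =>
    cases X with
    | cons x X =>
      rw [LL_X G p hp]
      refine Finset.sum_eq_zero fun j _ => ?_
      rw [ih (dec p j) (fun i hi => (dec_le p j i).trans (hp i hi)) X Y
        ((flo_dec_le p j).trans_lt h) (by simp at hN; omega), mul_zero]
    | nil =>
      cases Y with
      | nil => simp at h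
      | cons y Y =>
        rw [LL_Y G p hp]
        refine Finset.sum_eq_zero fun j hj => ?_
        by_cases h0 : p j = 0
        · simp [lam, h0]
        by_cases he : Even (p j)
        · have := flo_dec_even p (Finset.mem_range.1 hj) h0 he
          simp only [List.length_cons] at h hN
          rw [ih (dec p j) (fun i hi => (dec_le p j i).trans (hp i hi)) [y.toX] Y
            (by omega) (by simp at hN ⊢; omega), mul_zero]
        · simp [lam, he]

/-- The value of a product of Bockstein classes on a product of even cells. -/
noncomputable def MM (q : ℕ → ℕ) (Y : List (YL G k)) : ZMod m := LL G (fun j => 2 * q j) [] Y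

lemma sg_even (p : ℕ → ℕ) (j : ℕ) (h : ∀ i, j < i → Even (p i)) : SphereGeom.sg k p j = 1 := by
  unfold SphereGeom.sg
  exact Finset.prod_eq_one fun i hi => Even.neg_one_pow (h i (Finset.mem_Ico.1 hi).1)

/-- A Bockstein letter lowers the dimension of one cell by two. Lowering two different cells by one
would leave too few even dimensions for the remaining letters, by `LL_vanish`. -/
lemma MM_cons (q : ℕ → ℕ) (hq : ∀ j < k, q j ≤ n) (y : YL G k) (Y : List (YL G k))
    (hs : ∑ j ∈ Finset.range k, q j = Y.length + 1) :
    MM G q (y :: Y) = ∑ j ∈ Finset.range k,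
      if q j = 0 then 0 else -(y.χ j * MM G (dec q j) Y) := by
  have hfl : flo k (fun j => 2 * q j) = Y.length + 1 := by
    rw [← hs]; exact Finset.sum_congr rfl fun j _ => by simp
  have hp : ∀ j < k, 2 * q j ≤ 2 * n + 1 := fun j hj => by have := hq j hj; omega
  rw [MM, LL_Y G _ hp]
  refine Finset.sum_congr rfl fun j hj => ?_
  have hj' := Finset.mem_range.1 hj
  by_cases h0 : q j = 0
  · simp [lam, h0]
  rw [sg_even _ _ fun i _ => even_two_mul _, if_neg h0]
  have hl : lam m (2 * q j) = -1 := by simp [lam, h0]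
  have hfl2 := flo_dec_even (k := k) (fun j => 2 * q j) hj' (by simpa using h0) (even_two_mul _)
  have hp2 : ∀ i < k, dec (fun j => 2 * q j) j i ≤ 2 * n + 1 := fun i hi =>
    (dec_le _ j i).trans (hp i hi)
  rw [hl, LL_X G _ hp2, Finset.sum_eq_single j]
  · have hd : dec (fun j => 2 * q j) j j = 2 * q j - 1 := by simp [dec]
    have ho : ¬ Even (2 * q j - 1) := by
      rw [Nat.not_even_iff_odd]; exact ⟨q j - 1, by omega⟩
    have hk : kap m (2 * q j - 1) = 1 := by
      rw [kap, if_neg (by omega), if_neg ho]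
    rw [hd, hk, sg_even _ _ fun i hi => by simp [dec, hi.ne'], MM]
    have hdd : dec (dec (fun j => 2 * q j) j) j = fun i => 2 * dec q j i := by
      funext i
      by_cases hi : i = j
      · subst hi; simp [dec]; omega
      · simp [dec, hi]
    rw [hdd]
    simp [YLet.toX]
  · intro l hl hlj
    have hd : dec (fun j => 2 * q j) j l = 2 * q l := by simp [dec, hlj]
    by_cases hl0 : q l = 0
    · rw [hd, hl0]; simp [kap]
    · have hfl3 := flo_dec_even (k := k) (dec (fun j => 2 * q j) j) (Finset.mem_range.1 hl)
        (by rw [hd]; omega) (by rw [hd]; exact even_two_mul _)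
      rw [LL_vanish G (dec (dec (fun j => 2 * q j) j) l) (fun i hi => (dec_le _ l i).trans (hp2 i hi)) _ _ (by omega), mul_zero]
  · exact fun h => absurd hj h

/-- The character `e_a - e_c`. -/
def chi (m a c : ℕ) (j : ℕ) : ZMod m := (if j = a then 1 else 0) - if j = c then 1 else 0

lemma MM_congr {q q' : ℕ → ℕ} (h : ∀ j < k, q j = q' j) (Y : List (YL G k)) :
    MM G q Y = MM G q' Y := LL_congr G (fun j hj => by rw [h j hj]) _ _

/-- A block of Bockstein classes of the character `e_a - e_c` contributes a signed binomial
coefficient. -/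
lemma MM_block {a c : ℕ} (hac : a ≠ c) (ha : a < k) (hc : c < k) (B Y : List (YL G k))
    (hB : ∀ y ∈ B, ∀ j < k, y.χ j = chi m a c j) (q : ℕ → ℕ) (hq : ∀ j < k, q j ≤ n)
    (hs : ∑ j ∈ Finset.range k, q j = B.length + Y.length) (hqs : q a + q c = B.length) :
    MM G q (B ++ Y) = (-1) ^ q a * (B.length.choose (q a) : ℕ) *
      MM G (Function.update (Function.update q a 0) c 0) Y := by
  induction B generalizing q with
  | nil =>
    simp only [List.length_nil, Nat.add_eq_zero_iff] at hqs
    have : Function.update (Function.update q a 0) c 0 = q := by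
      funext i
      by_cases h1 : i = c
      · subst h1; simp [hqs]
      · by_cases h2 : i = a
        · subst h2; simp [h1, hqs]
        · simp [h1, h2]
    rw [this, hqs.1]
    simp
  | cons y B ih =>
    simp only [List.length_cons] at hs hqs
    have hsum : ∀ j < k, q j ≠ 0 → ∑ i ∈ Finset.range k, dec q j i + 1
        = ∑ i ∈ Finset.range k, q i := by
      intro j hj h0
      rw [← Finset.add_sum_erase _ _ (Finset.mem_range.2 hj),
        ← Finset.add_sum_erase (Finset.range k) q (Finset.mem_range.2 hj)]
      have : ∑ i ∈ (Finset.range k).erase j, dec q j i = ∑ i ∈ (Finset.range k).erase j, q i :=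
        Finset.sum_congr rfl fun i hi => by simp [dec, Finset.ne_of_mem_erase hi]
      rw [this]
      simp only [dec, Function.update_self]
      omega
    -- the two summands of Pascal's rule
    have key : ∀ j, (j = a ∨ j = c) → q j ≠ 0 → MM G (dec q j) (B ++ Y) =
        (-1) ^ dec q j a * (B.length.choose (dec q j a) : ℕ) *
          MM G (Function.update (Function.update q a 0) c 0) Y := by
      intro j hj h0
      have hjk : j < k := by rcases hj with rfl | rfl <;> assumption
      have h1 : Function.update (Function.update (dec q j) a 0) c 0
          = Function.update (Function.update q a 0) c 0 := by
        funext i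
        by_cases h1 : i = c
        · simp [h1]
        by_cases h2 : i = a
        · simp [h2, hac]
        have h3 : i ≠ j := by rcases hj with rfl | rfl <;> assumption
        simp [dec, h1, h2, h3]
      rw [ih (fun y' hy' => hB y' (List.mem_cons_of_mem _ hy')) (dec q j)
        (fun i hi => (dec_le q j i).trans (hq i hi)) (by have := hsum j hjk h0; omega) ?_, h1]
      rcases hj with rfl | rfl
      · simp only [dec, Function.update_self, Function.update_of_ne hac.symm]; omega
      · simp only [dec, Function.update_self, Function.update_of_ne hac]; omega
    rw [List.cons_append, MM_cons G q hq y (B ++ Y) (by simp; omega)]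
    have hy := hB y (by simp)
    have hsplit : ∀ f : ℕ → ZMod m, (∀ j < k, j ≠ a → j ≠ c → f j = 0) →
        ∑ j ∈ Finset.range k, f j = f a + f c := by
      intro f hf
      rw [← Finset.sum_pair hac]
      refine (Finset.sum_subset ?_ fun j hj hj2 => ?_).symm
      · intro j hj
        simp only [Finset.mem_insert, Finset.mem_singleton] at hj
        rcases hj with rfl | rfl <;> simpa
      · simp only [Finset.mem_insert, Finset.mem_singleton, not_or] at hj2
        exact hf j (Finset.mem_range.1 hj) hj2.1 hj2.2
    rw [hsplit]
    · have hya : y.χ a = 1 := by rw [hy a ha]; simp [chi, hac]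
      have hyc : y.χ c = -1 := by rw [hy c hc]; simp [chi, hac.symm]
      rw [hya, hyc]
      set Z := MM G (Function.update (Function.update q a 0) c 0) Y with hZ
      have hda : dec q a a = q a - 1 := by simp [dec]
      have hdc : dec q c a = q a := by simp [dec, hac]
      by_cases h1 : q a = 0
      · have h2 : q c ≠ 0 := by omega
        rw [if_pos h1, if_neg h2, key c (Or.inr rfl) h2, hdc, h1]
        simp
      · rw [if_neg h1, key a (Or.inl rfl) h1, hda]
        obtain ⟨t, ht⟩ := Nat.exists_eq_succ_of_ne_zero h1
        by_cases h2 : q c = 0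
        · have h3 : B.length = t := by omega
          rw [if_pos h2, ht, List.length_cons, h3]
          simp [pow_succ]
        · rw [if_neg h2, key c (Or.inr rfl) h2, hdc, ht, List.length_cons]
          simp only [Nat.succ_eq_add_one, Nat.add_sub_cancel, Nat.choose_succ_succ]
          push_cast
          ring
    · intro j hj h1 h2
      rw [hy j hj]
      simp [chi, h1, h2]

end Recursion

end TCLens

/-! ### The divisibility theorem -/

namespace TCLens

section Words

variable {S : Type*} [PseudoMetricSpace S] {m n M : ℕ} [NeZero m] {η : ℝ}
  (G : SphereGeom S m n M η) {k : ℕ}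

/-- A family of labels: `Λ i a` is a function that is shifted by one under the generator acting on
the `a`-th factor, and invariant under the generators acting on the other factors. -/
def Labels (k : ℕ) (Λ : ℕ → ℕ → (ℕ → S) → ZMod m) : Prop :=
  ∀ i a, ∀ j < k, ∀ u, Λ i a (fa j G.g u) = Λ i a u + if j = a then 1 else 0

variable {G} {Λ : ℕ → ℕ → (ℕ → S) → ZMod m}

/-- The letter of degree one given by a difference of labels. -/
def xlet (hΛ : Labels G k Λ) (i a c : ℕ) : XL G k where
  b u := Λ i a u - Λ i c u
  χ := chi m a c
  hb j hj u := by rw [hΛ i a j hj, hΛ i c j hj, chi]; ring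

/-- The Bockstein letter given by differences of labels of indices `i` and `i'`. -/
def ylet (hΛ : Labels G k Λ) (i i' a c : ℕ) : YL G k where
  b u := Λ i a u - Λ i c u
  b' u := Λ i' a u - Λ i' c u
  χ := chi m a c
  hb j hj u := by rw [hΛ i a j hj, hΛ i c j hj, chi]; ring
  hb' j hj u := by rw [hΛ i' a j hj, hΛ i' c j hj, chi]; ring

/-- The `i`-th letter of degree one of the word. -/
def Xl (hΛ : Labels G k Λ) (i : ℕ) : XL G k := xlet hΛ i i (k - 1)

/-- The `s`-th Bockstein letter of the word. -/
def Yl (n : ℕ) (hΛ : Labels G k Λ) (s : ℕ) : YL G k :=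
  if s < 2 * n * (k / 2) then
    ylet hΛ (k - 1 + 2 * s) (k + 2 * s) (2 * (s / (2 * n))) (2 * (s / (2 * n)) + 1)
  else ylet hΛ (k - 1 + 2 * s) (k + 2 * s) (k - 1) 0

lemma sg_unit (p : ℕ → ℕ) (j : ℕ) : IsUnit ((SphereGeom.sg k p j : ℤ) : ZMod m) := by
  have : IsUnit (SphereGeom.sg k p j) :=
    Finset.prod_induction _ IsUnit (fun a b => IsUnit.mul) isUnit_one
      fun i _ => (isUnit_one.neg).pow _
  exact this.map (Int.castRingHom (ZMod m))

lemma sum_cut (k t n : ℕ) :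
    ∑ j ∈ Finset.range k, (if j < t then 0 else n) = n * (k - t) := by
  induction k with
  | zero => simp
  | succ k ih =>
    rw [Finset.sum_range_succ, ih]
    split_ifs with h
    · rw [show k - t = 0 by omega, show k + 1 - t = 0 by omega, add_zero]
    · rw [show k + 1 - t = k - t + 1 by omega]; ring

/-- The classes of degree one turn the top cell, up to sign, into a product of even cells. -/
lemma xphase (hΛ : Labels G k Λ) (hk : 1 ≤ k) (hn : 1 ≤ n) (Y : List (YL G k))
    (hY : Y.length = n * k) (d i : ℕ) (hid : i + d = k - 1) :
    ∃ ε : ZMod m, IsUnit ε ∧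
      LL G (fun j => if i ≤ j ∧ j < k - 1 then 2 * n + 1 else 2 * n)
        ((List.range' i d).map (Xl hΛ)) Y = ε * LL G (fun _ => 2 * n) [] Y := by
  induction d generalizing i with
  | zero =>
    refine ⟨1, isUnit_one, ?_⟩
    rw [one_mul]
    refine LL_congr G (fun j hj => ?_) _ _
    rw [if_neg (by omega)]
  | succ d ih =>
    obtain ⟨ε, hε, he⟩ := ih (i + 1) (by omega)
    set p : ℕ → ℕ := fun j => if i ≤ j ∧ j < k - 1 then 2 * n + 1 else 2 * n with hp
    have hpi : p i = 2 * n + 1 := by simp only [hp]; rw [if_pos (by omega)]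
    have hpk : p (k - 1) = 2 * n := by simp only [hp]; rw [if_neg (by omega)]
    have hple : ∀ j, p j ≤ 2 * n + 1 := by
      intro j; simp only [hp]; split_ifs <;> omega
    have hik : i ≠ k - 1 := by omega
    refine ⟨(SphereGeom.sg k p i : ℤ) * ε, (sg_unit p i).mul hε, ?_⟩
    rw [List.range'_succ, List.map_cons, LL_X G p fun j _ => hple j, Finset.sum_eq_single i]
    · have h1 : kap m (p i) = 1 := by
        rw [hpi, kap, if_neg (by omega), if_neg (by rw [Nat.not_even_iff_odd]; exact ⟨n, rfl⟩)]
      have h2 : (Xl hΛ i).χ i = 1 := by simp [Xl, xlet, chi, hik]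
      have h3 : LL G (dec p i) ((List.range' (i + 1) d).map (Xl hΛ)) Y = ε *
          LL G (fun _ => 2 * n) [] Y := by
        rw [← he]
        refine LL_congr G (fun j hj => ?_) _ _
        by_cases hji : j = i
        · subst hji
          simp only [dec, Function.update_self, hpi]
          rw [if_neg (by omega)]
          omega
        · simp only [dec, Function.update_of_ne hji, hp]
          congr 1
          simp only [eq_iff_iff]
          omega
      rw [h1, h2, h3]
      ring
    · intro j hj hji
      by_cases hjk : j = k - 1
      · have hfl : flo k p = n * k := by
          have : ∀ j ∈ Finset.range k, p j / 2 = n := by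
            intro j _; simp only [hp]; split_ifs <;> omega
          rw [flo, Finset.sum_congr rfl this]
          simp [mul_comm]
        have := flo_dec_even p (Finset.mem_range.1 hj) (by rw [hjk, hpk]; omega)
          (by rw [hjk, hpk]; exact even_two_mul n)
        rw [LL_vanish G (dec p j) (fun a _ => (dec_le p j a).trans (hple a)) _ Y (by omega),
          mul_zero]
      · have : (Xl hΛ i).χ j = 0 := by simp [Xl, xlet, chi, hji, hjk]
        rw [this]
        simp
    · intro h
      exact absurd (Finset.mem_range.2 (by omega)) h

/-- Each pair of factors contributes a central binomial coefficient. -/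
lemma yphase (hΛ : Labels G k Λ) (hn : 1 ≤ n) (d i : ℕ) (hid : i + d = k / 2) :
    ∃ ε : ZMod m, IsUnit ε ∧
      MM G (fun j => if j < 2 * i then 0 else n)
        ((List.range' (2 * n * i) (n * k - 2 * n * i)).map (Yl n hΛ))
      = ε * ((2 * n).choose n : ℕ) ^ d * MM G (fun j => if j < 2 * (k / 2) then 0 else n)
        ((List.range' (2 * n * (k / 2)) (n * k - 2 * n * (k / 2))).map (Yl n hΛ)) := by
  induction d generalizing i with
  | zero =>
    refine ⟨1, isUnit_one, ?_⟩
    rw [← hid]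
    simp
  | succ d ih =>
    obtain ⟨ε, hε, he⟩ := ih (i + 1) (by omega)
    refine ⟨(-1) ^ n * ε, ((isUnit_one.neg).pow _).mul hε, ?_⟩
    have hik : 2 * i + 2 ≤ k := by omega
    have hlen : n * k - 2 * n * i = 2 * n + (n * k - 2 * n * (i + 1)) := by
      obtain ⟨t, rfl⟩ := Nat.exists_eq_add_of_le hik
      have e1 : n * (2 * i + 2 + t) = 2 * n * i + (2 * n + n * t) := by ring
      have e2 : 2 * n * (i + 1) = 2 * n * i + 2 * n := by ring
      omega
    have hsplit : List.range' (2 * n * i) (n * k - 2 * n * i) = List.range' (2 * n * i) (2 * n)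
        ++ List.range' (2 * n * (i + 1)) (n * k - 2 * n * (i + 1)) := by
      rw [hlen, ← List.range'_append_1]
      rfl
    rw [hsplit, List.map_append, MM_block G (a := 2 * i) (c := 2 * i + 1) (by omega) (by omega)
      (by omega) _ _ ?_ _ (fun j _ => by split_ifs <;> omega) ?_ ?_]
    · simp only [List.length_map, List.length_range', lt_irrefl, if_false]
      have h1 : MM G (Function.update (Function.update (fun j => if j < 2 * i then 0 else n)
            (2 * i) 0) (2 * i + 1) 0)
            ((List.range' (2 * n * (i + 1)) (n * k - 2 * n * (i + 1))).map (Yl n hΛ))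
          = MM G (fun j => if j < 2 * (i + 1) then 0 else n)
            ((List.range' (2 * n * (i + 1)) (n * k - 2 * n * (i + 1))).map (Yl n hΛ)) := by
        refine MM_congr G (fun j _ => ?_) _
        by_cases h1 : j = 2 * i + 1
        · subst h1; simp; omega
        by_cases h2 : j = 2 * i
        · subst h2; simp
        rw [Function.update_of_ne h1, Function.update_of_ne h2]
        congr 1
        simp only [eq_iff_iff]
        omega
      rw [h1, he]
      ring
    · intro y hy j _
      obtain ⟨s, hs, rfl⟩ := List.mem_map.1 hy
      rw [List.mem_range'_1] at hs
      have h1 : 2 * n * i + 2 * n ≤ 2 * n * (k / 2) := by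
        have := Nat.mul_le_mul_left (2 * n) (show i + 1 ≤ k / 2 by omega)
        rwa [mul_add, mul_one] at this
      have h2 : s / (2 * n) = i := by
        refine Nat.div_eq_of_lt_le ?_ ?_
        · rw [mul_comm]; exact hs.1
        · rw [mul_comm, Nat.mul_add, mul_one]; exact hs.2
      rw [Yl, if_pos (by omega), h2]
      rfl
    · rw [sum_cut, List.length_map, List.length_map, List.length_range', List.length_range',
        ← hlen, Nat.mul_sub]
      congr 1
      ring
    · simp
      omega

/-- The letters left over after the pairs of factors are used up: none if `k` is even, and otherwise
`n` letters of the character `e_{k-1} - e_0`, of which only the last factor matters. -/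
lemma yend (hΛ : Labels G k Λ) (hk : 2 ≤ k) :
    IsUnit (MM G (fun j => if j < 2 * (k / 2) then 0 else n)
        ((List.range' (2 * n * (k / 2)) (n * k - 2 * n * (k / 2))).map (Yl n hΛ))) := by
  rcases Nat.even_or_odd' k with ⟨h, h1 | h1⟩
  · have e1 : k / 2 = h := by omega
    have e2 : n * k - 2 * n * (k / 2) = 0 := by
      rw [e1, h1]
      exact Nat.sub_eq_zero_of_le (le_of_eq (by ring))
    rw [e2]
    simp only [List.range'_zero, List.map_nil]
    rw [MM, LL_zero]
    · exact isUnit_one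
    · intro j hj
      rw [if_pos (by omega)]
  · have e1 : k / 2 = h := by omega
    have e2 : n * k - 2 * n * (k / 2) = n := by
      rw [e1, h1]
      have : n * (2 * h + 1) = 2 * n * h + n := by ring
      omega
    rw [e2, ← List.append_nil (List.map _ _), MM_block G (a := k - 1) (c := 0) (by omega)
      (by omega) (by omega) _ _ ?_ _ (fun j _ => by split_ifs <;> omega) ?_ ?_]
    · rw [MM, LL_zero]
      · simp only [List.length_map, List.length_range', mul_one]
        rw [if_neg (by omega), Nat.choose_self]
        simpa using (isUnit_one.neg).pow n
      · intro j hj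
        by_cases h2 : j = 0
        · simp [h2]
        by_cases h3 : j = k - 1
        · simp [h2, ← h3]
        rw [Function.update_of_ne h2, Function.update_of_ne h3, if_pos (by omega)]
    · intro y hy j _
      obtain ⟨s, hs, rfl⟩ := List.mem_map.1 hy
      rw [List.mem_range'_1] at hs
      rw [Yl, if_neg (by omega)]
      rfl
    · rw [sum_cut]
      simp
      have : k - 2 * (k / 2) = 1 := by omega
      rw [this, mul_one]
    · simp
      rw [if_neg (by omega), if_pos (by omega)]
      rfl

/-- If every small simplex has an index for which all differences of labels are constant, then
there must be at least `k (2 n + 1)` indices, unless `m` divides a power of the central binomial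
coefficient. -/
theorem dvd_of_labels (hΛ : Labels G k Λ) (hk : 2 ≤ k) (hn : 1 ≤ n) (hη : 0 ≤ η) {ε : ℝ}
    (hε : k * (2 * n + 1) * η ≤ ε)
    (hsm : ∀ l : List (ℕ → S), SphereGeom.Sm ε l → ∃ i < k * (2 * n + 1) - 1,
      ∀ a < k, ∀ c < k, ∀ u ∈ l, ∀ v ∈ l, Λ i a u - Λ i c u = Λ i a v - Λ i c v) :
    m ∣ (2 * n).choose n ^ (k / 2) := by
  set X := (List.range' 0 (k - 1)).map (Xl hΛ) with hX
  set Y := (List.range' 0 (n * k)).map (Yl n hΛ) with hY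
  set p : ℕ → ℕ := fun j => if 0 ≤ j ∧ j < k - 1 then 2 * n + 1 else 2 * n with hp
  have hple : ∀ j, p j ≤ 2 * n + 1 := by
    intro j; simp only [hp]; split_ifs <;> omega
  -- index `i < k - 1` belongs to the letter `Xl i`, a later one to the letter `Yl ((i - (k - 1)) / 2)`
  have hzero : LL G p X Y = 0 := by
    have hz := G.zz_mem_Sm hη k p fun j _ => hple j
    have := Sp_map (ev (wX X Y)) ⊥ (fun l hl => ?_) hz
    · rw [LL]
      exact (AddSubgroup.mem_bot).1 this
    rw [ev_sx, AddSubgroup.mem_bot]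
    obtain ⟨i, hi, h⟩ := hsm l fun u hu v hv a => (hl u hu v hv a).trans hε
    refine wX_small X Y l ?_
    by_cases hik : i < k - 1
    · refine Or.inl ⟨Xl hΛ i, ?_, h i (by omega) (k - 1) (by omega)⟩
      rw [hX]
      exact List.mem_map_of_mem (List.mem_range'_1.2 (by omega))
    · refine Or.inr ⟨Yl n hΛ ((i - (k - 1)) / 2), ?_, ?_⟩
      · rw [hY]
        refine List.mem_map_of_mem (List.mem_range'_1.2 ?_)
        have : k * (2 * n + 1) = 2 * (n * k) + k := by ring
        omega
      · set s := (i - (k - 1)) / 2 with hs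
        have hor : k - 1 + 2 * s = i ∨ k + 2 * s = i := by omega
        have hac : ∃ a c, a < k ∧ c < k ∧
            Yl n hΛ s = ylet hΛ (k - 1 + 2 * s) (k + 2 * s) a c := by
          unfold Yl
          split_ifs with h1
          · have h2 : s / (2 * n) < k / 2 := Nat.div_lt_of_lt_mul h1
            exact ⟨_, _, by omega, by omega, rfl⟩
          · exact ⟨_, _, by omega, by omega, rfl⟩
        obtain ⟨a, c, ha, hc, he⟩ := hac
        rw [he]
        rcases hor with h1 | h1
        · left; rw [h1]; exact h a ha c hc
        · right; rw [h1]; exact h a ha c hc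
  obtain ⟨ε₁, hε₁, h1⟩ := xphase hΛ (by omega) hn Y (by simp [hY]) (k - 1) 0 (by omega)
  obtain ⟨ε₂, hε₂, h2⟩ := yphase hΛ hn (k / 2) 0 (by omega)
  have h3 := yend (n := n) hΛ hk
  have h4 : LL G (fun _ => 2 * n) [] Y = MM G (fun j => if j < 2 * 0 then 0 else n)
        ((List.range' (2 * n * 0) (n * k - 2 * n * 0)).map (Yl n hΛ)) := by
    simp [MM, hY]
  rw [hzero, h4, h2] at h1
  have h5 : ((((2 * n).choose n) ^ (k / 2) : ℕ) : ZMod m) = 0 := by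
    have h6 := h1.symm
    rw [hε₁.mul_right_eq_zero, h3.mul_left_eq_zero, hε₂.mul_right_eq_zero] at h6
    exact_mod_cast h6
  exact (ZMod.natCast_eq_zero_iff _ _).1 h5

end Words

end TCLens

/-! ### Labels from sections -/

namespace TCLens

section Cover

open Topology Filter

variable {m n : ℕ} [NeZero m]

/-- The group `ℤ/m` acts on the sphere through its embedding as the group of `m`-th roots of
unity. -/
noncomputable instance rotAct : AddAction (ZMod m) (SS n) where
  vadd t x := smulS (ZMod.toCircle t : ℂ) (Circle.norm_coe _) x
  zero_vadd x := Subtype.ext (by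
    change ((ZMod.toCircle (0 : ZMod m) : Circle) : ℂ) • (x : EE n) = x
    simp)
  add_vadd s t x := Subtype.ext (by
    change ((ZMod.toCircle (s + t) : Circle) : ℂ) • (x : EE n)
      = ((ZMod.toCircle s : Circle) : ℂ) • ((ZMod.toCircle t : Circle) : ℂ) • (x : EE n)
    rw [AddChar.map_add_eq_mul, Circle.coe_mul, mul_smul])

lemma vadd_coe (t : ZMod m) (x : SS n) :
    ((t +ᵥ x : SS n) : EE n) = ((ZMod.toCircle t : Circle) : ℂ) • (x : EE n) := rfl

lemma vadd_free {s t : ZMod m} {x : SS n} (h : s +ᵥ x = t +ᵥ x) : s = t := by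
  have h1 := congrArg (Subtype.val) h
  rw [vadd_coe, vadd_coe] at h1
  have hx : (x : EE n) ≠ 0 := by
    intro h0
    have := SS_norm x
    simp [h0] at this
  exact ZMod.injective_toCircle (Circle.ext (smul_left_injective ℂ hx h1))

instance : IsCancelVAdd (ZMod m) (SS n) where
  left_cancel' t x y h := by simpa using h
  right_cancel' s t x h := vadd_free h

instance : ContinuousConstVAdd (ZMod m) (SS n) where
  continuous_const_vadd t := by
    refine Continuous.subtype_mk (f := fun x : SS n =>
      ((ZMod.toCircle t : Circle) : ℂ) • (x : EE n)) ?_ _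
    fun_prop

/-- The projection of the sphere onto the lens space. -/
noncomputable def qq (m : ℕ) {n : ℕ} (x : SS n) : LensSpace m n := Quotient.mk (lensSetoid m n) x

lemma toCircle_pow (t : ZMod m) : ((ZMod.toCircle t : Circle) : ℂ) ^ m = 1 := by
  rw [← Circle.coe_pow, ← AddChar.map_nsmul_eq_pow]
  simp

lemma exists_toCircle {c : ℂ} (hc : c ^ m = 1) :
    ∃ t : ZMod m, ((ZMod.toCircle t : Circle) : ℂ) = c := by
  obtain ⟨i, -, hi⟩ := (rt_prim (NeZero.ne m)).eq_pow_of_pow_eq_one hc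
  refine ⟨(i : ZMod m), ?_⟩
  rw [ZMod.toCircle_natCast, ← hi, rt, ← Complex.exp_nat_mul]
  congr 1
  ring

lemma toCircle_one : ((ZMod.toCircle (1 : ZMod m) : Circle) : ℂ) = rt m := by
  have := ZMod.toCircle_natCast (N := m) 1
  rw [Nat.cast_one] at this
  rw [this, rt]
  simp

lemma qq_eq {x y : SS n} : qq m x = qq m y ↔ ∃ t : ZMod m, t +ᵥ y = x := by
  have h0 : qq m x = qq m y ↔ ∃ ζ : ℂˣ, ζ ^ m = 1 ∧ (x : EE n) = ζ • (y : EE n) :=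
    eq_comm.trans (Quotient.eq (r := lensSetoid m n))
  rw [h0]
  constructor
  · rintro ⟨ζ, hζ, h⟩
    obtain ⟨t, ht⟩ := exists_toCircle (m := m) (c := (ζ : ℂ)) (by
      simpa using congrArg Units.val hζ)
    exact ⟨t, Subtype.ext (by rw [vadd_coe, ht, h]; rfl)⟩
  · rintro ⟨t, rfl⟩
    refine ⟨Circle.toUnits (ZMod.toCircle t), ?_, rfl⟩
    ext
    push_cast
    exact toCircle_pow t

lemma qq_vadd (t : ZMod m) (x : SS n) : qq m (t +ᵥ x) = qq m x := qq_eq.2 ⟨t, rfl⟩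

omit [NeZero m] in
lemma qq_quot : IsQuotientMap (qq m : SS n → LensSpace m n) := isQuotientMap_quot_mk

lemma qq_surj : Function.Surjective (qq m : SS n → LensSpace m n) := qq_quot.surjective

lemma qq_qcov : IsAddQuotientCoveringMap (qq m : SS n → LensSpace m n) (ZMod m) :=
  qq_quot.isAddQuotientCoveringMap_of_properlyDiscontinuousVAdd fun {x y} => by
    rw [qq_eq]; rfl

lemma qq_cont : Continuous (qq m : SS n → LensSpace m n) := qq_quot.continuous

/-- The product of `k` copies of the projection. -/
noncomputable def QQ (m : ℕ) {n k : ℕ} (u : Fin k → SS n) : Fin k → LensSpace m n := fun i => qq m (u i)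

lemma QQ_cont {k : ℕ} : Continuous (QQ m : (Fin k → SS n) → _) :=
  continuous_pi fun i => qq_cont.comp (continuous_apply i)

/-- An open set with a section of `π_k` yields labels in `ℤ/m`, one for each factor: the label
measures the position of `u a` in its orbit relative to a lift of the path given by the section.
The lift is unique only up to a deck transformation, so only differences of labels are locally
constant. -/
theorem labels_of_sec {k : ℕ} (hk : 2 ≤ k) {U : Set (Fin k → LensSpace m n)} (hU : IsOpen U)
    (hs : HasSec k U) :
    ∃ Λ : Fin k → (Fin k → SS n) → ZMod m,
      (∀ a j u, Λ a (Function.update u j ((1 : ZMod m) +ᵥ u j))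
        = Λ a u + if j = a then 1 else 0) ∧
      ∀ u, QQ m u ∈ U → ∀ᶠ v in 𝓝 u, ∀ a c, Λ a v - Λ c v = Λ a u - Λ c u := by
  classical
  obtain ⟨s, hs⟩ := hs
  have hcov := (qq_qcov (m := m) (n := n)).isCoveringMap
  let T : Fin k → unitInterval := fun i =>
    Set.projIcc 0 1 zero_le_one (((i : ℕ) : ℝ) / ((k : ℝ) - 1))
  have hT : ∀ (q : U) i, s q (T i) = q.1 i := fun q i => congrFun (hs q) i
  let i0 : Fin k := ⟨0, by omega⟩
  have hT0 : T i0 = 0 := by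
    simp only [T, i0, Nat.cast_zero, zero_div]
    exact Set.projIcc_of_le_left _ le_rfl
  -- a lift of each path separately; its dependence on `q` need not be continuous
  have hg : ∀ q : U, ∃ g : C(unitInterval, SS n), qq m ∘ g = s q := by
    intro q
    obtain ⟨e, he⟩ := qq_surj (m := m) (n := n) (s q 0)
    obtain ⟨g, hg, -⟩ := hcov.exists_path_lifts (s q) e he.symm
    exact ⟨g, hg⟩
  choose g hg using hg
  -- reference points in the fibres: points of the lifted path over `U`, arbitrary ones elsewhere
  have hy : ∀ q : Fin k → LensSpace m n, ∃ y : Fin k → SS n, (∀ a, qq m (y a) = q a) ∧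
      ∀ hq : q ∈ U, ∀ a, y a = g ⟨q, hq⟩ (T a) := by
    intro q
    by_cases hq : q ∈ U
    · refine ⟨fun a => g ⟨q, hq⟩ (T a), fun a => ?_, fun _ _ => rfl⟩
      exact (congrFun (hg ⟨q, hq⟩) (T a)).trans (hT ⟨q, hq⟩ a)
    · choose y hy using fun a => qq_surj (m := m) (n := n) (q a)
      exact ⟨y, hy, fun h => absurd h hq⟩
  choose y hy hyU using hy
  have hΛ : ∀ (a : Fin k) (u : Fin k → SS n), ∃ t : ZMod m, t +ᵥ y (QQ m u) a = u a := by
    intro a u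
    exact qq_eq.1 (hy (QQ m u) a).symm
  choose Λ hΛ using hΛ
  refine ⟨Λ, ?_, ?_⟩
  · intro a j u
    have hQ : QQ m (Function.update u j ((1 : ZMod m) +ᵥ u j)) = QQ m u := by
      funext i
      rw [QQ, QQ]
      rcases eq_or_ne i j with rfl | h
      · rw [Function.update_self, qq_vadd]
      · rw [Function.update_of_ne h]
    have h1 := hΛ a (Function.update u j ((1 : ZMod m) +ᵥ u j))
    rw [hQ] at h1
    refine vadd_free (h1.trans ?_)
    split_ifs with h
    · subst h
      rw [Function.update_self, add_comm, add_vadd, hΛ]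
    · rw [Function.update_of_ne (Ne.symm h), add_zero, hΛ]
  · intro u hu
    let A : Set (Fin k → SS n) := QQ m ⁻¹' U
    have hA : IsOpen A := hU.preimage QQ_cont
    -- over the preimage of `U`, the paths have a continuous lift starting at `u i0`
    let H : C(unitInterval × A, LensSpace m n) :=
      ⟨fun p => s ⟨QQ m p.2.1, p.2.2⟩ p.1, by
        have h1 : Continuous fun p : unitInterval × A => (⟨QQ m p.2.1, p.2.2⟩ : U) :=
          (QQ_cont.comp (continuous_subtype_val.comp continuous_snd)).subtype_mk _
        exact (s.continuous.comp h1).eval continuous_fst⟩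
    let f : C(A, SS n) := ⟨fun p => p.1 i0, (continuous_apply i0).comp continuous_subtype_val⟩
    have hf : ∀ p, H (0, p) = qq m (f p) := by
      intro p
      have := hT ⟨QQ m p.1, p.2⟩ i0
      rw [hT0] at this
      exact this
    let L := hcov.liftHomotopy H f hf
    have hL : ∀ t p, qq m (L (t, p)) = s ⟨QQ m p.1, p.2⟩ t := fun t p =>
      congrFun (hcov.liftHomotopy_lifts H f hf) (t, p)
    have hz : ∀ (a : Fin k) (p : A), ∃ z : ZMod m, z +ᵥ L (T a, p) = p.1 a := by
      intro a p
      refine qq_eq.1 ?_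
      rw [hL, hT]
      rfl
    choose z hz using hz
    -- the two lifts of a path differ by a single deck transformation, which cancels in differences
    have hdiff : ∀ (a c : Fin k) (p : A), Λ a p.1 - Λ c p.1 = z a p - z c p := by
      intro a c p
      set q : U := ⟨QQ m p.1, p.2⟩
      have e0 : qq m (L (0, p)) = qq m (g q 0) := by
        rw [hL]
        exact (congrFun (hg q) 0).symm
      obtain ⟨τ, hτ⟩ := qq_eq.1 e0
      have e1 : (fun t => τ +ᵥ g q t) = fun t => L (t, p) := by
        refine hcov.eq_of_comp_eq ?_ ?_ ?_ 0 hτ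
        · exact (continuous_const_vadd τ).comp (g q).continuous
        · exact L.continuous.comp (by fun_prop)
        · funext t
          simp only [Function.comp_apply, qq_vadd, hL]
          exact congrFun (hg q) t
      have e2 : ∀ b, Λ b p.1 = z b p + τ := by
        intro b
        refine vadd_free (x := y (QQ m p.1) b) ?_
        rw [hΛ, add_vadd, hyU _ p.2, ← hz b p]
        exact congrArg _ (congrFun e1 (T b)).symm
      rw [e2, e2]
      ring
    -- `z a` has closed level sets and finitely many values
    have hloc : ∀ a : Fin k, ∀ᶠ p in 𝓝 (⟨u, hu⟩ : A), z a p = z a ⟨u, hu⟩ := by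
      intro a
      have hcl : ∀ w : ZMod m, IsClosed {p : A | w +ᵥ L (T a, p) = p.1 a} := fun w =>
        isClosed_eq ((continuous_const_vadd w).comp (L.continuous.comp (by fun_prop)))
          ((continuous_apply a).comp continuous_subtype_val)
      have hall : ∀ᶠ p in 𝓝 (⟨u, hu⟩ : A), ∀ w : ZMod m, w ≠ z a ⟨u, hu⟩ →
          ¬ (w +ᵥ L (T a, p) = p.1 a) := by
        rw [eventually_all]
        intro w
        by_cases hw : w = z a ⟨u, hu⟩
        · simp [hw]
        · have := (hcl w).isOpen_compl.mem_nhds (x := (⟨u, hu⟩ : A)) (by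
            intro h
            exact hw (vadd_free (h.trans (hz a ⟨u, hu⟩).symm)))
          filter_upwards [this] with p hp _
          exact hp
      filter_upwards [hall] with p hp
      by_contra hne
      exact hp _ hne (hz a p)
    have hloc2 : ∀ᶠ p in 𝓝 (⟨u, hu⟩ : A), ∀ a c, Λ a p.1 - Λ c p.1 = Λ a u - Λ c u := by
      have := eventually_all.2 hloc
      filter_upwards [this] with p hp a c
      rw [hdiff, hp a, hp c]
      exact (hdiff a c ⟨u, hu⟩).symm
    rw [nhds_subtype_eq_comap, eventually_comap] at hloc2
    filter_upwards [hloc2, hA.mem_nhds hu] with v hv hvA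
    exact hv ⟨v, hvA⟩ rfl

end Cover

end TCLens

/-! ### The lower bound -/

namespace TCLens

section Lower

open Topology Filter

/-- The lower bound: a cover of `L^k` by `R` open sets with sections of `π_k` provides labels on
`S^k` to which the counting theorem applies, by the Lebesgue number lemma. -/
theorem le_of_cover {k n m R : ℕ} [NeZero m] (hk : 2 ≤ k) (hn : 1 ≤ n)
    (hdvd : ¬ m ∣ (2 * n).choose n ^ (k / 2)) (h : TCCoverAt (LensSpace m n) k R) :
    k * (2 * n + 1) ≤ R := by
  by_contra! hR
  refine hdvd ?_
  obtain ⟨U, hU, hcov, hsec⟩ := h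
  -- for indices beyond the cover, the empty set supplies some labels
  have hlab : ∀ i : ℕ, ∃ Λ : Fin k → (Fin k → SS n) → ZMod m,
      (∀ a j u, Λ a (Function.update u j ((1 : ZMod m) +ᵥ u j))
        = Λ a u + if j = a then 1 else 0) ∧
      ∀ h : i < R, ∀ u, QQ m u ∈ U ⟨i, h⟩ →
        ∀ᶠ v in 𝓝 u, ∀ a c, Λ a v - Λ c v = Λ a u - Λ c u := by
    intro i
    by_cases h : i < R
    · obtain ⟨Λ, h1, h2⟩ := labels_of_sec (m := m) (n := n) hk (hU ⟨i, h⟩) (hsec ⟨i, h⟩)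
      exact ⟨Λ, h1, fun _ => h2⟩
    · obtain ⟨Λ, h1, -⟩ := labels_of_sec (m := m) (n := n) hk (U := ∅) isOpen_empty
        ⟨⟨fun u => u.2.elim, by
          rw [continuous_iff_continuousAt]; exact fun u => u.2.elim⟩, fun u => u.2.elim⟩
      exact ⟨Λ, h1, fun h' => absurd h' h⟩
  choose Λ hΛ1 hΛ2 using hlab
  -- neighbourhoods on which the differences of the labels with a suitable index are constant
  have hO : ∀ u : Fin k → SS n, ∃ i < R, ∃ O : Set (Fin k → SS n), IsOpen O ∧ u ∈ O ∧
      ∀ v ∈ O, ∀ a c, Λ i a v - Λ i c v = Λ i a u - Λ i c u := by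
    intro u
    have hu : QQ m u ∈ ⋃ i, U i := by rw [hcov]; trivial
    obtain ⟨i, hi⟩ := Set.mem_iUnion.1 hu
    obtain ⟨O, h1, h2, h3⟩ := eventually_nhds_iff.1 (hΛ2 i i.2 u hi)
    exact ⟨i, i.2, O, h2, h3, h1⟩
  choose ι hι O hOo hOm hOc using hO
  obtain ⟨δ, hδ, hleb⟩ := lebesgue_number_lemma_of_metric (s := Set.univ) isCompact_univ hOo
    (fun u _ => Set.mem_iUnion.2 ⟨u, hOm u⟩)
  have hd : (0 : ℝ) < k * (2 * n + 1) := by positivity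
  obtain ⟨M, G, hG⟩ := exists_geom n (NeZero.ne m)
    (η := δ / 2 / (k * (2 * n + 1))) (by positivity)
  have hg : ∀ x, G.g x = (1 : ZMod m) +ᵥ x := fun x => by
    rw [hG]
    refine Subtype.ext ?_
    rw [smulS_coe, vadd_coe, toCircle_one]
  -- the chains use sequences of points, of which only the first `k` entries matter
  let res : (ℕ → SS n) → Fin k → SS n := fun u j => u j
  let Λ' : ℕ → ℕ → (ℕ → SS n) → ZMod m := fun i a u =>
    if h : a < k then Λ i ⟨a, h⟩ (res u) else 0
  have hL : Labels G k Λ' := by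
    intro i a j hj u
    have hres : res (fa j G.g u)
        = Function.update (res u) ⟨j, hj⟩ ((1 : ZMod m) +ᵥ res u ⟨j, hj⟩) := by
      funext l
      rcases eq_or_ne l ⟨j, hj⟩ with rfl | hl
      · simp [res, fa, hg]
      · have : (l : ℕ) ≠ j := fun h => hl (Fin.ext h)
        simp [res, fa, this, hl]
    simp only [Λ']
    by_cases ha : a < k
    · rw [dif_pos ha, dif_pos ha, hres, hΛ1]
      simp [Fin.ext_iff]
    · rw [dif_neg ha, dif_neg ha, if_neg (by omega), add_zero]
  refine dvd_of_labels hL hk hn (by positivity) (ε := δ / 2)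
    (le_of_eq (by field_simp)) ?_
  intro l hl
  rcases l.eq_nil_or_concat with rfl | ⟨l', u₀, hl'⟩
  · refine ⟨0, ?_, by simp⟩
    have : 1 ≤ k * n := Nat.mul_pos (by omega) hn
    have : k * (2 * n + 1) = 2 * (k * n) + k := by ring
    omega
  have hu₀ : u₀ ∈ l := by rw [hl']; simp
  obtain ⟨w, hw⟩ := hleb (res u₀) trivial
  have hin : ∀ u ∈ l, res u ∈ O w := fun u hu => hw (by
    rw [Metric.mem_ball]
    refine lt_of_le_of_lt ((dist_pi_le_iff (by positivity)).2 fun j => hl u hu u₀ hu₀ j) ?_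
    linarith)
  refine ⟨ι w, by have := hι w; omega, ?_⟩
  intro a ha c hc u hu v hv
  simp only [Λ', dif_pos ha, dif_pos hc]
  rw [hOc w _ (hin u hu), hOc w _ (hin v hv)]

end Lower

end TCLens

/-! ### Covers from stratifications -/

namespace TCLens

section Strata

open Topology Filter Set

variable {m n k : ℕ} [NeZero m]

/-- The time at which a path has to pass through the `a`-th point. -/
noncomputable def tm (k : ℕ) (a : ℕ) : unitInterval :=
  Set.projIcc 0 1 zero_le_one ((a : ℝ) / ((k : ℝ) - 1))

lemma QQ_open : IsOpenQuotientMap (QQ m : (Fin k → SS n) → Fin k → LensSpace m n) :=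
  IsOpenQuotientMap.piMap (f := fun _ : Fin k => (qq m : SS n → LensSpace m n))
    fun _ => qq_qcov.isOpenQuotientMap

/-- A subset of `S^k` that is a union of fibres of the projection to `L^k`. -/
def Sat (m : ℕ) (V : Set (Fin k → SS n)) : Prop := ∀ u v, QQ m u = QQ m v → u ∈ V → v ∈ V

/-- A section of `π_k` over the image of `V` in `L^k`, written as an invariant map on
`V × [0, 1]`. -/
def UpSec (m : ℕ) (V : Set (Fin k → SS n)) : Prop :=
  ∃ F : (Fin k → SS n) × unitInterval → LensSpace m n, ContinuousOn F (V ×ˢ univ) ∧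
    (∀ u ∈ V, ∀ v ∈ V, QQ m u = QQ m v → ∀ t, F (u, t) = F (v, t)) ∧
    ∀ u ∈ V, ∀ a : Fin k, F (u, tm k a) = qq m (u a)

/-- The invariant map on `V × [0, 1]` descends along the open quotient map from `V` to its image. -/
lemma hasSec_of_upSec {V : Set (Fin k → SS n)} (hV : IsOpen V) (h : UpSec m V) :
    HasSec k (QQ m '' V) := by
  obtain ⟨F, hF, hinv, hFa⟩ := h
  let π : V → (QQ m '' V : Set (Fin k → LensSpace m n)) := fun v => ⟨QQ m v.1, v.1, v.2, rfl⟩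
  have hπ : IsOpenQuotientMap π :=
    { surjective := by rintro ⟨_, v, hv, rfl⟩; exact ⟨⟨v, hv⟩, rfl⟩
      continuous := (QQ_cont.comp continuous_subtype_val).subtype_mk _
      isOpenMap := ((QQ_open.isOpenMap).comp hV.isOpenMap_subtype_val).subtype_mk _ }
  have hrep : ∀ q : (QQ m '' V : Set (Fin k → LensSpace m n)), ∃ v : V, π v = q :=
    hπ.surjective
  choose ρ hρ using hrep
  let s : (QQ m '' V : Set (Fin k → LensSpace m n)) × unitInterval → LensSpace m n :=
    fun p => F ((ρ p.1).1, p.2)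
  have hs : Continuous s := by
    have h2 := hπ.prodMap (IsOpenQuotientMap.id (X := unitInterval))
    rw [← h2.continuous_comp_iff]
    have h3 : s ∘ Prod.map π id = fun p : V × unitInterval => F (p.1.1, p.2) := by
      funext p
      exact hinv _ (ρ _).2 _ p.1.2 (congrArg Subtype.val (hρ (π p.1))) _
    rw [h3]
    exact hF.comp_continuous (by fun_prop) fun p => ⟨p.1.2, trivial⟩
  refine ⟨⟨fun q => ⟨fun t => s (q, t), by fun_prop⟩, ?_⟩, ?_⟩
  · exact ContinuousMap.continuous_of_continuous_uncurry _ hs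
  · intro q
    funext a
    change F ((ρ q).1, tm k a) = q.1 a
    rw [hFa _ (ρ q).2]
    exact congrFun (congrArg Subtype.val (hρ q)) a

instance : Nonempty (SS n) :=
  (NormedSpace.sphere_nonempty (E := EE n) (x := 0) (r := 1)).2 zero_le_one |>.to_subtype

/-- Sections over disjoint open sets can be glued. -/
lemma upSec_iUnion {ι : Type*} {V : ι → Set (Fin k → SS n)} (hV : ∀ i, IsOpen (V i))
    (hsat : ∀ i, Sat m (V i)) (hd : ∀ i j u, u ∈ V i → u ∈ V j → i = j)
    (h : ∀ i, UpSec m (V i)) : UpSec m (⋃ i, V i) := by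
  classical
  choose F hF hinv hFa using h
  let G : (Fin k → SS n) × unitInterval → LensSpace m n := fun p =>
    if h : ∃ i, p.1 ∈ V i then F h.choose p else qq m (Classical.arbitrary (SS n))
  have hG : ∀ i, ∀ p : (Fin k → SS n) × unitInterval, p.1 ∈ V i → G p = F i p := by
    intro i p hp
    have h : ∃ i, p.1 ∈ V i := ⟨i, hp⟩
    simp only [G, dif_pos h]
    rw [hd _ _ _ h.choose_spec hp]
  refine ⟨G, ?_, ?_, ?_⟩
  · rintro ⟨u, t⟩ ⟨hu, -⟩
    obtain ⟨i, hi⟩ := mem_iUnion.1 hu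
    have ho : IsOpen (V i ×ˢ (univ : Set unitInterval)) := (hV i).prod isOpen_univ
    have hm : V i ×ˢ (univ : Set unitInterval) ∈ 𝓝 (u, t) := ho.mem_nhds ⟨hi, trivial⟩
    refine ContinuousAt.continuousWithinAt ?_
    refine ((hF i).continuousAt hm).congr ?_
    filter_upwards [hm] with p hp
    exact (hG i p hp.1).symm
  · intro u hu v hv huv t
    obtain ⟨i, hi⟩ := mem_iUnion.1 hu
    have hv' := hsat i u v huv hi
    rw [hG i _ hi, hG i _ hv', hinv i u hi v hv' huv]
  · intro u hu a
    obtain ⟨i, hi⟩ := mem_iUnion.1 hu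
    rw [hG i _ hi, hFa i u hi]

/-- A cover from a stratification of `S^k` by the vanishing patterns of invariant functions: if
a strictly larger pattern has strictly larger rank, then the strata of equal rank have disjoint
neighbourhoods, so it suffices to find sections near each stratum. -/
lemma cover_of_strata {Q : Type*} [Finite Q] (Φ : Q → (Fin k → SS n) → ℝ)
    (hΦ : ∀ q, Continuous (Φ q)) (h0 : ∀ q u, 0 ≤ Φ q u)
    (hinv : ∀ q u v, QQ m u = QQ m v → Φ q u = Φ q v) (ρ : (Fin k → SS n) → ℕ) (R : ℕ)
    (hR : ∀ u, ρ u < R)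
    (hlt : ∀ u v, (∀ q, Φ q u ≠ 0 → Φ q v ≠ 0) → (∃ q, Φ q u = 0 ∧ Φ q v ≠ 0) → ρ u < ρ v)
    (hgood : ∀ u, ∃ V, IsOpen V ∧ Sat m V ∧ UpSec m V ∧
      ∀ v, (∀ q, Φ q v ≠ 0 ↔ Φ q u ≠ 0) → v ∈ V) :
    TCCoverAt (LensSpace m n) k R := by
  classical
  choose V hVo hVs hVu hV using hgood
  let P : (Fin k → SS n) → Set Q := fun u => {q | Φ q u ≠ 0}
  -- near a point of pattern `A`, the functions in `A` dominate those outside `A`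
  let N : Set Q → Set (Fin k → SS n) := fun A =>
    {u | (∀ q ∈ A, 0 < Φ q u) ∧ ∀ q ∈ A, ∀ q' ∉ A, Φ q' u < Φ q u}
  have hN : ∀ A, IsOpen (N A) := by
    intro A
    simp only [N, ofPred_and]
    refine IsOpen.inter ?_ ?_
    · simp only [ofPred_forall]
      exact isOpen_iInter_of_finite fun q => isOpen_iInter_of_finite fun _ =>
        isOpen_lt continuous_const (hΦ q)
    · simp only [ofPred_forall]
      exact isOpen_iInter_of_finite fun q => isOpen_iInter_of_finite fun _ =>
        isOpen_iInter_of_finite fun q' => isOpen_iInter_of_finite fun _ =>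
        isOpen_lt (hΦ q') (hΦ q)
  have hNs : ∀ A, Sat m (N A) := by
    intro A u v huv hu
    refine ⟨fun q hq => ?_, fun q hq q' hq' => ?_⟩
    · rw [← hinv q u v huv]; exact hu.1 q hq
    · rw [← hinv q u v huv, ← hinv q' u v huv]; exact hu.2 q hq q' hq'
  have hNm : ∀ u, u ∈ N (P u) := by
    intro u
    have hpos : ∀ q ∈ P u, 0 < Φ q u := fun q hq => lt_of_le_of_ne (h0 q u) (Ne.symm hq)
    refine ⟨hpos, fun q hq q' hq' => ?_⟩
    have : Φ q' u = 0 := by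
      by_contra h
      exact hq' h
    rw [this]
    exact hpos q hq
  -- patterns realized in rank `l`
  let Idx : ℕ → Type _ := fun l => {A : Set Q // ∃ u, P u = A ∧ ρ u = l}
  let rep : ∀ l, Idx l → (Fin k → SS n) := fun l A => A.2.choose
  have hrep : ∀ l (A : Idx l), P (rep l A) = A.1 ∧ ρ (rep l A) = l := fun l A => A.2.choose_spec
  let W : ∀ l, Idx l → Set (Fin k → SS n) := fun l A => N A.1 ∩ V (rep l A)
  have hWo : ∀ l A, IsOpen (W l A) := fun l A => (hN _).inter (hVo _)
  have hWs : ∀ l A, Sat m (W l A) := fun l A u v huv hu =>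
    ⟨hNs _ u v huv hu.1, hVs _ u v huv hu.2⟩
  have hWu : ∀ l A, UpSec m (W l A) := by
    intro l A
    obtain ⟨F, h1, h2, h3⟩ := hVu (rep l A)
    exact ⟨F, h1.mono (prod_mono_left inter_subset_right),
      fun u hu v hv => h2 u hu.2 v hv.2, fun u hu => h3 u hu.2⟩
  have hsub : ∀ l (A B : Idx l) u, u ∈ W l A → u ∈ W l B → A.1 ⊆ B.1 ∨ B.1 ⊆ A.1 := by
    intro l A B u hA hB
    by_contra! h
    obtain ⟨q, hq, hq'⟩ := not_subset.1 h.1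
    obtain ⟨p, hp, hp'⟩ := not_subset.1 h.2
    exact lt_asymm (hA.1.2 q hq p hp') (hB.1.2 p hp q hq')
  have hss : ∀ l (A B : Idx l), A.1 ⊆ B.1 → A = B := by
    intro l A B h
    by_contra hne
    have h1 : ¬ B.1 ⊆ A.1 := fun h' => hne (Subtype.ext (h.antisymm h'))
    obtain ⟨q, hq, hq'⟩ := not_subset.1 h1
    rw [← (hrep l A).1, ← (hrep l B).1] at h
    rw [← (hrep l B).1] at hq
    rw [← (hrep l A).1] at hq'
    have := hlt (rep l A) (rep l B) (fun q hq => h hq) ⟨q, by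
      by_contra h'
      exact hq' h', hq⟩
    rw [(hrep l A).2, (hrep l B).2] at this
    exact lt_irrefl _ this
  have hd : ∀ l (A B : Idx l) u, u ∈ W l A → u ∈ W l B → A = B := by
    intro l A B u hA hB
    rcases hsub l A B u hA hB with h | h
    · exact hss l A B h
    · exact (hss l B A h).symm
  refine ⟨fun l => QQ m '' ⋃ A, W l A, fun l => ?_, ?_, fun l => ?_⟩
  · exact QQ_open.isOpenMap _ (isOpen_iUnion fun A => hWo l A)
  · refine eq_univ_of_forall fun q => ?_
    obtain ⟨u, rfl⟩ := QQ_open.surjective q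
    refine mem_iUnion.2 ⟨⟨ρ u, hR u⟩, u, mem_iUnion.2 ⟨⟨P u, u, rfl, rfl⟩, hNm u, ?_⟩, rfl⟩
    refine hV _ u fun q => ?_
    have := (hrep (ρ u) ⟨P u, u, rfl, rfl⟩).1
    exact (Set.ext_iff.1 this q).symm
  · exact hasSec_of_upSec (isOpen_iUnion fun A => hWo l A)
      (upSec_iUnion (hWo l) (hWs l) (hd l) (hWu l))

end Strata

end TCLens

/-! ### Sections from deformations -/

namespace TCLens

section Paths

open Topology Filter Set

variable {m n k : ℕ} [NeZero m]

omit [NeZero m] in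
/-- Deformations of all the projections `u ↦ u j` to one common map yield a section of `π_k`: the
path runs from the common value to the `j`-th point and back around the time `j / (k - 1)`. -/
lemma upSec_of_deform (hk : 2 ≤ k) {V : Set (Fin k → SS n)}
    (α : Fin k → (Fin k → SS n) × unitInterval → LensSpace m n)
    (hc : ∀ j, ContinuousOn (α j) (V ×ˢ univ))
    (hinv : ∀ j, ∀ u ∈ V, ∀ v ∈ V, QQ m u = QQ m v → ∀ t, α j (u, t) = α j (v, t))
    (h0 : ∀ i j, ∀ u ∈ V, α i (u, 0) = α j (u, 0))
    (h1 : ∀ j, ∀ u ∈ V, α j (u, 1) = qq m (u j)) : UpSec m V := by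
  have hk1 : (0 : ℝ) < (k : ℝ) - 1 := by
    have : (2 : ℝ) ≤ k := by exact_mod_cast hk
    linarith
  -- rescaled time, in which the path has to be at the `j`-th point at the time `j`
  let s : unitInterval → ℝ := fun t => t * ((k : ℝ) - 1)
  have hsc : Continuous s := by fun_prop
  have hex : ∀ t, ∃ j : Fin k, |s t - (j : ℕ)| ≤ 1 / 2 := by
    intro t
    have hs0 : 0 ≤ s t := mul_nonneg t.2.1 hk1.le
    have hs1 : s t ≤ (k : ℝ) - 1 := mul_le_of_le_one_left hk1.le t.2.2
    have ha := Nat.floor_le (show 0 ≤ s t + 1 / 2 by linarith)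
    have hb := Nat.lt_floor_add_one (s t + 1 / 2)
    refine ⟨⟨⌊s t + 1 / 2⌋₊, ?_⟩, ?_⟩
    · rw [Nat.floor_lt (by linarith)]
      linarith
    · rw [abs_le]
      constructor <;> simp only <;> linarith
  choose J hJ using hex
  -- the deformation parameter: one at the time `j`, zero half a unit before and after
  let w : Fin k → unitInterval → unitInterval := fun j t =>
    Set.projIcc 0 1 zero_le_one (1 - 2 * |s t - (j : ℕ)|)
  have hw : ∀ j, Continuous (w j) := fun j => continuous_projIcc.comp (by fun_prop)
  let F : (Fin k → SS n) × unitInterval → LensSpace m n := fun p => α (J p.2) (p.1, w (J p.2) p.2)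
  have hw0 : ∀ (j : Fin k) t, 1 / 2 ≤ |s t - (j : ℕ)| → w j t = 0 := fun j t h =>
    Set.projIcc_of_le_left _ (by linarith)
  have hF : ∀ u ∈ V, ∀ t, ∀ j : Fin k, |s t - (j : ℕ)| ≤ 1 / 2 → F (u, t) = α j (u, w j t) := by
    intro u hu t j hj
    by_cases h : J t = j
    · simp only [F, h]
    · have hJt := hJ t
      have hne : ((J t : ℕ) : ℤ) ≠ ((j : ℕ) : ℤ) := fun h' => h (Fin.ext (by exact_mod_cast h'))
      have h1 : (1 : ℝ) ≤ |((J t : ℕ) : ℝ) - (j : ℕ)| := by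
        have h2 : (1 : ℤ) ≤ |((J t : ℕ) : ℤ) - ((j : ℕ) : ℤ)| :=
          Int.one_le_abs (sub_ne_zero.2 hne)
        exact_mod_cast h2
      have h2 : |((J t : ℕ) : ℝ) - (j : ℕ)| ≤ |s t - (J t : ℕ)| + |s t - (j : ℕ)| := by
        have := abs_sub (s t - (j : ℕ)) (s t - (J t : ℕ))
        rw [show s t - (j : ℕ) - (s t - (J t : ℕ)) = ((J t : ℕ) : ℝ) - (j : ℕ) by ring] at this
        linarith
      simp only [F]
      rw [hw0 _ _ (by linarith), hw0 _ _ (by linarith)]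
      exact h0 _ _ u hu
  refine ⟨F, ?_, ?_, ?_⟩
  · have hcl : ∀ j : Fin k, IsClosed {p : (Fin k → SS n) × unitInterval |
        |s p.2 - (j : ℕ)| ≤ 1 / 2} := fun j => isClosed_le (by fun_prop) continuous_const
    rw [continuousOn_iff_continuous_domRestrict]
    refine LocallyFinite.continuous (f := fun j : Fin k => {p : (V ×ˢ univ : Set ((Fin k → SS n) ×
      unitInterval)) | |s p.1.2 - (j : ℕ)| ≤ 1 / 2}) (locallyFinite_of_finite _) ?_ ?_ ?_
    · exact eq_univ_of_forall fun p => mem_iUnion.2 ⟨J p.1.2, hJ _⟩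
    · exact fun j => (hcl j).preimage continuous_subtype_val
    · intro j
      have h2 : Continuous fun p : (V ×ˢ univ : Set ((Fin k → SS n) × unitInterval)) =>
          α j (p.1.1, w j p.1.2) :=
        (hc j).comp_continuous (by have := hw j; fun_prop) fun p => ⟨p.2.1, trivial⟩
      refine h2.continuousOn.congr fun p hp => ?_
      exact hF _ p.2.1 _ j hp
  · intro u hu v hv huv t
    exact hinv _ u hu v hv huv _
  · intro u hu a
    have ha : ((a : ℕ) : ℝ) ≤ (k : ℝ) - 1 := by
      have : ((a : ℕ) : ℝ) + 1 ≤ k := by exact_mod_cast a.2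
      linarith
    have hs : s (tm k a) = (a : ℕ) := by
      simp only [s, tm]
      rw [Set.projIcc_of_mem zero_le_one
        (show (a : ℝ) / ((k : ℝ) - 1) ∈ Set.Icc (0 : ℝ) 1 from
          ⟨by positivity, (div_le_one hk1).2 ha⟩)]
      simp only
      field_simp
    rw [hF u hu _ a (by rw [hs]; simp), ← h1 a u hu]
    congr 2
    simp only [w, hs]
    exact Set.projIcc_of_right_le _ (by simp)

end Paths

end TCLens

/-! ### Sections near a stratum -/

namespace TCLens

section Local

open Topology Filter Set Complex

variable {m n k : ℕ} [NeZero m]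

/-- The plane slit along the negative real half line (`b = true`) or along the positive one. -/
def slit (b : Bool) : Set ℂ := {p | (bif b then p else -p) ∈ slitPlane}

lemma slit_open (b : Bool) : IsOpen (slit b) := by
  cases b
  · exact isOpen_slitPlane.preimage continuous_neg
  · exact isOpen_slitPlane

/-- A continuous choice of an `m`-th root of the inverse phase of `p`. -/
noncomputable def theta (m : ℕ) (b : Bool) (p : ℂ) : ℂ :=
  exp ((-(bif b then arg p else arg (-p) + Real.pi) / m : ℝ) * Complex.I)

lemma theta_cont (b : Bool) : ContinuousOn (theta m b) (slit b) := by
  intro p hp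
  refine ContinuousAt.continuousWithinAt ?_
  have h : ContinuousAt (fun p : ℂ => bif b then arg p else arg (-p) + Real.pi) p := by
    cases b
    · have h1 : ContinuousAt (fun p : ℂ => arg (-p)) p :=
        (continuousAt_arg (x := -p) hp).comp continuous_neg.continuousAt
      exact h1.add continuousAt_const
    · exact continuousAt_arg hp
  unfold theta
  have h2 : ContinuousAt (fun p : ℂ => (-(bif b then arg p else arg (-p) + Real.pi) / m : ℝ)) p :=
    (h.neg).div_const _
  exact continuous_exp.continuousAt.comp
    ((continuous_ofReal.continuousAt.comp h2).mul continuousAt_const)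

omit [NeZero m] in
lemma theta_norm (b : Bool) (p : ℂ) : ‖theta m b p‖ = 1 := norm_exp_ofReal_mul_I _

lemma theta_pow (b : Bool) (p : ℂ) : theta m b p ^ m * p = ‖p‖ := by
  have hm : (m : ℂ) ≠ 0 := by exact_mod_cast NeZero.ne m
  rw [theta, ← exp_nat_mul]
  cases b
  · have h1 : (m : ℂ) * ((-(bif false then arg p else arg (-p) + Real.pi) / m : ℝ) * Complex.I)
        = -(arg (-p) * Complex.I) + -(Real.pi * Complex.I) := by
      simp only [cond_false]
      push_cast
      field_simp
      ring
    have h2 := norm_mul_exp_arg_mul_I (-p)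
    rw [norm_neg] at h2
    rw [h1, Complex.exp_add, exp_neg (Real.pi * Complex.I), exp_pi_mul_I]
    calc exp (-(arg (-p) * Complex.I)) * (-1)⁻¹ * p = exp (-(arg (-p) * Complex.I)) * (-p) := by ring
      _ = exp (-(arg (-p) * Complex.I)) * (‖p‖ * exp (arg (-p) * Complex.I)) := by rw [h2]
      _ = ‖p‖ * (exp (-(arg (-p) * Complex.I)) * exp (arg (-p) * Complex.I)) := by ring
      _ = ‖p‖ := by rw [← Complex.exp_add]; simp
  · have h1 : (m : ℂ) * ((-(bif true then arg p else arg (-p) + Real.pi) / m : ℝ) * Complex.I)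
        = -(arg p * Complex.I) := by
      simp only [cond_true]
      push_cast
      field_simp
    rw [h1]
    calc exp (-(arg p * Complex.I)) * p = exp (-(arg p * Complex.I)) * (‖p‖ * exp (arg p * Complex.I)) := by
          rw [norm_mul_exp_arg_mul_I]
      _ = ‖p‖ * (exp (-(arg p * Complex.I)) * exp (arg p * Complex.I)) := by ring
      _ = ‖p‖ := by rw [← Complex.exp_add]; simp

omit [NeZero m] in
/-- Segments from a positive real number to `theta m b p` avoid the origin; this needs `2 ≤ m`. -/
lemma theta_slit (hm : 2 ≤ m) (b : Bool) {p : ℂ} (hp : p ∈ slit b) :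
    0 < (theta m b p).re ∨ (theta m b p).im ≠ 0 := by
  have hm' : (2 : ℝ) ≤ m := by exact_mod_cast hm
  have hpi := Real.pi_pos
  set x : ℝ := -(bif b then arg p else arg (-p) + Real.pi) / m with hx
  have hab : -Real.pi < x ∧ x < Real.pi := by
    rw [hx, lt_div_iff₀ (by linarith), div_lt_iff₀ (by linarith)]
    cases b
    · have h1 : arg (-p) < Real.pi :=
        lt_of_le_of_ne (arg_le_pi _) (mem_slitPlane_iff_arg.1 hp).1
      have h2 := neg_pi_lt_arg (-p)
      simp only [cond_false]
      constructor <;> nlinarith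
    · have h1 : arg p < Real.pi :=
        lt_of_le_of_ne (arg_le_pi _) (mem_slitPlane_iff_arg.1 hp).1
      have h2 := neg_pi_lt_arg p
      simp only [cond_true]
      constructor <;> nlinarith
  have h1 : (theta m b p).re = Real.cos x := exp_ofReal_mul_I_re x
  have h2 : (theta m b p).im = Real.sin x := exp_ofReal_mul_I_im x
  by_cases h : Real.sin x = 0
  · left
    rw [Real.sin_eq_zero_iff_of_lt_of_lt hab.1 hab.2] at h
    rw [h1, h]
    simp
  · right
    rwa [h2]

/-- Radial projection to the sphere, with junk value at the origin. -/
noncomputable def nrm (v : EE n) : SS n :=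
  if h : v = 0 then Classical.arbitrary _ else
    ⟨((‖v‖⁻¹ : ℝ) : ℂ) • v, by
      have : ‖v‖ ≠ 0 := norm_ne_zero_iff.2 h
      simp [norm_smul, this]⟩

lemma nrm_coe {v : EE n} (h : v ≠ 0) : (nrm v : EE n) = ((‖v‖⁻¹ : ℝ) : ℂ) • v := by
  rw [nrm, dif_neg h]

lemma nrm_cont : ContinuousOn (nrm : EE n → SS n) {v | v ≠ 0} := by
  rw [continuousOn_iff_continuous_domRestrict, continuous_induced_rng]
  have h : Continuous fun v : {v : EE n | v ≠ 0} => ((‖(v : EE n)‖⁻¹ : ℝ) : ℂ) • (v : EE n) := by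
    refine Continuous.smul (continuous_ofReal.comp (Continuous.inv₀ (by fun_prop) ?_)) (by fun_prop)
    exact fun v => norm_ne_zero_iff.2 v.2
  convert h using 1
  funext v
  exact nrm_coe v.2

lemma nrm_self (x : SS n) : nrm (x : EE n) = x := by
  have h : (x : EE n) ≠ 0 := by
    intro h
    have := SS_norm x
    simp [h] at this
  refine Subtype.ext ?_
  rw [nrm_coe h, SS_norm]
  simp

lemma qq_nrm {c : ℂ} (hc : c ^ m = 1) {v : EE n} (hv : v ≠ 0) :
    qq m (nrm (c • v)) = qq m (nrm v) := by
  obtain ⟨t, rfl⟩ := exists_toCircle (m := m) hc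
  refine qq_eq.2 ⟨t, Subtype.ext ?_⟩
  have h2 : ((ZMod.toCircle t : Circle) : ℂ) • v ≠ 0 := smul_ne_zero (Circle.coe_ne_zero _) hv
  rw [vadd_coe, nrm_coe hv, nrm_coe h2, norm_smul, Circle.norm_coe, one_mul, smul_comm]

/-- Points of `S^k` over the same point of `L^k` differ by roots of unity. -/
lemma QQ_eq {u v : Fin k → SS n} (h : QQ m u = QQ m v) :
    ∃ c : Fin k → ℂ, (∀ j, c j ^ m = 1) ∧ ∀ j, (u j : EE n) = c j • (v j : EE n) := by
  choose t ht using fun j => qq_eq.1 (congrFun h j)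
  exact ⟨fun j => (ZMod.toCircle (t j) : Circle), fun j => toCircle_pow _, fun j => by
    rw [← ht j, vadd_coe]⟩

/-- The ratio of the `m`-th powers of chosen coordinates in the factors `j` and `i`. -/
noncomputable def ratio (m : ℕ) (c : Fin k → Fin (n + 1)) (i j : Fin k) (u : Fin k → SS n) : ℂ :=
  (u j : EE n) (c j) ^ m / (u i : EE n) (c i) ^ m

/-- The set where the chosen coordinates do not vanish, and where the ratios of their `m`-th powers
avoid a half line. -/
def Reg (m : ℕ) (c : Fin k → Fin (n + 1)) (b : Fin k → Bool) (i : Fin k) :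
    Set (Fin k → SS n) :=
  {u | (∀ j, (u j : EE n) (c j) ≠ 0) ∧ ∀ j, ratio m c i j u ∈ slit (b j)}

variable {c : Fin k → Fin (n + 1)} {b : Fin k → Bool} {i : Fin k}

lemma coord_cont (j : Fin k) (l : Fin (n + 1)) :
    Continuous fun u : Fin k → SS n => (u j : EE n) l := by fun_prop

omit [NeZero m] in
lemma ratio_cont (j : Fin k) :
    ContinuousOn (ratio (n := n) m c i j) {u | ∀ j, (u j : EE n) (c j) ≠ 0} := by
  refine ContinuousOn.div ?_ ?_ fun u hu => pow_ne_zero _ (hu i)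
  · exact ((coord_cont _ _).pow m).continuousOn
  · exact ((coord_cont _ _).pow m).continuousOn

omit [NeZero m] in
lemma reg_open : IsOpen (Reg (n := n) m c b i) := by
  have h1 : IsOpen {u : Fin k → SS n | ∀ j, (u j : EE n) (c j) ≠ 0} := by
    simp only [ofPred_forall]
    exact isOpen_iInter_of_finite fun j => isOpen_ne_fun (coord_cont _ _) continuous_const
  have h2 : Reg (n := n) m c b i = ⋂ j, ({u : Fin k → SS n | ∀ j, (u j : EE n) (c j) ≠ 0} ∩
      ratio m c i j ⁻¹' slit (b j)) := by
    have : Nonempty (Fin k) := ⟨i⟩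
    ext u
    simp [Reg, forall_and]
  rw [h2]
  exact isOpen_iInter_of_finite fun j => (ratio_cont j).isOpen_inter_preimage h1 (slit_open _)

lemma ratio_inv {u v : Fin k → SS n} (h : QQ m u = QQ m v) (j : Fin k) :
    ratio m c i j u = ratio m c i j v := by
  obtain ⟨d, hd, hu⟩ := QQ_eq h
  simp only [ratio, hu, PiLp.smul_apply, smul_eq_mul, mul_pow, hd, one_mul]

lemma reg_sat : Sat m (Reg (n := n) m c b i) := by
  intro u v h hu
  refine ⟨fun j hj => hu.1 j ?_, fun j => ratio_inv h j ▸ hu.2 j⟩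
  obtain ⟨d, hd, hu⟩ := QQ_eq h
  rw [hu, PiLp.smul_apply, hj, smul_zero]

/-- The unit complex number whose `m`-th power is the phase of the `m`-th power of the chosen
coordinate in the factor `i`, and which is turned equivariantly with the factor `j`. -/
noncomputable def aim (m : ℕ) (c : Fin k → Fin (n + 1)) (b : Fin k → Bool) (i j : Fin k)
    (u : Fin k → SS n) : ℂ :=
  (u j : EE n) (c j) / ‖(u j : EE n) (c j)‖ * theta m (b j) (ratio m c i j u)

lemma aim_pow {u : Fin k → SS n} (hu : u ∈ Reg m c b i) (j : Fin k) :
    aim m c b i j u ^ m = (u i : EE n) (c i) ^ m / ‖(u i : EE n) (c i)‖ ^ m := by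
  have h := theta_pow (m := m) (b j) (ratio m c i j u)
  have hi := hu.1 i
  have hj := hu.1 j
  have hni : (‖(u i : EE n) (c i)‖ : ℂ) ≠ 0 := by simpa using hi
  have hnj : (‖(u j : EE n) (c j)‖ : ℂ) ≠ 0 := by simpa using hj
  rw [aim, mul_pow, div_pow]
  rw [ratio, norm_div, norm_pow, norm_pow] at h
  push_cast at h
  rw [ratio]
  field_simp at h ⊢
  linear_combination h

omit [NeZero m] in
lemma aim_norm {u : Fin k → SS n} (hu : u ∈ Reg m c b i) (j : Fin k) :
    ‖aim m c b i j u‖ = 1 := by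
  have hj := hu.1 j
  rw [aim, norm_mul, theta_norm, norm_div]
  simp [hj]

/-- The segment from the target in the zeroth coordinate line to the point `u j`. -/
noncomputable def seg (m : ℕ) (c : Fin k → Fin (n + 1)) (b : Fin k → Bool) (i j : Fin k)
    (p : (Fin k → SS n) × unitInterval) : EE n :=
  ((p.2 : ℝ) : ℂ) • (p.1 j : EE n) +
    ((1 - (p.2 : ℝ) : ℝ) : ℂ) • (aim m c b i j p.1 • (EuclideanSpace.single 0 1 : EE n))

omit [NeZero m] in
/-- If the chosen coordinate is not the zeroth one, it keeps the segment away from the origin;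
otherwise `theta_slit` does. -/
lemma seg_ne (hm : 2 ≤ m) (j : Fin k) {u : Fin k → SS n} (hu : u ∈ Reg m c b i)
    (t : unitInterval) : seg m c b i j (u, t) ≠ 0 := by
  intro h
  have ha : aim m c b i j u ≠ 0 := by
    intro h0
    have := aim_norm hu j
    simp [h0] at this
  by_cases ht : (t : ℝ) = 0
  · have h1 := congrArg (fun v : EE n => v 0) h
    simp [seg, ht, ha] at h1
  · have h1 := congrArg (fun v : EE n => v (c j)) h
    have hj := hu.1 j
    by_cases hc : c j = 0
    · simp only [seg, hc, PiLp.add_apply, PiLp.smul_apply, PiLp.single_apply,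
        smul_eq_mul, if_true, mul_one, PiLp.zero_apply] at h1
      set x := (u j : EE n) 0 with hx
      rw [hc, ← hx] at hj
      have hnx : 0 < ‖x‖ := norm_pos_iff.2 hj
      have hnj : (‖x‖ : ℂ) ≠ 0 := by exact_mod_cast hnx.ne'
      set θ := theta m (b j) (ratio m c i j u) with hθ
      have h2 : ((t * ‖x‖ : ℝ) : ℂ) + ((1 - t : ℝ) : ℂ) * θ = 0 := by
        rw [aim, hc, ← hx, ← hθ] at h1
        have h3 : x / ‖x‖ * (((t * ‖x‖ : ℝ) : ℂ) + ((1 - t : ℝ) : ℂ) * θ) = 0 := by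
          rw [← h1]
          push_cast
          field_simp
        exact (mul_eq_zero.1 h3).resolve_left (div_ne_zero hj hnj)
      have hre := congrArg Complex.re h2
      have him := congrArg Complex.im h2
      simp only [add_re, add_im, ofReal_re, ofReal_im, mul_re, mul_im, zero_mul, sub_zero,
        add_zero, zero_add, zero_re, zero_im] at hre him
      have ht0 : 0 < (t : ℝ) := lt_of_le_of_ne t.2.1 (Ne.symm ht)
      have htx : 0 < (t : ℝ) * ‖x‖ := mul_pos ht0 hnx
      have ht1 : 0 ≤ 1 - (t : ℝ) := by linarith [t.2.2]
      rcases theta_slit hm (b j) (hu.2 j) with h3 | h3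
      · have := mul_nonneg ht1 h3.le
        linarith
      · have h4 : 1 - (t : ℝ) = 0 := (mul_eq_zero.1 him).resolve_right h3
        rw [h4] at hre
        linarith
    · simp [seg, hc, hj, ht] at h1

/-- Normalized segments deform the points `u j` to points of the zeroth coordinate circle whose `m`-th
powers agree, hence to a common point of the lens space. -/
theorem reg_upSec (hk : 2 ≤ k) (hm : 2 ≤ m) : UpSec m (Reg (n := n) m c b i) := by
  refine upSec_of_deform hk (fun j p => qq m (nrm (seg m c b i j p))) ?_ ?_ ?_ ?_
  · intro j
    refine qq_cont.comp_continuousOn (nrm_cont.comp ?_ fun p hp => seg_ne hm j hp.1 p.2)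
    have haim : ContinuousOn (aim (n := n) m c b i j) (Reg m c b i) := by
      refine ContinuousOn.mul (ContinuousOn.div ?_ ?_ ?_) ?_
      · exact (coord_cont _ _).continuousOn
      · exact (continuous_ofReal.comp (coord_cont _ _).norm).continuousOn
      · intro u hu
        simpa using hu.1 j
      · exact (theta_cont (b j)).comp ((ratio_cont j).mono fun u hu => hu.1) fun u hu => hu.2 j
    have h1 : Continuous fun p : (Fin k → SS n) × unitInterval =>
        ((p.2 : ℝ) : ℂ) • (p.1 j : EE n) := by fun_prop
    have h2 : Continuous fun p : (Fin k → SS n) × unitInterval =>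
        ((1 - (p.2 : ℝ) : ℝ) : ℂ) := by fun_prop
    have h3 : ContinuousOn (fun p : (Fin k → SS n) × unitInterval => aim m c b i j p.1)
        (Reg m c b i ×ˢ univ) := haim.comp continuousOn_fst fun p hp => hp.1
    exact h1.continuousOn.add (h2.continuousOn.smul (h3.smul continuousOn_const))
  · intro j u hu v hv h t
    obtain ⟨d, hd, hdu⟩ := QQ_eq h
    have hseg : seg m c b i j (u, t) = d j • seg m c b i j (v, t) := by
      have haim : aim m c b i j u = d j * aim m c b i j v := by
        have hdn : ‖d j‖ = 1 := Complex.norm_eq_one_of_pow_eq_one (hd j) (NeZero.ne m)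
        rw [aim, aim, ratio_inv h, hdu, PiLp.smul_apply, smul_eq_mul, norm_mul, hdn, one_mul]
        ring
      simp only [seg, haim, hdu, smul_add]
      rw [mul_smul, smul_comm (d j) (((t : ℝ) : ℂ)), smul_comm (d j) (((1 - (t : ℝ) : ℝ) : ℂ))]
    simp only [hseg]
    exact qq_nrm (hd j) (seg_ne hm j hv t)
  · intro j l u hu
    have hs : ∀ j, seg m c b i j (u, 0) = aim m c b i j u • (EuclideanSpace.single 0 1 : EE n) := by
      intro j; simp [seg]
    have ha : aim m c b i l u ≠ 0 := by
      intro h0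
      have := aim_norm hu l
      simp [h0] at this
    have h2 : seg m c b i j (u, 0) = (aim m c b i j u / aim m c b i l u) • seg m c b i l (u, 0) := by
      rw [hs, hs, smul_smul, div_mul_cancel₀ _ ha]
    simp only [h2]
    refine qq_nrm ?_ (seg_ne hm l hu 0)
    rw [div_pow, aim_pow hu, aim_pow hu]
    refine div_self (div_ne_zero (pow_ne_zero _ (hu.1 i)) (pow_ne_zero _ ?_))
    simpa using hu.1 i
  · intro j u hu
    have : seg m c b i j (u, 1) = u j := by simp [seg]
    simp only [this, nrm_self]

end Local

end TCLens

/-! ### The rank stratification and the upper bound -/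

namespace TCLens

section Upper

open Topology Filter Set

variable {m n k : ℕ} [NeZero m]

/-- All coordinates of a point of `S^k`. -/
def cz (u : Fin k → SS n) (e : Fin k × Fin (n + 1)) : ℂ := (u e.1 : EE n) e.2

/-- Invariant functions on `S^k`: the first kind detects the vanishing of coordinates, the second
kind compares the phases of the `m`-th powers of two coordinates. -/
noncomputable def phi (m : ℕ) (q : (Fin k × Fin (n + 1)) ⊕ (Fin k × Fin (n + 1)) ×
    (Fin k × Fin (n + 1))) (u : Fin k → SS n) : ℝ :=
  match q with
  | .inl e => ‖cz u e‖
  | .inr (e, f) => ‖cz u e ^ m * (‖cz u f‖ : ℂ) ^ m - cz u f ^ m * (‖cz u e‖ : ℂ) ^ m‖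

lemma cz_cont (e : Fin k × Fin (n + 1)) : Continuous fun u : Fin k → SS n => cz u e :=
  coord_cont e.1 e.2

lemma phi_cont (q) : Continuous (phi (n := n) (k := k) m q) := by
  have hc := cz_cont (n := n) (k := k)
  rcases q with e | ⟨e, f⟩
  · exact (hc e).norm
  · have h1 := hc e
    have h2 := hc f
    have h3 : Continuous fun u : Fin k → SS n => (‖cz u e‖ : ℂ) :=
      Complex.continuous_ofReal.comp h1.norm
    have h4 : Continuous fun u : Fin k → SS n => (‖cz u f‖ : ℂ) :=
      Complex.continuous_ofReal.comp h2.norm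
    exact (((h1.pow m).mul (h4.pow m)).sub ((h2.pow m).mul (h3.pow m))).norm

lemma phi_inv (q) (u v : Fin k → SS n) (h : QQ m u = QQ m v) : phi m q u = phi m q v := by
  obtain ⟨d, hd, hu⟩ := QQ_eq h
  have hn : ∀ e, ‖cz u e‖ = ‖cz v e‖ := fun e => by
    rw [cz, hu, PiLp.smul_apply, smul_eq_mul, norm_mul,
      Complex.norm_eq_one_of_pow_eq_one (hd _) (NeZero.ne m), one_mul, cz]
  have hp : ∀ e, cz u e ^ m = cz v e ^ m := fun e => by
    rw [cz, hu, PiLp.smul_apply, smul_eq_mul, mul_pow, hd, one_mul, cz]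
  rcases q with e | ⟨e, f⟩
  · exact hn e
  · simp only [phi, hn, hp]

open Classical in
/-- The coordinates that do not vanish. -/
noncomputable def supp (u : Fin k → SS n) : Finset (Fin k × Fin (n + 1)) :=
  Finset.univ.filter fun e => cz u e ≠ 0

lemma mem_supp {u : Fin k → SS n} {e} : e ∈ supp u ↔ cz u e ≠ 0 := by simp [supp]

/-- The phase of the `m`-th power of a coordinate. -/
noncomputable def ph (m : ℕ) (u : Fin k → SS n) (e : Fin k × Fin (n + 1)) : ℂ :=
  cz u e ^ m / (‖cz u e‖ : ℂ) ^ m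

omit [NeZero m] in
lemma phi_inr {u : Fin k → SS n} {e f} (he : e ∈ supp u) (hf : f ∈ supp u) :
    phi m (.inr (e, f)) u = 0 ↔ ph m u e = ph m u f := by
  rw [mem_supp] at he hf
  have h1 : (‖cz u e‖ : ℂ) ^ m ≠ 0 := pow_ne_zero _ (by simpa using he)
  have h2 : (‖cz u f‖ : ℂ) ^ m ≠ 0 := pow_ne_zero _ (by simpa using hf)
  rw [ph, ph, div_eq_div_iff h1 h2, phi, norm_eq_zero, sub_eq_zero]

lemma phi_inr_ne {u : Fin k → SS n} {e f} (h : phi m (.inr (e, f)) u ≠ 0) :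
    e ∈ supp u ∧ f ∈ supp u := by
  rw [mem_supp, mem_supp]
  constructor <;> intro h0 <;> refine h ?_ <;> simp [phi, h0, NeZero.ne m]

open Classical in
/-- The number of nonvanishing coordinates plus the number of phases of their `m`-th powers. -/
noncomputable def rank (m : ℕ) (u : Fin k → SS n) : ℕ :=
  (supp u).card + ((supp u).image (ph m u)).card

lemma exists_coord (u : Fin k → SS n) (j : Fin k) : ∃ l, (u j : EE n) l ≠ 0 := by
  by_contra! h
  have h1 : (u j : EE n) = 0 := by ext l; simpa using h l
  have := SS_norm (u j)
  simp [h1] at this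

omit [NeZero m] in
/-- Each factor has a nonvanishing coordinate, and there is at least one phase. -/
lemma rank_ge (hk : 2 ≤ k) (u : Fin k → SS n) : k + 1 ≤ rank m u := by
  classical
  choose l hl using exists_coord u
  have h1 : (Finset.univ.image fun j : Fin k => (j, l j)) ⊆ supp u := by
    intro e he
    obtain ⟨j, -, rfl⟩ := Finset.mem_image.1 he
    exact mem_supp.2 (hl j)
  have h2 := Finset.card_le_card h1
  rw [Finset.card_image_of_injective _ fun a b h => (Prod.ext_iff.1 h).1, Finset.card_univ,
    Fintype.card_fin] at h2
  have h3 : ((supp u).image (ph m u)).Nonempty :=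
    ⟨_, Finset.mem_image_of_mem _ (h1 (Finset.mem_image_of_mem _
      (Finset.mem_univ (⟨0, by omega⟩ : Fin k))))⟩
  have := h3.card_pos
  rw [rank]
  convert! Nat.add_le_add h2 this

omit [NeZero m] in
lemma rank_le (u : Fin k → SS n) : rank m u ≤ 2 * (k * (n + 1)) := by
  classical
  have h1 : (supp u).card ≤ k * (n + 1) := by
    refine (Finset.card_le_univ _).trans ?_
    simp
  have h2 : ((supp u).image (ph m u)).card ≤ (supp u).card := Finset.card_image_le
  rw [rank]
  convert! (Nat.add_le_add h1 (h2.trans h1)) using 1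
  ring

/-- If the fibres of `g` refine those of `f`, the image of `f` is not larger. -/
lemma card_image_le_of_refine {α β : Type*} [DecidableEq β] {s : Finset α} {f g : α → β}
    (h : ∀ a ∈ s, ∀ b ∈ s, g a = g b → f a = f b) : (s.image f).card ≤ (s.image g).card := by
  classical
  rcases s.eq_empty_or_nonempty with rfl | ⟨a0, ha0⟩
  · simp
  have : Nonempty α := ⟨a0⟩
  have : s.image f ⊆ (s.image g).image (f ∘ Function.invFunOn g s) := by
    intro y hy
    obtain ⟨a, ha, rfl⟩ := Finset.mem_image.1 hy
    refine Finset.mem_image.2 ⟨g a, Finset.mem_image_of_mem _ ha, ?_⟩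
    have hex : ∃ b ∈ (s : Set α), g b = g a := ⟨a, ha, rfl⟩
    exact h _ (Function.invFunOn_mem hex) _ ha (Function.invFunOn_eq hex)
  exact (Finset.card_le_card this).trans Finset.card_image_le

/-- The strict version of `card_image_le_of_refine`: some two points are separated by `g` but not by
`f`. -/
lemma card_image_lt_of_refine {α β : Type*} [DecidableEq β] {s : Finset α} {f g : α → β}
    (h : ∀ a ∈ s, ∀ b ∈ s, g a = g b → f a = f b) {a b : α} (ha : a ∈ s) (hb : b ∈ s)
    (hf : f a = f b) (hg : g a ≠ g b) : (s.image f).card < (s.image g).card := by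
  classical
  -- removing the fibre of `g` through `b` does not change the image of `f`
  let s' := s.filter fun x => g x ≠ g b
  have h1 : s.image f ⊆ s'.image f := by
    intro y hy
    obtain ⟨x, hx, rfl⟩ := Finset.mem_image.1 hy
    by_cases hxb : g x = g b
    · refine Finset.mem_image.2 ⟨a, Finset.mem_filter.2 ⟨ha, hg⟩, ?_⟩
      rw [hf, h x hx b hb hxb]
    · exact Finset.mem_image_of_mem _ (Finset.mem_filter.2 ⟨hx, hxb⟩)
  have h2 : s'.image g ⊂ s.image g := by
    refine ⟨Finset.image_subset_image (Finset.filter_subset _ _), fun hsub => ?_⟩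
    obtain ⟨x, hx, hxb⟩ := Finset.mem_image.1 (hsub (Finset.mem_image_of_mem g hb))
    exact (Finset.mem_filter.1 hx).2 hxb
  have h3 : (s'.image f).card ≤ (s'.image g).card := card_image_le_of_refine
    fun x hx y hy => h x (Finset.mem_filter.1 hx).1 y (Finset.mem_filter.1 hy).1
  exact (Finset.card_le_card h1).trans_lt (h3.trans_lt (Finset.card_lt_card h2))

/-- The rank is strictly monotone in the pattern of nonvanishing invariant functions. -/
lemma rank_lt {u v : Fin k → SS n} (h : ∀ q, phi m q u ≠ 0 → phi m q v ≠ 0)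
    (hne : ∃ q, phi m q u = 0 ∧ phi m q v ≠ 0) : rank m u < rank m v := by
  classical
  have hphi : ∀ (w : Fin k → SS n) e, phi m (.inl e) w ≠ 0 ↔ e ∈ supp w := by
    intro w e
    rw [mem_supp, phi, norm_ne_zero_iff]
  have hsub : supp u ⊆ supp v := fun e he => (hphi v e).1 (h _ ((hphi u e).2 he))
  have href : ∀ a ∈ supp u, ∀ b ∈ supp u, ph m v a = ph m v b → ph m u a = ph m u b := by
    intro a ha b hb hab
    rw [← phi_inr ha hb]
    by_contra h0
    exact h _ h0 ((phi_inr (hsub ha) (hsub hb)).2 hab)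
  have h1 : ((supp u).image (ph m u)).card ≤ ((supp u).image (ph m v)).card :=
    card_image_le_of_refine href
  have h2 : ((supp u).image (ph m v)).card ≤ ((supp v).image (ph m v)).card :=
    Finset.card_le_card (Finset.image_subset_image hsub)
  have hmain : (supp u).card + ((supp u).image (ph m u)).card
      < (supp v).card + ((supp v).image (ph m v)).card := by
    by_cases hs : supp u = supp v
    · obtain ⟨q, hq0, hq⟩ := hne
      rcases q with e | ⟨e, f⟩
      · have := (hphi v e).1 hq
        rw [← hs, ← hphi] at this
        exact absurd hq0 this
      · obtain ⟨he, hf⟩ := phi_inr_ne hq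
        have h4 : ¬ ph m v e = ph m v f := fun h' => hq ((phi_inr he hf).2 h')
        rw [← hs] at he hf
        have h3 := card_image_lt_of_refine href he hf ((phi_inr he hf).1 hq0) h4
        rw [← hs]
        omega
    · have := Finset.card_lt_card (Finset.ssubset_iff_subset_ne.2 ⟨hsub, hs⟩)
      omega
  rw [rank, rank]
  convert! hmain

/-- The upper bound: the ranks take at most `k (2 n + 1)` values. -/
theorem cover_upper (hk : 2 ≤ k) (hm : 2 ≤ m) :
    TCCoverAt (LensSpace m n) k (k * (2 * n + 1)) := by
  classical
  refine cover_of_strata (phi m) phi_cont (fun q u => ?_) phi_inv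
    (fun u => rank m u - (k + 1)) _ (fun u => ?_) (fun u v h hne => ?_) (fun u => ?_)
  · rcases q with e | ⟨e, f⟩ <;> exact norm_nonneg _
  · have h1 := rank_le (m := m) u
    have h2 := rank_ge (m := m) hk u
    have h3 : k * (2 * n + 1) + k = 2 * (k * (n + 1)) := by ring
    omega
  · have h1 := rank_lt h hne
    have h2 := rank_ge (m := m) hk u
    omega
  · choose c hc using exists_coord u
    let i : Fin k := ⟨0, by omega⟩
    let b : Fin k → Bool := fun j => decide (phi m (.inr ((j, c j), (i, c i))) u = 0)
    refine ⟨Reg m c b i, reg_open, reg_sat, reg_upSec hk hm, fun v hv => ?_⟩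
    have hc' : ∀ j, (v j : EE n) (c j) ≠ 0 := fun j => by
      have h1 := (hv (.inl (j, c j))).2 (norm_ne_zero_iff.2 (hc j))
      exact norm_ne_zero_iff.1 h1
    refine ⟨hc', fun j => ?_⟩
    have hj := hc' j
    have hi := hc' i
    have hpair : phi m (.inr ((j, c j), (i, c i))) v = 0 ↔
        (v j : EE n) (c j) ^ m * (‖(v i : EE n) (c i)‖ : ℂ) ^ m
          = (v i : EE n) (c i) ^ m * (‖(v j : EE n) (c j)‖ : ℂ) ^ m := by
      rw [phi, norm_eq_zero, sub_eq_zero]; rfl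
    have hiff : phi m (.inr ((j, c j), (i, c i))) v = 0 ↔
        phi m (.inr ((j, c j), (i, c i))) u = 0 := not_iff_not.1 (hv _)
    have hni : (‖(v i : EE n) (c i)‖ : ℂ) ≠ 0 := by simpa using hi
    have hnj : (‖(v j : EE n) (c j)‖ : ℂ) ≠ 0 := by simpa using hj
    by_cases h0 : phi m (.inr ((j, c j), (i, c i))) u = 0
    · have hb : b j = true := by simp [b, h0]
      rw [slit, hb, mem_ofPred_eq, cond_true]
      have h1 := hpair.1 (hiff.2 h0)
      have h2 : ratio m c i j v = ((‖(v j : EE n) (c j)‖ ^ m / ‖(v i : EE n) (c i)‖ ^ m : ℝ) : ℂ) := by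
        rw [ratio]
        push_cast
        rw [div_eq_div_iff (pow_ne_zero _ hi) (pow_ne_zero _ hni), h1, mul_comm]
      rw [h2, Complex.ofReal_mem_slitPlane]
      exact div_pos (pow_pos (norm_pos_iff.2 hj) _) (pow_pos (norm_pos_iff.2 hi) _)
    · have hb : b j = false := by simp [b, h0]
      rw [slit, hb, mem_ofPred_eq, cond_false]
      by_contra hsl
      refine h0 (hiff.1 (hpair.2 ?_))
      rw [Complex.mem_slitPlane_iff] at hsl
      push Not at hsl
      obtain ⟨hre, him⟩ := hsl
      rw [Complex.neg_re] at hre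
      rw [Complex.neg_im, neg_eq_zero] at him
      -- the ratio is a nonnegative real number, hence equal to its norm
      have h2 : ratio m c i j v = (‖ratio m c i j v‖ : ℂ) := by
        have h3 : ratio m c i j v = ((ratio m c i j v).re : ℂ) :=
          Complex.ext rfl (by simpa using him)
        rw [h3, Complex.norm_real, Real.norm_of_nonneg (by linarith)]
      rw [ratio, norm_div, norm_pow, norm_pow] at h2
      push_cast at h2
      rw [div_eq_div_iff (pow_ne_zero _ hi) (pow_ne_zero _ hni)] at h2
      rw [h2, mul_comm]

end Upper

end TCLens

theorem stmt18 (k n r : ℕ) (hk : 2 ≤ k) (hn : 1 ≤ n) (hr : 1 ≤ r)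
    (hval : (Nat.choose (2 * n) n).factorization 2 * (k / 2) ≤ r - 1) :
    higherTC (LensSpace (2 ^ r) n) k = k * (2 * n + 1) := by
  have hne : NeZero (2 ^ r) := ⟨by positivity⟩
  have hm : 2 ≤ 2 ^ r := by
    calc 2 = 2 ^ 1 := rfl
      _ ≤ 2 ^ r := Nat.pow_le_pow_right (by norm_num) hr
  have hdvd : ¬ 2 ^ r ∣ (2 * n).choose n ^ (k / 2) := by
    have h0 : (2 * n).choose n ^ (k / 2) ≠ 0 :=
      pow_ne_zero _ (Nat.choose_pos (by omega)).ne'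
    rw [Nat.prime_two.pow_dvd_iff_le_factorization h0, Nat.factorization_pow, Finsupp.smul_apply,
      smul_eq_mul, mul_comm]
    omega
  refine le_antisymm (Nat.sInf_le (TCLens.cover_upper hk hm)) ?_
  exact TCLens.le_of_cover hk hn hdvd
    (Nat.sInf_mem (s := {R | TCCoverAt (LensSpace (2 ^ r) n) k R}) ⟨_, TCLens.cover_upper hk hm⟩)
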